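/- arXiv:2211.14115 — 3 statements merged into one kernel-verified Lean document; each statement's English description precedes it below -/
import Mathlib

section
/- Let s and d be positive integers with (√d − 1)² > s, let M be a positive integer, and let C₁,…,C_M be independent random s×d matrices, each with i.i.d. standard Gaussian N(0,1) entries. Then the expected condition number of the horizontal block matrix (C₁+I_{s×d} | … | C_M+I_{s×d}) ∈ ℝ^{s×Md} satisfies E[cond((C₁+I_{s×d} | … | C_M+I_{s×d}))] ≤ (√(Md) + √s + √M)/(√(Md) − √s − √M). -/
/-!
Write the block matrix as `G + B`, where `G` is a standard Gaussian `s × n` matrix with `n = Md` and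
`B = (I | … | I)`, which satisfies `|Bᵀu| = √M` for every unit vector `u`. The extreme singular values
are the minimum `smin` and the maximum `smax` of `|Xᵀu|` over the unit sphere, so by Cauchy–Schwarz
(`smax_div_smin_bound`) the expected condition number is at most the product of the `L²` norms of
`smax (G + B)` and `1 / smin (G + B)`. These are estimated separately.

For `B = 0` the tool is a comparison of Gordon–Chevet type for exponentials,
`e^{μ²/2} E sup_u e^{μ|Gᵀu|} ≤ E e^{μ|g|} · E e^{|μ||h|}` with standard Gaussian vectors `g ∈ ℝⁿ`,
`h ∈ ℝˢ` (`comparison_real`, `comparison_sphere`), which is proved by Gaussian interpolation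
(`gaussian_interpolation`). Put `c = √n + √s`. The value `μ = 2/c` gives `E smax² ≤ (c + 1)²`
(`lintegral_smax_sq`). Integrating over negative `μ` by means of `1/t² = ∫₀^∞ λ e^{-λt} dλ`, and
bounding the resulting Laplace transforms of chi distributions through the ratios of their moments,
gives `E smin⁻² ≤ (√(n-1) + √s)² / ((n-s-2)(n-s-3))` (`lintegral_smin_inv_sq`).

The shift enlarges `smax` by at most `√M` (`smax_add_le`). It does not increase the expectation of
`1 / (smin² + ε)` (`shift_domination`): by the Cameron–Martin formula a shift tilts the Gaussian law
by `exp (T⟨X, B⟩)`, by left orthogonal invariance the integrand may be averaged over the orthogonal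
group, and pairing each orthogonal matrix with its composition with a reflection shows that the
average of the first-order term has the right sign (`orth_avg_nonneg`). Fatou's lemma then
removes `ε` (`lintegral_smin_add_inv_sq`).

Altogether the expectation is at most `(c + 1 + √M) c / (n - s - 3)`. Because
`n - s = (√n - √s) c`, this is below the claimed bound (`final_algebra`); the hypothesis
`(√d - 1)² > s` makes the denominators positive.
-/


open Matrix MeasureTheory ProbabilityTheory Real

/-- The singular values of a real matrix `X` (indexed by the row type),
defined as the square roots of the eigenvalues of `X * Xᵀ`. -/
noncomputable def sVals {m n : Type*} [Fintype m] [DecidableEq m] [Fintype n]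
    (X : Matrix m n ℝ) (i : m) : ℝ :=
  Real.sqrt ((Matrix.isHermitian_mul_conjTranspose_self X).eigenvalues i)

/-- The largest singular value of `X`. -/
noncomputable def sMax {m n : Type*} [Fintype m] [DecidableEq m] [Fintype n]
    (X : Matrix m n ℝ) : ℝ :=
  sSup (Set.range (sVals X))

/-- The smallest singular value of `X`. -/
noncomputable def sMin {m n : Type*} [Fintype m] [DecidableEq m] [Fintype n]
    (X : Matrix m n ℝ) : ℝ :=
  sInf (Set.range (sVals X))

/-- The condition number of `X`: the ratio of its largest to smallest singular value. -/
noncomputable def condNum {m n : Type*} [Fintype m] [DecidableEq m] [Fintype n]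
    (X : Matrix m n ℝ) : ℝ :=
  sMax X / sMin X

/-- The singular values of a matrix with rows indexed by `Fin s`, arranged in
nonincreasing order: `svdSorted X 0` is the largest, `svdSorted X (s-1)` the smallest. -/
noncomputable def svdSorted {s : ℕ} {n : Type*} [Fintype n]
    (X : Matrix (Fin s) n ℝ) (i : Fin s) : ℝ :=
  sVals X (Tuple.sort (sVals X) i.rev)

/-- The multiset of singular values of `X` (with multiplicities). -/
noncomputable def svMultiset {m n : Type*} [Fintype m] [DecidableEq m] [Fintype n]
    (X : Matrix m n ℝ) : Multiset ℝ :=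
  Finset.univ.val.map (sVals X)

/-- Horizontal block concatenation `(C 0 | C 1 | … | C (M-1))` of `M` matrices
with the same number of rows. -/
def blockRow {s d : Type*} (M : ℕ) (C : Fin M → Matrix s d ℝ) :
    Matrix s (Fin M × d) ℝ :=
  Matrix.of fun i p => C p.1 i p.2

/-- The `s × d` matrix with ones on the main diagonal and zeros elsewhere. -/
def Isd (s d : ℕ) : Matrix (Fin s) (Fin d) ℝ :=
  Matrix.of fun i j => if (i : ℕ) = (j : ℕ) then (1 : ℝ) else 0

/-- The chi-squared distribution with `n` degrees of freedom, i.e. the Gamma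
distribution with shape `n/2` and rate `1/2`. -/
noncomputable def chiSqMeasure (n : ℕ) : Measure ℝ :=
  gammaMeasure ((n : ℝ) / 2) (1 / 2)

set_option linter.unusedSectionVars false

/-! ### The standard Gaussian measure and integration by parts -/

/-- The standard Gaussian measure on `ι → ℝ`. -/
noncomputable abbrev gm (ι : Type*) [Fintype ι] : Measure (ι → ℝ) :=
  Measure.pi fun _ : ι => gaussianReal 0 1

lemma integrable_exp_abs_gaussian (C : ℝ) :
    Integrable (fun x : ℝ => rexp (C * |x|)) (gaussianReal 0 1) :=
  integrable_exp_mul_abs (integrable_exp_mul_gaussianReal C) (integrable_exp_mul_gaussianReal (-C))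

lemma integrable_exp_sum_gm {ι : Type*} [Fintype ι] (C : ℝ) :
    Integrable (fun z : ι → ℝ => rexp (C * ∑ i, |z i|)) (gm ι) := by
  have := Integrable.fintype_prod (μ := fun _ : ι => gaussianReal 0 1)
    (f := fun _ : ι => fun x : ℝ => rexp (C * |x|)) (fun i => integrable_exp_abs_gaussian C)
  refine this.congr (Filter.Eventually.of_forall fun z => ?_)
  simp only [← Real.exp_sum, Finset.mul_sum]

lemma norm_le_sum_abs {ι : Type*} [Fintype ι] (z : ι → ℝ) : ‖z‖ ≤ ∑ i, |z i| := by
  refine (pi_norm_le_iff_of_nonneg (Finset.sum_nonneg fun i _ => abs_nonneg _)).2 fun i => ?_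
  exact Finset.single_le_sum (f := fun i => |z i|) (fun i _ => abs_nonneg _) (Finset.mem_univ i)

lemma integrable_exp_norm_gm {ι : Type*} [Fintype ι] (C : ℝ) :
    Integrable (fun z : ι → ℝ => rexp (C * ‖z‖)) (gm ι) := by
  refine (integrable_exp_sum_gm |C|).mono' (by fun_prop) (Filter.Eventually.of_forall fun z => ?_)
  rw [Real.norm_eq_abs, abs_of_pos (exp_pos _), exp_le_exp]
  calc C * ‖z‖ ≤ |C| * ‖z‖ := by gcongr; exact le_abs_self C
    _ ≤ _ := by gcongr; exact norm_le_sum_abs z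

/-- Continuous functions of at most exponential growth are Gaussian integrable. -/
lemma integrable_gm_of_bound {ι : Type*} [Fintype ι] {f : (ι → ℝ) → ℝ} (hf : Continuous f)
    {A C : ℝ} (hb : ∀ z, |f z| ≤ A * rexp (C * ‖z‖)) : Integrable f (gm ι) :=
  ((integrable_exp_norm_gm C).const_mul A).mono' hf.aestronglyMeasurable
    (Filter.Eventually.of_forall hb)

/-- Resampling one coordinate preserves the Gaussian measure. -/
lemma map_update_gm {ι : Type*} [Fintype ι] [DecidableEq ι] (i : ι) :
    MeasurePreserving (fun p : (ι → ℝ) × ℝ => Function.update p.1 i p.2)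
      ((gm ι).prod (gaussianReal 0 1)) (gm ι) := by
  have hm : Measurable (fun p : (ι → ℝ) × ℝ => Function.update p.1 i p.2) := by
    refine measurable_pi_lambda _ fun j => ?_
    by_cases h : j = i
    · subst h; simpa using measurable_snd
    · simp only [Function.update_of_ne h]
      exact (measurable_pi_apply j).comp measurable_fst
  refine ⟨hm, ?_⟩
  symm
  refine Measure.pi_eq fun s hs => ?_
  rw [Measure.map_apply hm (MeasurableSet.univ_pi hs)]
  have : (fun p : (ι → ℝ) × ℝ => Function.update p.1 i p.2) ⁻¹' (Set.univ.pi s) =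
      (Set.univ.pi (Function.update s i Set.univ)) ×ˢ (s i) := by
    ext ⟨z, t⟩
    simp only [Set.mem_preimage, Set.mem_univ_pi, Set.mem_prod]
    constructor
    · intro h
      refine ⟨fun j => ?_, by simpa using h i⟩
      by_cases hj : j = i
      · subst hj; simp
      · simpa [Function.update_of_ne hj] using h j
    · rintro ⟨h1, h2⟩ j
      by_cases hj : j = i
      · subst hj; simpa using h2
      · simpa [Function.update_of_ne hj] using h1 j
  rw [this, Measure.prod_prod, Measure.pi_pi, ← Finset.prod_erase_mul _ _ (Finset.mem_univ i),
    ← Finset.prod_erase_mul _ _ (Finset.mem_univ i)]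
  simp only [Function.update_self, measure_univ, mul_one]
  congr 1
  refine Finset.prod_congr rfl fun j hj => ?_
  rw [Function.update_of_ne (Finset.ne_of_mem_erase hj)]

lemma hasDerivAt_gaussianPDFReal (x : ℝ) :
    HasDerivAt (gaussianPDFReal 0 1) (-(x * gaussianPDFReal 0 1 x)) x := by
  have : gaussianPDFReal 0 1 = fun x : ℝ => (√(2 * π))⁻¹ * rexp (-x ^ 2 / 2) := by
    ext x; simp [gaussianPDFReal]
  rw [this]
  have h : HasDerivAt (fun x : ℝ => -x ^ 2 / 2) (-x) x := by
    have := ((hasDerivAt_pow 2 x).fun_neg).div_const 2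
    refine this.congr_deriv ?_
    push_cast; ring
  refine ((h.exp).const_mul ((√(2 * π))⁻¹)).congr_deriv ?_
  ring

/-- Gaussian integration by parts in one variable. -/
lemma stein_one {f f' : ℝ → ℝ} (hf : ∀ x, HasDerivAt f (f' x) x) 
    (h0 : Integrable f (gaussianReal 0 1))
    (h1 : Integrable (fun x => x * f x) (gaussianReal 0 1))
    (h2 : Integrable f' (gaussianReal 0 1)) :
    ∫ x, x * f x ∂gaussianReal 0 1 = ∫ x, f' x ∂gaussianReal 0 1 := by
  have key : ∀ g : ℝ → ℝ, Integrable g (gaussianReal 0 1) →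
      Integrable (fun x => g x * gaussianPDFReal 0 1 x) := by
    intro g hg
    rw [gaussianReal_of_var_ne_zero _ one_ne_zero] at hg
    have := (integrable_withDensity_iff (measurable_gaussianPDF 0 1)
      (Filter.Eventually.of_forall fun x => gaussianPDF_lt_top)).1 hg
    simpa using this
  rw [integral_gaussianReal_eq_integral_smul one_ne_zero,
    integral_gaussianReal_eq_integral_smul one_ne_zero]
  have := integral_mul_deriv_eq_deriv_mul_of_integrable (u := f) (u' := f')
    (v := gaussianPDFReal 0 1) (v' := fun x => -(x * gaussianPDFReal 0 1 x))
    (fun x _ => hf x) (fun x _ => hasDerivAt_gaussianPDFReal x) ?_ ?_ ?_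
  · simp only [smul_eq_mul]
    have e1 : ∫ x, gaussianPDFReal 0 1 x * (x * f x) =
        - ∫ x, f x * -(x * gaussianPDFReal 0 1 x) := by
      rw [← integral_neg]; congr 1; ext x; ring
    rw [e1, this, neg_neg]
    congr 1; ext x; ring
  · have := (key _ h1).neg
    refine this.congr (Filter.Eventually.of_forall fun x => ?_)
    simp; ring
  · exact key _ h2
  · exact key _ h0

/-- Gaussian integration by parts in the coordinate `i`. -/
lemma stein_gm {ι : Type*} [Fintype ι] [DecidableEq ι] (i : ι) {F F' : (ι → ℝ) → ℝ}
    (hF : ∀ z, HasDerivAt (fun t : ℝ => F (z + t • (Pi.single i (1 : ℝ) : ι → ℝ))) (F' z) 0)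
    (hc : Continuous F) (hc' : Continuous F') {A C : ℝ}
    (hb : ∀ z, |F z| ≤ A * rexp (C * ‖z‖)) (hb' : ∀ z, |F' z| ≤ A * rexp (C * ‖z‖)) :
    ∫ z, z i * F z ∂gm ι = ∫ z, F' z ∂gm ι := by
  have hmp := map_update_gm (ι := ι) i
  have hF0 : Integrable F (gm ι) := integrable_gm_of_bound hc hb
  have hF1 : Integrable F' (gm ι) := integrable_gm_of_bound hc' hb'
  have hF2 : Integrable (fun z => z i * F z) (gm ι) := by
    refine integrable_gm_of_bound (A := A) (C := 1 + C) (by fun_prop) fun z => ?_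
    rw [abs_mul, add_mul, one_mul, exp_add]
    calc |z i| * |F z| ≤ rexp ‖z‖ * (A * rexp (C * ‖z‖)) := by
          gcongr
          · exact (norm_le_pi_norm z i).trans (by linarith [add_one_le_exp ‖z‖])
          · exact hb z
      _ = _ := by ring
  have comp : ∀ g : (ι → ℝ) → ℝ, Integrable g (gm ι) → 
      ∫ z, g z ∂gm ι = ∫ z, ∫ t, g (Function.update z i t) ∂gaussianReal 0 1 ∂gm ι ∧
      ∀ᵐ z ∂gm ι, Integrable (fun t => g (Function.update z i t)) (gaussianReal 0 1) := by
    intro g hg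
    have hg' := hmp.integrable_comp_of_integrable hg
    refine ⟨?_, hg'.prod_right_ae⟩
    have h2 := integral_prod _ hg'
    simp only [Function.comp] at h2
    rw [← h2]
    conv_lhs => rw [← hmp.map_eq]
    rw [integral_map hmp.measurable.aemeasurable]
    rw [hmp.map_eq]; exact hg.1
  rw [(comp _ hF2).1, (comp _ hF1).1]
  refine integral_congr_ae ?_
  filter_upwards [(comp _ hF2).2, (comp _ hF1).2, (comp _ hF0).2] with z h2 h1 h0
  simp only [Function.update_self] at h2 ⊢
  refine stein_one (fun t => ?_) h0 h2 h1
  have := hF (Function.update z i t)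
  have e : ∀ r : ℝ, Function.update z i t + r • (Pi.single i (1 : ℝ) : ι → ℝ) = Function.update z i (t + r) := by
    intro r; ext j
    by_cases hj : j = i
    · subst hj; simp
    · simp [hj]
  simp only [e] at this
  have h3 := HasDerivAt.comp_sub_const (f := fun r => F (Function.update z i (t + r))) t t
    (by simpa using this)
  simpa using h3

/-- The normalising constant `(2π)^(-|ι|/2)` of the standard Gaussian density on `ι → ℝ`. -/
noncomputable def gc (ι : Type*) [Fintype ι] : ℝ := (√(2 * π))⁻¹ ^ Fintype.card ι

lemma gc_pos (ι : Type*) [Fintype ι] : 0 < gc ι := by unfold gc; positivity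

lemma prod_pdf {ι : Type*} [Fintype ι] (x : ι → ℝ) :
    ∏ i, gaussianPDFReal 0 1 (x i) = gc ι * rexp (-(∑ i, x i ^ 2) / 2) := by
  simp only [gaussianPDFReal, Finset.prod_mul_distrib, gc]
  rw [← exp_sum, ← Finset.sum_neg_distrib, Finset.sum_div]
  simp

lemma gm_eq_withDensity (ι : Type*) [Fintype ι] :
    gm ι = (volume : Measure (ι → ℝ)).withDensity
      fun x => ENNReal.ofReal (gc ι * rexp (-(∑ i, x i ^ 2) / 2)) := by
  refine Measure.pi_eq fun s hs => ?_
  rw [withDensity_apply _ (MeasurableSet.univ_pi hs)]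
  have hIntg : Integrable (fun x : ι → ℝ => ∏ i, (s i).indicator (gaussianPDFReal 0 1) (x i)) := by
    refine Integrable.fintype_prod (f := fun i => (s i).indicator (gaussianPDFReal 0 1)) fun i => ?_
    exact (integrable_gaussianPDFReal 0 1).indicator (hs i)
  rw [← lintegral_indicator (MeasurableSet.univ_pi hs)]
  have : ∀ x : ι → ℝ, (Set.univ.pi s).indicator
      (fun x => ENNReal.ofReal (gc ι * rexp (-(∑ i, x i ^ 2) / 2))) x =
      ENNReal.ofReal (∏ i, (s i).indicator (gaussianPDFReal 0 1) (x i)) := by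
    intro x
    by_cases hx : x ∈ Set.univ.pi s
    · rw [Set.indicator_of_mem hx, ← prod_pdf]
      congr 1
      refine Finset.prod_congr rfl fun i _ => ?_
      rw [Set.indicator_of_mem (hx i (Set.mem_univ i))]
    · rw [Set.indicator_of_notMem hx]
      simp only [Set.mem_univ_pi, not_forall] at hx
      obtain ⟨i, hi⟩ := hx
      rw [Finset.prod_eq_zero (Finset.mem_univ i) (Set.indicator_of_notMem hi _)]
      simp
  simp_rw [this]
  rw [← ofReal_integral_eq_lintegral_ofReal hIntg (Filter.Eventually.of_forall fun x =>
    Finset.prod_nonneg fun i _ => Set.indicator_nonneg (fun y _ => gaussianPDFReal_nonneg 0 1 y) _),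
    integral_fintype_prod_volume_eq_prod, ENNReal.ofReal_prod_of_nonneg]
  · refine Finset.prod_congr rfl fun i _ => ?_
    rw [gaussianReal_apply_eq_integral _ one_ne_zero, integral_indicator (hs i)]
  · intro i _
    exact integral_nonneg fun y => Set.indicator_nonneg (fun y _ => gaussianPDFReal_nonneg 0 1 y) _

lemma integral_gm {ι : Type*} [Fintype ι] (f : (ι → ℝ) → ℝ) :
    ∫ z, f z ∂gm ι = ∫ x, gc ι * rexp (-(∑ i, x i ^ 2) / 2) * f x := by
  rw [gm_eq_withDensity, integral_withDensity_eq_integral_toReal_smul (by fun_prop)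
    (Filter.Eventually.of_forall fun x => ENNReal.ofReal_lt_top)]
  congr 1; ext x
  rw [ENNReal.toReal_ofReal (by have := gc_pos ι; positivity), smul_eq_mul]

/-! ### Gaussian interpolation -/

/-- Gaussian interpolation along a rotation. If the second derivatives of `Φ` satisfy
`∑ D²Φ(Qᵢ,Qᵢ) ≤ ∑ D²Φ(Pᵢ,Pᵢ)` everywhere, then `E Φ(∑ zᵢQᵢ) ≤ E Φ(∑ zᵢPᵢ)`; here every noise
variable `zᵢ` feeds only one of the two ends of the interpolation. -/
theorem gaussian_interpolation {ι J : Type*} [Fintype ι] [DecidableEq ι] [Fintype J]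
    (P Q : ι → J → ℝ) (hPQ : ∀ i, P i = 0 ∨ Q i = 0)
    (hP1 : ∀ i, ‖P i‖ ≤ 1) (hQ1 : ∀ i, ‖Q i‖ ≤ 1)
    {Φ : (J → ℝ) → ℝ} {D : (J → ℝ) → ((J → ℝ) →L[ℝ] ℝ)} {D2 : (J → ℝ) → (J → ℝ) → ℝ}
    (hD : ∀ w, HasFDerivAt Φ (D w) w)
    (hD2 : ∀ w ξ, HasDerivAt (fun τ : ℝ => D (w + τ • ξ) ξ) (D2 w ξ) 0)
    (hDc : ∀ ξ, Continuous fun w => D w ξ) (hD2c : ∀ ξ, Continuous fun w => D2 w ξ)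
    {A C : ℝ} (hA : 0 ≤ A) (hC : 0 ≤ C)
    (hb : ∀ w, |Φ w| ≤ A * rexp (C * ‖w‖))
    (hb1 : ∀ w ξ, ‖ξ‖ ≤ 1 → |D w ξ| ≤ A * rexp (C * ‖w‖))
    (hb2 : ∀ w ξ, ‖ξ‖ ≤ 1 → |D2 w ξ| ≤ A * rexp (C * ‖w‖))
    (hcomp : ∀ w, ∑ i, D2 w (Q i) ≤ ∑ i, D2 w (P i)) :
    ∫ z, Φ (∑ i, z i • Q i) ∂gm ι ≤ ∫ z, Φ (∑ i, z i • P i) ∂gm ι := by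
  classical
  have hΦc : Continuous Φ := continuous_iff_continuousAt.2 fun w => (hD w).continuousAt
  set R : ℝ → ι → J → ℝ := fun θ i => cos θ • P i + sin θ • Q i with hR
  set R' : ℝ → ι → J → ℝ := fun θ i => -sin θ • P i + cos θ • Q i with hR'
  set W : ℝ → (ι → ℝ) → J → ℝ := fun θ z => ∑ i, z i • R θ i with hW
  have hWc : ∀ θ, Continuous (W θ) := fun θ => by
    simp only [hW]; fun_prop
  have hRn : ∀ θ i, ‖R θ i‖ ≤ 2 := by
    intro θ i
    calc ‖R θ i‖ ≤ ‖cos θ • P i‖ + ‖sin θ • Q i‖ := norm_add_le _ _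
      _ = |cos θ| * ‖P i‖ + |sin θ| * ‖Q i‖ := by rw [norm_smul, norm_smul]; rfl
      _ ≤ 1 * 1 + 1 * 1 := by
          gcongr
          exacts [abs_cos_le_one θ, hP1 i, abs_sin_le_one θ, hQ1 i]
      _ = 2 := by norm_num
  set c : ℝ := (Fintype.card ι : ℝ) with hc
  have hWn : ∀ θ z, ‖W θ z‖ ≤ 2 * c * ‖z‖ := by
    intro θ z
    calc ‖W θ z‖ ≤ ∑ i, ‖z i • R θ i‖ := norm_sum_le _ _
      _ ≤ ∑ _i : ι, ‖z‖ * 2 := by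
          refine Finset.sum_le_sum fun i _ => ?_
          rw [norm_smul]
          gcongr
          exacts [norm_le_pi_norm z i, hRn θ i]
      _ = _ := by rw [Finset.sum_const, nsmul_eq_mul, Finset.card_univ]; ring
  have hexp : ∀ θ z, A * rexp (C * ‖W θ z‖) ≤ A * rexp (C * (2 * c) * ‖z‖) := by
    intro θ z
    refine mul_le_mul_of_nonneg_left (exp_le_exp.2 ?_) hA
    rw [mul_assoc]
    exact mul_le_mul_of_nonneg_left (hWn θ z) hC
  -- the derivative of `Φ (W θ z)` in `θ`
  set Ψ : ℝ → (ι → ℝ) → ℝ := fun θ z => ∑ i, z i * D (W θ z) (R' θ i) with hΨ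
  have hDR : ∀ θ i w, |D w (R' θ i)| ≤ 2 * (A * rexp (C * ‖w‖)) := by
    intro θ i w
    have : D w (R' θ i) = -sin θ * D w (P i) + cos θ * D w (Q i) := by
      simp [hR']
    rw [this]
    calc _ ≤ |-sin θ * D w (P i)| + |cos θ * D w (Q i)| := abs_add_le _ _
      _ = |sin θ| * |D w (P i)| + |cos θ| * |D w (Q i)| := by simp [abs_mul]
      _ ≤ 1 * (A * rexp (C * ‖w‖)) + 1 * (A * rexp (C * ‖w‖)) := by
          gcongr
          exacts [abs_sin_le_one θ, hb1 w _ (hP1 i), abs_cos_le_one θ, hb1 w _ (hQ1 i)]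
      _ = _ := by ring
  have hterm : ∀ θ i z, |z i * D (W θ z) (R' θ i)| ≤ 2 * A * rexp ((1 + C * (2 * c)) * ‖z‖) := by
    intro θ i z
    rw [abs_mul, add_mul, one_mul, exp_add]
    calc |z i| * |D (W θ z) (R' θ i)| ≤ rexp ‖z‖ * (2 * (A * rexp (C * (2 * c) * ‖z‖))) := by
          gcongr
          · exact (norm_le_pi_norm z i).trans (by linarith [add_one_le_exp ‖z‖])
          · exact (hDR θ i _).trans (by linarith [hexp θ z])
      _ = _ := by ring
  have hDRc : ∀ θ i, Continuous fun z => D (W θ z) (R' θ i) := by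
    intro θ i
    have : (fun z => D (W θ z) (R' θ i)) =
        fun z => -sin θ * D (W θ z) (P i) + cos θ * D (W θ z) (Q i) := by
      ext z; simp [hR']
    rw [this]
    exact ((hDc (P i)).comp (hWc θ)).const_mul _ |>.add (((hDc (Q i)).comp (hWc θ)).const_mul _)
  have hΨc : ∀ θ, Continuous (Ψ θ) := fun θ =>
    continuous_finsetSum _ fun i _ => (continuous_apply i).mul (hDRc θ i)
  have hWd : ∀ θ z, HasDerivAt (fun θ => W θ z) (∑ i, z i • R' θ i) θ := by
    intro θ z
    refine HasDerivAt.fun_sum fun i _ => ?_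
    exact (((hasDerivAt_cos θ).smul_const (P i)).add ((hasDerivAt_sin θ).smul_const (Q i))).const_smul
      (z i)
  have hder : ∀ θ, HasDerivAt (fun θ => ∫ z, Φ (W θ z) ∂gm ι) (∫ z, Ψ θ z ∂gm ι) θ := by
    intro θ
    refine (hasDerivAt_integral_of_dominated_loc_of_deriv_le (s := Set.univ) (F := fun θ z => Φ (W θ z))
      (F' := Ψ) (bound := fun z => c * (2 * A * rexp ((1 + C * (2 * c)) * ‖z‖)))
      Filter.univ_mem ?_ ?_ ?_ ?_ ?_ ?_).2
    · exact Filter.Eventually.of_forall fun θ => (hΦc.comp (hWc θ)).aestronglyMeasurable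
    · exact integrable_gm_of_bound (hΦc.comp (hWc θ)) fun z => (hb _).trans (hexp θ z)
    · exact (hΨc θ).aestronglyMeasurable
    · refine Filter.Eventually.of_forall fun z θ _ => ?_
      calc ‖Ψ θ z‖ ≤ ∑ i, ‖z i * D (W θ z) (R' θ i)‖ := norm_sum_le _ _
        _ ≤ ∑ _i : ι, 2 * A * rexp ((1 + C * (2 * c)) * ‖z‖) :=
            Finset.sum_le_sum fun i _ => hterm θ i z
        _ = _ := by rw [Finset.sum_const, nsmul_eq_mul, Finset.card_univ]
    · exact ((integrable_exp_norm_gm _).const_mul _).const_mul _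
    · refine Filter.Eventually.of_forall fun z θ _ => ?_
      have := (hD (W θ z)).comp_hasDerivAt θ (hWd θ z)
      refine this.congr_deriv ?_
      simp only [map_sum, map_smul, smul_eq_mul, hΨ]
  have hD20 : ∀ w, D2 w 0 = 0 := by
    intro w
    have h1 := hD2 w 0
    simp only [map_zero] at h1
    exact h1.unique (hasDerivAt_const _ _)
  -- Gaussian integration by parts; there are no cross terms because `P i = 0` or `Q i = 0`.
  have hIBP : ∀ θ, ∫ z, Ψ θ z ∂gm ι =
      sin θ * cos θ * ∫ z, (∑ i, D2 (W θ z) (Q i) - ∑ i, D2 (W θ z) (P i)) ∂gm ι := by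
    intro θ
    have hIntg : ∀ i, Integrable (fun z => z i * D (W θ z) (R' θ i)) (gm ι) := fun i =>
      integrable_gm_of_bound ((continuous_apply i).mul (hDRc θ i)) (hterm θ i)
    have hIntg2 : ∀ ξ, ‖ξ‖ ≤ 1 → Integrable (fun z => D2 (W θ z) ξ) (gm ι) := fun ξ hξ =>
      integrable_gm_of_bound ((hD2c ξ).comp (hWc θ)) fun z => (hb2 _ _ hξ).trans (hexp θ z)
    simp only [hΨ]
    rw [integral_finsetSum _ fun i _ => hIntg i]
    have hst : ∀ i, ∫ z, z i * D (W θ z) (R' θ i) ∂gm ι =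
        ∫ z, sin θ * cos θ * (D2 (W θ z) (Q i) - D2 (W θ z) (P i)) ∂gm ι := by
      intro i
      refine stein_gm (A := 2 * A) (C := C * (2 * c)) i (fun z => ?_) (hDRc θ i) ?_ ?_ ?_
      · have hWt : ∀ t : ℝ, W θ (z + t • (Pi.single i (1 : ℝ) : ι → ℝ)) = W θ z + t • R θ i := by
          intro t
          simp only [hW, Pi.add_apply, Pi.smul_apply, smul_eq_mul, add_smul, Finset.sum_add_distrib]
          congr 1
          rw [Finset.sum_eq_single i]
          · simp
          · intro j _ hj; simp [Pi.single_eq_of_ne hj]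
          · simp
        simp only [hWt]
        rcases hPQ i with h0 | h0
        · have e1 : R θ i = sin θ • Q i := by simp [hR, h0]
          have e2 : R' θ i = cos θ • Q i := by simp [hR', h0]
          rw [e1, e2, h0, hD20]
          have h1 := hD2 (W θ z) (Q i)
          have h2 : HasDerivAt (fun t : ℝ => t * sin θ) (sin θ) 0 := by
            simpa using (hasDerivAt_id (0 : ℝ)).mul_const (sin θ)
          have h3 := HasDerivAt.comp_of_eq (0 : ℝ) h1 h2 (by simp)
          have h4 := h3.const_mul (cos θ)
          refine (h4.congr_deriv (by ring)).congr_of_eventuallyEq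
            (Filter.Eventually.of_forall fun t => ?_)
          simp [smul_smul]
        · have e1 : R θ i = cos θ • P i := by simp [hR, h0]
          have e2 : R' θ i = -sin θ • P i := by simp [hR', h0]
          rw [e1, e2, h0, hD20]
          have h1 := hD2 (W θ z) (P i)
          have h2 : HasDerivAt (fun t : ℝ => t * cos θ) (cos θ) 0 := by
            simpa using (hasDerivAt_id (0 : ℝ)).mul_const (cos θ)
          have h3 := HasDerivAt.comp_of_eq (0 : ℝ) h1 h2 (by simp)
          have h4 := h3.const_mul (-sin θ)
          refine (h4.congr_deriv (by ring)).congr_of_eventuallyEq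
            (Filter.Eventually.of_forall fun t => ?_)
          simp [smul_smul]
      · exact (((hD2c (Q i)).comp (hWc θ)).sub ((hD2c (P i)).comp (hWc θ))).const_mul _
      · intro z
        exact (hDR θ i _).trans (by linarith [hexp θ z])
      · intro z
        rw [abs_mul, abs_mul]
        calc |sin θ| * |cos θ| * |D2 (W θ z) (Q i) - D2 (W θ z) (P i)|
            ≤ 1 * 1 * (A * rexp (C * ‖W θ z‖) + A * rexp (C * ‖W θ z‖)) := by
              gcongr
              · exact abs_sin_le_one θ
              · exact abs_cos_le_one θ
              · exact (abs_sub _ _).trans (add_le_add (hb2 _ _ (hQ1 i)) (hb2 _ _ (hP1 i)))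
          _ ≤ _ := by linarith [hexp θ z]
    rw [Finset.sum_congr rfl fun i _ => hst i]
    have hIntg3 : ∀ i ∈ Finset.univ, Integrable (fun z => sin θ * cos θ *
        (D2 (W θ z) (Q i) - D2 (W θ z) (P i))) (gm ι) := fun i _ =>
      ((hIntg2 _ (hQ1 i)).sub (hIntg2 _ (hP1 i))).const_mul _
    rw [← integral_finsetSum _ hIntg3, ← integral_const_mul]
    congr 1; ext z
    rw [← Finset.mul_sum, Finset.sum_sub_distrib]
  have hanti : AntitoneOn (fun θ => ∫ z, Φ (W θ z) ∂gm ι) (Set.Icc 0 (π / 2)) := by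
    refine antitoneOn_of_deriv_nonpos (convex_Icc _ _)
      (fun θ _ => (hder θ).continuousAt.continuousWithinAt)
      (fun θ _ => (hder θ).differentiableAt.differentiableWithinAt) fun θ hθ => ?_
    rw [interior_Icc] at hθ
    rw [(hder θ).deriv, hIBP]
    refine mul_nonpos_of_nonneg_of_nonpos ?_ (integral_nonpos fun z => ?_)
    · exact mul_nonneg (sin_nonneg_of_nonneg_of_le_pi hθ.1.le (by linarith [hθ.2, pi_pos]))
        (cos_nonneg_of_neg_pi_div_two_le_of_le (by linarith [hθ.1, pi_pos]) hθ.2.le)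
    · simpa using hcomp (W θ z)
  have := hanti (Set.left_mem_Icc.2 (by positivity)) (Set.right_mem_Icc.2 (by positivity))
    (by positivity)
  simpa [hW, hR] using this

/-! ### The comparison process and its derivatives -/

section Comparison
variable {U κ σ : Type*} [Fintype U] [Fintype κ] [Fintype σ]

/-- Smoothed Euclidean norm `√(ε + ∑ₖ w(u,k)²)` of the block of `w` indexed by `u`. -/
noncomputable def qN (ε : ℝ) (w : (U × κ) ⊕ U → ℝ) (u : U) : ℝ :=
  √(ε + ∑ k, w (.inl (u, k)) ^ 2)

/-- The process `q_u = √(ε + |w(u,·)|²) + w(u)` being compared. -/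
noncomputable def qf (ε : ℝ) (w : (U × κ) ⊕ U → ℝ) (u : U) : ℝ :=
  qN ε w u + w (.inr u)

/-- The differential of `qf`. -/
noncomputable def dq (ε : ℝ) (w : (U × κ) ⊕ U → ℝ) (u : U) : ((U × κ) ⊕ U → ℝ) →L[ℝ] ℝ :=
  (qN ε w u)⁻¹ • (∑ k, w (.inl (u, k)) •
    (ContinuousLinearMap.proj (.inl (u, k)) : ((U × κ) ⊕ U → ℝ) →L[ℝ] ℝ)) +
    ContinuousLinearMap.proj (.inr u)

/-- The second directional derivative of `qf`. -/
noncomputable def d2q (ε : ℝ) (w ξ : (U × κ) ⊕ U → ℝ) (u : U) : ℝ :=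
  (qN ε w u)⁻¹ * (∑ k, ξ (.inl (u, k)) ^ 2) -
    (∑ k, w (.inl (u, k)) * ξ (.inl (u, k))) ^ 2 / (qN ε w u) ^ 3

lemma qN_pos {ε : ℝ} (hε : 0 < ε) (w : (U × κ) ⊕ U → ℝ) (u : U) : 0 < qN ε w u :=
  Real.sqrt_pos.2 (add_pos_of_pos_of_nonneg hε (Finset.sum_nonneg fun _ _ => sq_nonneg _))

lemma qN_sq {ε : ℝ} (hε : 0 < ε) (w : (U × κ) ⊕ U → ℝ) (u : U) :
    qN ε w u ^ 2 = ε + ∑ k, w (.inl (u, k)) ^ 2 :=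
  Real.sq_sqrt (add_nonneg hε.le (Finset.sum_nonneg fun _ _ => sq_nonneg _))

lemma dq_apply (ε : ℝ) (w ξ : (U × κ) ⊕ U → ℝ) (u : U) :
    dq ε w u ξ = (qN ε w u)⁻¹ * (∑ k, w (.inl (u, k)) * ξ (.inl (u, k))) + ξ (.inr u) := by
  simp [dq]

lemma hasFDerivAt_qN {ε : ℝ} (hε : 0 < ε) (w : (U × κ) ⊕ U → ℝ) (u : U) :
    HasFDerivAt (fun w => qN ε w u) ((qN ε w u)⁻¹ • (∑ k, w (.inl (u, k)) •
    (ContinuousLinearMap.proj (.inl (u, k)) : ((U × κ) ⊕ U → ℝ) →L[ℝ] ℝ))) w := by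
  have h1 : ∀ k : κ, HasFDerivAt (fun w : (U × κ) ⊕ U → ℝ => w (.inl (u, k)) ^ 2)
      ((2 * w (.inl (u, k))) •
        (ContinuousLinearMap.proj (.inl (u, k)) : ((U × κ) ⊕ U → ℝ) →L[ℝ] ℝ)) w := by
    intro k
    have h0 : HasFDerivAt (fun w : (U × κ) ⊕ U → ℝ => w (.inl (u, k)))
      (ContinuousLinearMap.proj (.inl (u, k)) : ((U × κ) ⊕ U → ℝ) →L[ℝ] ℝ) w :=
      hasFDerivAt_apply _ _
    have := h0.pow 2
    refine this.congr_fderiv ?_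
    simp
  have h2 := ((HasFDerivAt.fun_sum fun k (_ : k ∈ Finset.univ) => h1 k).const_add ε).sqrt
    (by rw [← qN_sq hε]; exact (pow_pos (qN_pos hε w u) 2).ne')
  refine h2.congr_fderiv ?_
  change (1 / (2 * qN ε w u)) • _ = _
  have := (qN_pos hε w u).ne'
  ext ξ
  simp [mul_assoc, ← Finset.mul_sum]

lemma hasFDerivAt_qf {ε : ℝ} (hε : 0 < ε) (w : (U × κ) ⊕ U → ℝ) (u : U) :
    HasFDerivAt (fun w => qf ε w u) (dq ε w u) w :=
  (hasFDerivAt_qN hε w u).add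
    (hasFDerivAt_apply _ _)

lemma hasDerivAt_dq {ε : ℝ} (hε : 0 < ε) (w ξ : (U × κ) ⊕ U → ℝ) (u : U) :
    HasDerivAt (fun τ : ℝ => dq ε (w + τ • ξ) u ξ) (d2q ε w ξ u) 0 := by
  simp only [dq_apply]
  have h1 : HasDerivAt (fun τ : ℝ => qN ε (w + τ • ξ) u)
      ((qN ε w u)⁻¹ * ∑ k, w (.inl (u, k)) * ξ (.inl (u, k))) 0 := by
    have := (hasFDerivAt_qN hε w u).hasLineDerivAt ξ
    refine HasDerivAt.congr_deriv this ?_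
    simp
  have h2 : HasDerivAt (fun τ : ℝ => ∑ k, (w + τ • ξ) (.inl (u, k)) * ξ (.inl (u, k)))
      (∑ k, ξ (.inl (u, k)) ^ 2) 0 := by
    refine HasDerivAt.fun_sum fun k _ => ?_
    have : HasDerivAt (fun τ : ℝ => (w + τ • ξ) (.inl (u, k))) (ξ (.inl (u, k))) 0 := by
      simpa using ((hasDerivAt_id (0 : ℝ)).mul_const (ξ (.inl (u, k)))).const_add (w (.inl (u, k)))
    refine (this.mul_const _).congr_deriv (by ring)
  have hN := (qN_pos hε w u).ne'
  have h3 := ((h1.fun_inv (by simpa using hN)).fun_mul h2).add_const (ξ (.inr u))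
  refine h3.congr_deriv ?_
  simp only [zero_smul, add_zero, d2q]
  field_simp
  ring

lemma continuous_qN (ε : ℝ) (u : U) : Continuous fun w : (U × κ) ⊕ U → ℝ => qN ε w u := by
  unfold qN; fun_prop

lemma abs_block_le {ε : ℝ} (hε : 0 < ε) (w : (U × κ) ⊕ U → ℝ) (u : U) (k : κ) :
    |w (.inl (u, k))| ≤ qN ε w u := by
  refine abs_le_sqrt ?_
  have := Finset.single_le_sum (f := fun k => w (.inl (u, k)) ^ 2) (fun _ _ => sq_nonneg _)
    (Finset.mem_univ k)
  linarith

lemma abs_inner_le {ε : ℝ} (hε : 0 < ε) (w ξ : (U × κ) ⊕ U → ℝ) (hξ : ‖ξ‖ ≤ 1) (u : U) :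
    |∑ k, w (.inl (u, k)) * ξ (.inl (u, k))| ≤ Fintype.card κ * qN ε w u := by
  calc _ ≤ ∑ k, |w (.inl (u, k)) * ξ (.inl (u, k))| := Finset.abs_sum_le_sum_abs _ _
    _ ≤ ∑ _k : κ, qN ε w u := by
        refine Finset.sum_le_sum fun k _ => ?_
        rw [abs_mul]
        have h1 := abs_block_le hε w u k
        have h2 : |ξ (.inl (u, k))| ≤ 1 := (norm_le_pi_norm ξ _).trans hξ
        nlinarith [abs_nonneg (w (.inl (u, k)))]
    _ = _ := by simp

lemma abs_dq_le {ε : ℝ} (hε : 0 < ε) (w ξ : (U × κ) ⊕ U → ℝ) (hξ : ‖ξ‖ ≤ 1) (u : U) :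
    |dq ε w u ξ| ≤ Fintype.card κ + 1 := by
  rw [dq_apply]
  refine (abs_add_le _ _).trans (add_le_add ?_ ((norm_le_pi_norm ξ _).trans hξ))
  have hN := qN_pos hε w u
  rw [abs_mul, abs_inv, abs_of_pos hN, inv_mul_le_iff₀ hN, mul_comm]
  exact abs_inner_le hε w ξ hξ u

lemma abs_d2q_le {ε : ℝ} (hε : 0 < ε) (w ξ : (U × κ) ⊕ U → ℝ) (hξ : ‖ξ‖ ≤ 1) (u : U) :
    |d2q ε w ξ u| ≤ (Fintype.card κ + Fintype.card κ ^ 2) / √ε := by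
  have hN := qN_pos hε w u
  have h0 : √ε ≤ qN ε w u := Real.sqrt_le_sqrt (by
    simpa using Finset.sum_nonneg fun (k : κ) _ => sq_nonneg (w (.inl (u, k))))
  have hε' : 0 < √ε := Real.sqrt_pos.2 hε
  have h1 : ∑ k, ξ (.inl (u, k)) ^ 2 ≤ (Fintype.card κ : ℝ) := by
    calc _ ≤ ∑ _k : κ, (1 : ℝ) := by
          refine Finset.sum_le_sum fun k _ => ?_
          exact (sq_le_one_iff_abs_le_one _).2 ((norm_le_pi_norm ξ _).trans hξ)
      _ = _ := by simp
  have h2 := abs_inner_le hε w ξ hξ u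
  have h3 : (∑ k, w (.inl (u, k)) * ξ (.inl (u, k))) ^ 2 ≤ (Fintype.card κ * qN ε w u) ^ 2 :=
    sq_le_sq' (by linarith [(abs_le.1 h2).1]) (abs_le.1 h2).2
  unfold d2q
  refine (abs_sub _ _).trans ?_
  rw [add_div]
  refine add_le_add ?_ ?_
  · rw [abs_mul, abs_inv, abs_of_pos hN, abs_of_nonneg (Finset.sum_nonneg fun _ _ => sq_nonneg _),
      inv_mul_eq_div]
    gcongr
  · rw [abs_div, abs_of_pos (pow_pos hN 3), abs_of_nonneg (sq_nonneg _)]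
    calc _ ≤ (Fintype.card κ * qN ε w u) ^ 2 / qN ε w u ^ 3 := by gcongr
      _ = (Fintype.card κ : ℝ) ^ 2 / qN ε w u := by field_simp
      _ ≤ _ := by gcongr

lemma abs_qf_le {ε : ℝ} (hε : 0 < ε) (w : (U × κ) ⊕ U → ℝ) (u : U) :
    |qf ε w u| ≤ √ε + (Fintype.card κ + 1) * ‖w‖ := by
  have h1 : qN ε w u ≤ √ε + Fintype.card κ * ‖w‖ := by
    unfold qN
    rw [Real.sqrt_le_left (by positivity)]
    have : ∑ k, w (.inl (u, k)) ^ 2 ≤ (∑ k, |w (.inl (u, k))|) ^ 2 := by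
      simpa using Finset.sum_sq_le_sq_sum_of_nonneg (s := Finset.univ)
        (f := fun k => |w (.inl (u, k))|) (fun _ _ => abs_nonneg _)
    have h2 : ∑ k, |w (.inl (u, k))| ≤ Fintype.card κ * ‖w‖ := by
      calc _ ≤ ∑ _k : κ, ‖w‖ := Finset.sum_le_sum fun k _ => norm_le_pi_norm w _
        _ = _ := by simp
    have h3 : 0 ≤ ∑ k, |w (.inl (u, k))| := Finset.sum_nonneg fun _ _ => abs_nonneg _
    have h4 := Real.sq_sqrt hε.le
    nlinarith [Real.sqrt_nonneg ε, norm_nonneg w]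
  have h2 : |w (.inr u)| ≤ ‖w‖ := norm_le_pi_norm w _
  unfold qf
  refine (abs_add_le _ _).trans ?_
  rw [abs_of_pos (qN_pos hε w u)]
  linarith

lemma inner_le_one (b : U → κ → ℝ) (hb : ∀ u, ∑ i, b u i ^ 2 ≤ 1) (u u' : U) :
    ∑ i, b u i * b u' i ≤ 1 := by
  calc ∑ i, b u i * b u' i ≤ ∑ i, (b u i ^ 2 + b u' i ^ 2) / 2 :=
        Finset.sum_le_sum fun i _ => by nlinarith [sq_nonneg (b u i - b u' i)]
    _ = (∑ i, b u i ^ 2 + ∑ i, b u' i ^ 2) / 2 := by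
        rw [← Finset.sum_div, Finset.sum_add_distrib]
    _ ≤ 1 := by linarith [hb u, hb u']

lemma sum_sq_expand (e : U → ℝ) (b : U → κ → ℝ) : ∑ i, (∑ u, e u * b u i) ^ 2 =
    ∑ u, ∑ u', e u * e u' * ∑ i, b u i * b u' i := by
  simp_rw [sq, Finset.sum_mul_sum]
  rw [Finset.sum_comm]
  refine Finset.sum_congr rfl fun u _ => ?_
  rw [Finset.sum_comm]
  refine Finset.sum_congr rfl fun u' _ => ?_
  rw [Finset.mul_sum]
  exact Finset.sum_congr rfl fun i _ => by ring

/-- The quadratic form inequality behind Gordon's and Chevet's comparison: it is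
`∑ e_u e_u' (1 - ⟨v_u, v_u'⟩) (1 - ⟨a_u, a_u'⟩) ≥ 0`. -/
lemma comparison_quadratic (e : U → ℝ) (he : ∀ u, 0 ≤ e u) (v : U → σ → ℝ) (a : U → κ → ℝ)
    (hv : ∀ u, ∑ i, v u i ^ 2 = 1) (ha : ∀ u, ∑ k, a u k ^ 2 ≤ 1) :
    ∑ k, (∑ u, e u * a u k) ^ 2 + ∑ i, (∑ u, e u * v u i) ^ 2 ≤
      ∑ x : σ × κ, (∑ u, e u * (v u x.1 * a u x.2)) ^ 2 + (∑ u, e u) ^ 2 := by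
  have ex1 := sum_sq_expand e a
  have ex2 := sum_sq_expand e v
  have ex3 := sum_sq_expand e (fun u (x : σ × κ) => v u x.1 * a u x.2)
  have ex4 : (∑ u, e u) ^ 2 = ∑ u, ∑ u', e u * e u' := by rw [sq, Finset.sum_mul_sum]
  rw [ex1, ex2, ex3, ex4, ← sub_nonneg]
  simp_rw [← Finset.sum_add_distrib, ← Finset.sum_sub_distrib]
  refine Finset.sum_nonneg fun u _ => Finset.sum_nonneg fun u' _ => ?_
  have h5 : ∑ x : σ × κ, v u x.1 * a u x.2 * (v u' x.1 * a u' x.2) =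
      (∑ i, v u i * v u' i) * ∑ k, a u k * a u' k := by
    rw [Finset.sum_mul_sum, ← Finset.univ_product_univ, Finset.sum_product]
    exact Finset.sum_congr rfl fun i _ => Finset.sum_congr rfl fun k _ => by ring
  rw [h5]
  have h6 := inner_le_one v (fun u => (hv u).le) u u'
  have h7 := inner_le_one a ha u u'
  have h8 := mul_nonneg (mul_nonneg (he u) (he u'))
    (mul_nonneg (sub_nonneg.2 h6) (sub_nonneg.2 h7))
  linarith

end Comparison

/-! ### Comparison for the smoothed partition function -/

section Comparison2
variable {U κ σ : Type*} [Fintype U] [Fintype κ] [Fintype σ]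

/-- The partition function `∑_u exp (p q_u)`. -/
noncomputable def Sf (ε p : ℝ) (w : (U × κ) ⊕ U → ℝ) : ℝ := ∑ u, rexp (p * qf ε w u)

/-- The differential of `Sf`. -/
noncomputable def dS (ε p : ℝ) (w : (U × κ) ⊕ U → ℝ) : ((U × κ) ⊕ U → ℝ) →L[ℝ] ℝ :=
  ∑ u, (rexp (p * qf ε w u) * p) • dq ε w u

/-- The second directional derivative of `Sf ^ a`. -/
noncomputable def d2Sa (ε p a : ℝ) (w ξ : (U × κ) ⊕ U → ℝ) : ℝ :=
  a * Sf ε p w ^ (a - 1) *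
      (∑ u, rexp (p * qf ε w u) * (p ^ 2 * dq ε w u ξ ^ 2 + p * d2q ε w ξ u)) +
    a * (a - 1) * p ^ 2 * Sf ε p w ^ (a - 2) * (∑ u, rexp (p * qf ε w u) * dq ε w u ξ) ^ 2

lemma Sf_pos [Nonempty U] (ε p : ℝ) (w : (U × κ) ⊕ U → ℝ) : 0 < Sf ε p w :=
  Finset.sum_pos (fun _ _ => exp_pos _) Finset.univ_nonempty

lemma hasFDerivAt_Sf {ε : ℝ} (hε : 0 < ε) (p : ℝ) (w : (U × κ) ⊕ U → ℝ) :
    HasFDerivAt (fun w => Sf ε p w) (dS ε p w) w := by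
  unfold Sf dS
  refine HasFDerivAt.fun_sum fun u _ => ?_
  refine (((hasFDerivAt_qf hε w u).const_mul p).exp).congr_fderiv ?_
  rw [smul_smul]

lemma dS_apply (ε p : ℝ) (w ξ : (U × κ) ⊕ U → ℝ) :
    dS ε p w ξ = p * ∑ u, rexp (p * qf ε w u) * dq ε w u ξ := by
  simp only [dS, _root_.sum_apply, _root_.smul_apply, smul_eq_mul, Finset.mul_sum]
  exact Finset.sum_congr rfl fun u _ => by ring

lemma hasFDerivAt_Sa [Nonempty U] {ε : ℝ} (hε : 0 < ε) (p a : ℝ) (w : (U × κ) ⊕ U → ℝ) :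
    HasFDerivAt (fun w => Sf ε p w ^ a) ((a * Sf ε p w ^ (a - 1)) • dS ε p w) w :=
  (hasFDerivAt_Sf hε p w).rpow_const (Or.inl (Sf_pos ε p w).ne')

lemma hasDerivAt_dSa [Nonempty U] {ε : ℝ} (hε : 0 < ε) (p a : ℝ) (w ξ : (U × κ) ⊕ U → ℝ) :
    HasDerivAt (fun τ : ℝ => ((a * Sf ε p (w + τ • ξ) ^ (a - 1)) • dS ε p (w + τ • ξ)) ξ)
      (d2Sa ε p a w ξ) 0 := by
  simp only [_root_.smul_apply, smul_eq_mul, dS_apply]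
  have h1 : HasDerivAt (fun τ : ℝ => Sf ε p (w + τ • ξ) ^ (a - 1))
      (((a - 1) * Sf ε p w ^ (a - 1 - 1)) * dS ε p w ξ) 0 :=
    (hasFDerivAt_Sa hε p (a - 1) w).hasLineDerivAt ξ
  have h2 : ∀ u, HasDerivAt (fun τ : ℝ => rexp (p * qf ε (w + τ • ξ) u) * dq ε (w + τ • ξ) u ξ)
      (rexp (p * qf ε w u) * (p * dq ε w u ξ ^ 2 + d2q ε w ξ u)) 0 := by
    intro u
    have h3 : HasDerivAt (fun τ : ℝ => qf ε (w + τ • ξ) u) (dq ε w u ξ) 0 :=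
      (hasFDerivAt_qf hε w u).hasLineDerivAt ξ
    refine (((h3.const_mul p).exp).fun_mul (hasDerivAt_dq hε w ξ u)).congr_deriv ?_
    simp only [zero_smul, add_zero]; ring
  have h4 := (h1.const_mul a).fun_mul ((HasDerivAt.fun_sum fun u (_ : u ∈ Finset.univ) => h2 u).const_mul p)
  refine h4.congr_deriv ?_
  simp only [zero_smul, add_zero, d2Sa, dS_apply]
  have e1 : ∑ u, rexp (p * qf ε w u) * (p ^ 2 * dq ε w u ξ ^ 2 + p * d2q ε w ξ u) =
      p * ∑ u, rexp (p * qf ε w u) * (p * dq ε w u ξ ^ 2 + d2q ε w ξ u) := by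
    rw [Finset.mul_sum]; exact Finset.sum_congr rfl fun u _ => by ring
  rw [e1, show a - 1 - 1 = a - 2 by ring]
  ring

lemma continuous_qf (ε : ℝ) (u : U) : Continuous fun w : (U × κ) ⊕ U → ℝ => qf ε w u :=
  (continuous_qN ε u).add (continuous_apply _)

lemma continuous_Sf (ε p : ℝ) : Continuous fun w : (U × κ) ⊕ U → ℝ => Sf ε p w := by
  have := fun u : U => continuous_qf (κ := κ) ε u
  unfold Sf; fun_prop

lemma continuous_dq {ε : ℝ} (hε : 0 < ε) (ξ : (U × κ) ⊕ U → ℝ) (u : U) :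
    Continuous fun w => dq ε w u ξ := by
  simp only [dq_apply]
  exact (((continuous_qN ε u).inv₀ fun w => (qN_pos hε w u).ne').mul (by fun_prop)).add_const _

lemma continuous_d2q {ε : ℝ} (hε : 0 < ε) (ξ : (U × κ) ⊕ U → ℝ) (u : U) :
    Continuous fun w => d2q ε w ξ u := by
  unfold d2q
  refine (((continuous_qN ε u).inv₀ fun w => (qN_pos hε w u).ne').mul (by fun_prop)).sub ?_
  exact Continuous.div (by fun_prop) ((continuous_qN ε u).pow 3) fun w =>
    (pow_pos (qN_pos hε w u) 3).ne'

lemma continuous_Srpow [Nonempty U] (ε p a : ℝ) :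
    Continuous fun w : (U × κ) ⊕ U → ℝ => Sf ε p w ^ a :=
  (continuous_Sf ε p).rpow_const fun w => Or.inl (Sf_pos ε p w).ne'

/-- Directions of the noise `G` (a matrix) and `γ` (a scalar). -/
def dirQ [DecidableEq κ] (v : U → σ → ℝ) : ((σ × κ) ⊕ Unit) ⊕ (κ ⊕ σ) → (U × κ) ⊕ U → ℝ
  | .inl (.inl x) => Sum.elim (fun y => if y.2 = x.2 then v y.1 x.1 else 0) 0
  | .inl (.inr _) => Sum.elim 0 1
  | .inr _ => 0

/-- Directions of the noise `g ∈ ℝ^κ` and `h ∈ ℝ^σ`. -/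
def dirP [DecidableEq κ] (v : U → σ → ℝ) : ((σ × κ) ⊕ Unit) ⊕ (κ ⊕ σ) → (U × κ) ⊕ U → ℝ
  | .inl _ => 0
  | .inr (.inl k) => Sum.elim (fun y => if y.2 = k then 1 else 0) 0
  | .inr (.inr i) => Sum.elim 0 (fun u => v u i)

/-- The inequality between second derivatives of `Sf ^ a` that the interpolation needs. As
`‖v u‖ = 1`, the terms with second derivatives of `qf` agree on both sides; the remaining ones
differ by the nonnegative form of `comparison_quadratic`, which enters with the factor
`a (a - 1) ≤ 0`. -/
lemma Sa_comparison [Nonempty U] [DecidableEq κ] {ε p a : ℝ} (hε : 0 < ε) (ha0 : 0 ≤ a)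
    (ha1 : a ≤ 1) (v : U → σ → ℝ) (hv : ∀ u, ∑ i, v u i ^ 2 = 1) (w : (U × κ) ⊕ U → ℝ) :
    ∑ x, d2Sa ε p a w (dirQ v x) ≤ ∑ x, d2Sa ε p a w (dirP v x) := by
  have z : d2Sa ε p a w 0 = 0 := by simp [d2Sa, dq_apply, d2q]
  set al : U → κ → ℝ := fun u k => (qN ε w u)⁻¹ * w (.inl (u, k)) with hal
  have hal1 : ∀ u, ∑ k, al u k ^ 2 ≤ 1 := by
    intro u
    have hN := qN_pos hε w u
    simp only [hal, mul_pow, ← Finset.mul_sum]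
    rw [inv_pow, inv_mul_le_iff₀ (pow_pos hN 2), qN_sq hε]
    linarith
  have q1 : ∀ (x : σ × κ) u, dq ε w u (dirQ v (.inl (.inl x))) = v u x.1 * al u x.2 := by
    intro x u
    simp [dq_apply, dirQ, hal]; ring
  have q2 : ∀ u, dq ε w u (dirQ (κ := κ) v (.inl (.inr ()))) = 1 := by
    intro u
    simp [dq_apply, dirQ]
  have p1 : ∀ k u, dq ε w u (dirP v (.inr (.inl k))) = al u k := by
    intro x u
    simp [dq_apply, dirP, hal]
  have p2 : ∀ i u, dq ε w u (dirP v (.inr (.inr i))) = v u i := by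
    intro x u
    simp [dq_apply, dirP]
  set be : U → κ → ℝ := fun u k => (qN ε w u)⁻¹ - w (.inl (u, k)) ^ 2 / (qN ε w u) ^ 3 with hbe
  have q1' : ∀ (x : σ × κ) u, d2q ε w (dirQ v (.inl (.inl x))) u = v u x.1 ^ 2 * be u x.2 := by
    intro x u
    simp [d2q, dirQ, hbe, ite_pow]; ring
  have q2' : ∀ u, d2q ε w (dirQ (κ := κ) v (.inl (.inr ()))) u = 0 := by
    intro u
    simp [d2q, dirQ]
  have p1' : ∀ k u, d2q ε w (dirP v (.inr (.inl k))) u = be u k := by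
    intro x u
    simp [d2q, dirP, hbe, ite_pow]
  have p2' : ∀ i u, d2q ε w (dirP v (.inr (.inr i))) u = 0 := by
    intro x u
    simp [d2q, dirP]
  have zQ : ∀ x, dirQ (κ := κ) v (.inr x) = 0 := fun x => rfl
  have zP : ∀ x, dirP (κ := κ) v (.inl x) = 0 := fun x => rfl
  simp only [Fintype.sum_sum_type, zQ, zP, z, Finset.sum_const_zero, add_zero, zero_add,
    Finset.univ_unique, Finset.sum_singleton]
  rw [show (default : Unit) = () from rfl]
  simp only [d2Sa, q1, q2, p1, p2, q1', q2', p1', p2']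
  set e : U → ℝ := fun u => rexp (p * qf ε w u) with he
  change ∑ x : σ × κ, (a * Sf ε p w ^ (a - 1) *
      (∑ u, e u * (p ^ 2 * (v u x.1 * al u x.2) ^ 2 + p * (v u x.1 ^ 2 * be u x.2))) +
      a * (a - 1) * p ^ 2 * Sf ε p w ^ (a - 2) * (∑ u, e u * (v u x.1 * al u x.2)) ^ 2) +
      (a * Sf ε p w ^ (a - 1) * (∑ u, e u * (p ^ 2 * 1 ^ 2 + p * 0)) +
      a * (a - 1) * p ^ 2 * Sf ε p w ^ (a - 2) * (∑ u, e u * 1) ^ 2) ≤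
      ∑ k, (a * Sf ε p w ^ (a - 1) * (∑ u, e u * (p ^ 2 * al u k ^ 2 + p * be u k)) +
      a * (a - 1) * p ^ 2 * Sf ε p w ^ (a - 2) * (∑ u, e u * al u k) ^ 2) +
      ∑ i, (a * Sf ε p w ^ (a - 1) * (∑ u, e u * (p ^ 2 * v u i ^ 2 + p * 0)) +
      a * (a - 1) * p ^ 2 * Sf ε p w ^ (a - 2) * (∑ u, e u * v u i) ^ 2)
  simp only [Finset.sum_add_distrib, ← Finset.mul_sum]
  -- the terms of first order in the diagonal agree
  have d1 : ∑ x : σ × κ, ∑ u, e u * (p ^ 2 * (v u x.1 * al u x.2) ^ 2 + p * (v u x.1 ^ 2 * be u x.2))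
      = ∑ k, ∑ u, e u * (p ^ 2 * al u k ^ 2 + p * be u k) := by
    rw [Finset.sum_comm, Finset.sum_comm (s := (Finset.univ : Finset κ))]
    refine Finset.sum_congr rfl fun u _ => ?_
    rw [← Finset.univ_product_univ, Finset.sum_product_right]
    refine Finset.sum_congr rfl fun k _ => ?_
    have : ∀ i, e u * (p ^ 2 * (v u i * al u k) ^ 2 + p * (v u i ^ 2 * be u k)) =
      v u i ^ 2 * (e u * (p ^ 2 * al u k ^ 2 + p * be u k)) := fun i => by ring
    simp only [this]
    rw [← Finset.sum_mul, hv, one_mul]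
  have d2 : ∑ i, ∑ u, e u * (p ^ 2 * v u i ^ 2 + p * 0) = ∑ u, e u * (p ^ 2 * 1 ^ 2 + p * 0) := by
    rw [Finset.sum_comm]
    refine Finset.sum_congr rfl fun u _ => ?_
    have : ∀ i, e u * (p ^ 2 * v u i ^ 2 + p * 0) = v u i ^ 2 * (e u * p ^ 2) := fun i => by ring
    simp only [this]
    rw [← Finset.sum_mul, hv]; ring
  rw [d1, d2]
  have key := comparison_quadratic e (fun u => (exp_pos _).le) v al hv hal1
  have hneg : a * (a - 1) * p ^ 2 * Sf ε p w ^ (a - 2) ≤ 0 := by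
    have h1 : 0 < Sf ε p w ^ (a - 2) := rpow_pos_of_pos (Sf_pos ε p w) _
    have h2 : a * (a - 1) ≤ 0 := mul_nonpos_of_nonneg_of_nonpos ha0 (by linarith)
    exact mul_nonpos_of_nonpos_of_nonneg (mul_nonpos_of_nonpos_of_nonneg h2 (sq_nonneg p)) h1.le
  have := mul_le_mul_of_nonpos_left key hneg
  simp only [mul_one]
  linarith

lemma norm_dirP [DecidableEq κ] (v : U → σ → ℝ) (hv : ∀ u, ∑ i, v u i ^ 2 = 1)
    (x : ((σ × κ) ⊕ Unit) ⊕ (κ ⊕ σ)) : ‖dirP v x‖ ≤ 1 := by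
  have hv1 : ∀ u i, |v u i| ≤ 1 := fun u i => by
    rw [← sq_le_one_iff_abs_le_one, ← hv u]
    exact Finset.single_le_sum (f := fun i => v u i ^ 2) (fun _ _ => sq_nonneg _) (Finset.mem_univ i)
  refine (pi_norm_le_iff_of_nonneg zero_le_one).2 fun j => ?_
  rcases x with x | k | i <;> rcases j with j | j <;> simp [dirP, hv1]
  split_ifs <;> simp

lemma norm_dirQ [DecidableEq κ] (v : U → σ → ℝ) (hv : ∀ u, ∑ i, v u i ^ 2 = 1)
    (x : ((σ × κ) ⊕ Unit) ⊕ (κ ⊕ σ)) : ‖dirQ v x‖ ≤ 1 := by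
  have hv1 : ∀ u i, |v u i| ≤ 1 := fun u i => by
    rw [← sq_le_one_iff_abs_le_one, ← hv u]
    exact Finset.single_le_sum (f := fun i => v u i ^ 2) (fun _ _ => sq_nonneg _) (Finset.mem_univ i)
  refine (pi_norm_le_iff_of_nonneg zero_le_one).2 fun j => ?_
  rcases x with (x | x) | x <;> rcases j with j | j <;> simp [dirQ]
  split_ifs <;> simp [hv1]

lemma Sa_growth [Nonempty U] {ε p a : ℝ} (hε : 0 < ε) (ha0 : 0 ≤ a) (ha1 : a ≤ 1)
    (w : (U × κ) ⊕ U → ℝ) : Sf ε p w ^ a ≤ (1 + Fintype.card U * rexp (|p| * √ε)) *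
      rexp (|p| * (Fintype.card κ + 1) * ‖w‖) := by
  set c : ℝ := (Fintype.card κ : ℝ) with hc
  set C : ℝ := |p| * (c + 1) with hC
  have h0 := Sf_pos ε p w
  have h1 : Sf ε p w ≤ Fintype.card U * rexp (|p| * √ε) * rexp (C * ‖w‖) := by
    calc Sf ε p w ≤ ∑ _u : U, rexp (|p| * √ε) * rexp (C * ‖w‖) := by
          refine Finset.sum_le_sum fun u _ => ?_
          rw [← exp_add, exp_le_exp]
          calc p * qf ε w u ≤ |p * qf ε w u| := le_abs_self _
            _ = |p| * |qf ε w u| := abs_mul _ _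
            _ ≤ |p| * (√ε + (c + 1) * ‖w‖) := by gcongr; exact abs_qf_le hε w u
            _ = _ := by rw [hC]; ring
      _ = _ := by simp [mul_assoc]
  have h2 : Sf ε p w ^ a ≤ 1 + Sf ε p w := by
    rcases le_total 1 (Sf ε p w) with h | h
    · calc Sf ε p w ^ a ≤ Sf ε p w ^ (1 : ℝ) := rpow_le_rpow_of_exponent_le h ha1
        _ ≤ _ := by rw [rpow_one]; linarith
    · linarith [rpow_le_one h0.le h ha0]
  have h3 : 1 ≤ rexp (C * ‖w‖) := one_le_exp (by positivity)
  rw [add_mul]; linarith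

/-- Gaussian interpolation applied to `Sf ^ a`; most of the proof checks the growth conditions. -/
lemma comparison_smooth [Nonempty U] [DecidableEq κ] [DecidableEq σ] {ε p a : ℝ} (hε : 0 < ε)
    (ha0 : 0 ≤ a) (ha1 : a ≤ 1) (v : U → σ → ℝ) (hv : ∀ u, ∑ i, v u i ^ 2 = 1) :
    ∫ z, Sf ε p (∑ x, z x • dirQ (κ := κ) v x) ^ a ∂gm (((σ × κ) ⊕ Unit) ⊕ (κ ⊕ σ)) ≤
      ∫ z, Sf ε p (∑ x, z x • dirP (κ := κ) v x) ^ a ∂gm (((σ × κ) ⊕ Unit) ⊕ (κ ⊕ σ)) := by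
  set c : ℝ := (Fintype.card κ : ℝ) with hc
  set c2 : ℝ := (c + c ^ 2) / √ε with hc2
  have hc2n : 0 ≤ c2 := by positivity
  set A0 : ℝ := 1 + Fintype.card U * rexp (|p| * √ε) with hA0
  have hA0n : 0 ≤ A0 := by positivity
  set C : ℝ := |p| * (c + 1) with hC
  have hS : ∀ w : (U × κ) ⊕ U → ℝ, Sf ε p w ^ a ≤ A0 * rexp (C * ‖w‖) :=
    Sa_growth hε ha0 ha1
  have hw1 : ∀ (w ξ : (U × κ) ⊕ U → ℝ), ‖ξ‖ ≤ 1 →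
      |∑ u, rexp (p * qf ε w u) * dq ε w u ξ| ≤ (c + 1) * Sf ε p w := by
    intro w ξ hξ
    calc _ ≤ ∑ u, |rexp (p * qf ε w u) * dq ε w u ξ| := Finset.abs_sum_le_sum_abs _ _
      _ ≤ ∑ u, (c + 1) * rexp (p * qf ε w u) := by
          refine Finset.sum_le_sum fun u _ => ?_
          rw [abs_mul, abs_of_pos (exp_pos _), mul_comm]
          gcongr
          exact abs_dq_le hε w ξ hξ u
      _ = _ := by rw [← Finset.mul_sum, Sf]
  have hw2 : ∀ (w ξ : (U × κ) ⊕ U → ℝ), ‖ξ‖ ≤ 1 →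
      |∑ u, rexp (p * qf ε w u) * (p ^ 2 * dq ε w u ξ ^ 2 + p * d2q ε w ξ u)| ≤
        (p ^ 2 * (c + 1) ^ 2 + |p| * c2) * Sf ε p w := by
    intro w ξ hξ
    calc _ ≤ ∑ u, |rexp (p * qf ε w u) * (p ^ 2 * dq ε w u ξ ^ 2 + p * d2q ε w ξ u)| :=
          Finset.abs_sum_le_sum_abs _ _
      _ ≤ ∑ u, (p ^ 2 * (c + 1) ^ 2 + |p| * c2) * rexp (p * qf ε w u) := by
          refine Finset.sum_le_sum fun u _ => ?_
          rw [abs_mul, abs_of_pos (exp_pos _), mul_comm]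
          gcongr
          refine (abs_add_le _ _).trans (add_le_add ?_ ?_)
          · rw [abs_mul, abs_of_nonneg (sq_nonneg p), abs_of_nonneg (sq_nonneg (dq ε w u ξ)),
              ← sq_abs (dq ε w u ξ)]
            gcongr
            exact abs_dq_le hε w ξ hξ u
          · rw [abs_mul]
            gcongr
            exact abs_d2q_le hε w ξ hξ u
      _ = _ := by rw [← Finset.mul_sum, Sf]
  have hpow1 : ∀ w : (U × κ) ⊕ U → ℝ, Sf ε p w ^ (a - 1) * Sf ε p w = Sf ε p w ^ a := by
    intro w
    rw [← rpow_add_one (Sf_pos ε p w).ne', sub_add_cancel]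
  have hpow2 : ∀ w : (U × κ) ⊕ U → ℝ, Sf ε p w ^ (a - 2) * Sf ε p w ^ 2 = Sf ε p w ^ a := by
    intro w
    rw [← rpow_natCast, ← rpow_add (Sf_pos ε p w)]; norm_num
  set A1 : ℝ := |p| * (c + 1) with hA1
  set A2 : ℝ := (p ^ 2 * (c + 1) ^ 2 + |p| * c2) + p ^ 2 * (c + 1) ^ 2 with hA2
  have hA1n : 0 ≤ A1 := by positivity
  have hA2n : 0 ≤ A2 := by positivity
  have hbase : ∀ w : (U × κ) ⊕ U → ℝ, 0 ≤ A0 * rexp (C * ‖w‖) := fun w => by positivity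
  refine gaussian_interpolation (Φ := fun w => Sf ε p w ^ a)
    (D := fun w => (a * Sf ε p w ^ (a - 1)) • dS ε p w) (D2 := d2Sa ε p a)
    (A := (1 + A1 + A2) * A0) (C := C) (dirP v) (dirQ v) ?_ (norm_dirP v hv) (norm_dirQ v hv)
    (hasFDerivAt_Sa hε p a) (hasDerivAt_dSa hε p a) ?_ ?_ (by positivity) (by positivity)
    ?_ ?_ ?_ (Sa_comparison hε ha0 ha1 v hv)
  · rintro (x | x)
    · exact Or.inl rfl
    · exact Or.inr rfl
  · intro ξ
    simp only [_root_.smul_apply, smul_eq_mul, dS_apply]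
    refine ((continuous_Srpow ε p (a - 1)).const_mul a).mul (Continuous.const_mul ?_ p)
    exact continuous_finsetSum _ fun u _ =>
      ((continuous_qf ε u).const_mul p).rexp.mul (continuous_dq hε ξ u)
  · intro ξ
    unfold d2Sa
    refine Continuous.add ?_ ?_
    · refine ((continuous_Srpow ε p (a - 1)).const_mul a).mul ?_
      exact continuous_finsetSum _ fun u _ =>
        ((continuous_qf ε u).const_mul p).rexp.mul
          ((((continuous_dq hε ξ u).pow 2).const_mul _).add ((continuous_d2q hε ξ u).const_mul _))
    · refine ((continuous_Srpow ε p (a - 2)).const_mul _).mul (Continuous.pow ?_ 2)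
      exact continuous_finsetSum _ fun u _ =>
        ((continuous_qf ε u).const_mul p).rexp.mul (continuous_dq hε ξ u)
  · intro w
    rw [abs_of_pos (rpow_pos_of_pos (Sf_pos ε p w) _)]
    have := hbase w
    nlinarith [hS w]
  · intro w ξ hξ
    simp only [_root_.smul_apply, smul_eq_mul, dS_apply]
    have hp := rpow_pos_of_pos (Sf_pos ε p w) (a - 1)
    rw [abs_mul, abs_mul, abs_mul, abs_of_nonneg ha0, abs_of_pos hp]
    calc a * Sf ε p w ^ (a - 1) * (|p| * |∑ u, rexp (p * qf ε w u) * dq ε w u ξ|)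
        ≤ 1 * Sf ε p w ^ (a - 1) * (|p| * ((c + 1) * Sf ε p w)) := by
          gcongr
          exact hw1 w ξ hξ
      _ = A1 * (Sf ε p w ^ (a - 1) * Sf ε p w) := by rw [hA1]; ring
      _ ≤ A1 * (A0 * rexp (C * ‖w‖)) := by rw [hpow1]; gcongr; exact hS w
      _ ≤ _ := by
          rw [mul_assoc (1 + A1 + A2)]
          exact mul_le_mul_of_nonneg_right (by linarith only [hA1n, hA2n]) (hbase w)
  · intro w ξ hξ
    unfold d2Sa
    have hp := rpow_pos_of_pos (Sf_pos ε p w) (a - 1)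
    have hp2 := rpow_pos_of_pos (Sf_pos ε p w) (a - 2)
    have hS0 := Sf_pos ε p w
    calc _ ≤ |a * Sf ε p w ^ (a - 1) * (∑ u, rexp (p * qf ε w u) * (p ^ 2 * dq ε w u ξ ^ 2 + p * d2q ε w ξ u))|
          + |a * (a - 1) * p ^ 2 * Sf ε p w ^ (a - 2) * (∑ u, rexp (p * qf ε w u) * dq ε w u ξ) ^ 2| :=
          abs_add_le _ _
      _ = a * Sf ε p w ^ (a - 1) * |∑ u, rexp (p * qf ε w u) * (p ^ 2 * dq ε w u ξ ^ 2 + p * d2q ε w ξ u)|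
          + a * |a - 1| * p ^ 2 * Sf ε p w ^ (a - 2) * |∑ u, rexp (p * qf ε w u) * dq ε w u ξ| ^ 2 := by
          simp only [abs_mul, abs_pow, abs_of_nonneg ha0, abs_of_pos hp, abs_of_pos hp2, sq_abs]
      _ ≤ 1 * Sf ε p w ^ (a - 1) * ((p ^ 2 * (c + 1) ^ 2 + |p| * c2) * Sf ε p w)
          + 1 * 1 * p ^ 2 * Sf ε p w ^ (a - 2) * ((c + 1) * Sf ε p w) ^ 2 := by
          gcongr
          · exact hw2 w ξ hξ
          · rw [abs_le]; constructor <;> linarith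
          · exact hw1 w ξ hξ
      _ = (p ^ 2 * (c + 1) ^ 2 + |p| * c2) * (Sf ε p w ^ (a - 1) * Sf ε p w)
          + p ^ 2 * (c + 1) ^ 2 * (Sf ε p w ^ (a - 2) * Sf ε p w ^ 2) := by ring
      _ = A2 * Sf ε p w ^ a := by rw [hpow1, hpow2]; ring
      _ ≤ A2 * (A0 * rexp (C * ‖w‖)) := by gcongr; exact hS w
      _ ≤ _ := by
          rw [mul_assoc (1 + A1 + A2)]
          exact mul_le_mul_of_nonneg_right (by linarith only [hA1n, hA2n]) (hbase w)

end Comparison2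

/-! ### Comparison for finite sets of unit vectors -/

section Comparison3
variable {U κ σ : Type*} [Fintype U] [Fintype κ] [Fintype σ]

/-- The Euclidean norm of a vector in `κ → ℝ` (whose Mathlib norm is the sup norm). -/
noncomputable def l2 (x : κ → ℝ) : ℝ := √(∑ k, x k ^ 2)

/-- The row vector `vᵀG`, for `G` a matrix given as a function on pairs. -/
def rowc (G : σ × κ → ℝ) (v : σ → ℝ) : κ → ℝ := fun k => ∑ i, v i * G (i, k)

lemma l2_nonneg (x : κ → ℝ) : 0 ≤ l2 x := Real.sqrt_nonneg _

lemma l2_sq (x : κ → ℝ) : l2 x ^ 2 = ∑ k, x k ^ 2 :=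
  Real.sq_sqrt (Finset.sum_nonneg fun _ _ => sq_nonneg _)

lemma continuous_l2 : Continuous (l2 : (κ → ℝ) → ℝ) := by unfold l2; fun_prop

lemma l2_le_card_mul_norm (x : κ → ℝ) : l2 x ≤ Fintype.card κ * ‖x‖ := by
  unfold l2
  rw [Real.sqrt_le_left (by positivity)]
  have h1 : ∑ k, x k ^ 2 ≤ (∑ k, |x k|) ^ 2 := by
    simpa using Finset.sum_sq_le_sq_sum_of_nonneg (s := Finset.univ)
      (f := fun k => |x k|) (fun _ _ => abs_nonneg _)
  have h2 : ∑ k, |x k| ≤ Fintype.card κ * ‖x‖ := by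
    calc _ ≤ ∑ _k : κ, ‖x‖ := Finset.sum_le_sum fun k _ => norm_le_pi_norm x _
      _ = _ := by simp
  have h3 : 0 ≤ ∑ k, |x k| := Finset.sum_nonneg fun _ _ => abs_nonneg _
  nlinarith

lemma l2_le_sqrt {ε : ℝ} (hε : 0 < ε) (x : κ → ℝ) : l2 x ≤ √(ε + ∑ k, x k ^ 2) :=
  Real.sqrt_le_sqrt (by linarith)

lemma sqrt_le_l2 {ε : ℝ} (hε : 0 < ε) (x : κ → ℝ) : √(ε + ∑ k, x k ^ 2) ≤ √ε + l2 x := by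
  rw [Real.sqrt_le_left (add_nonneg (Real.sqrt_nonneg _) (l2_nonneg x)), ← l2_sq]
  nlinarith [Real.sq_sqrt hε.le, Real.sqrt_nonneg ε, l2_nonneg x]

lemma mul_sqrt_bounds {ε : ℝ} (hε : 0 < ε) (μ : ℝ) (x : κ → ℝ) :
    μ * l2 x - |μ| * √ε ≤ μ * √(ε + ∑ k, x k ^ 2) ∧
      μ * √(ε + ∑ k, x k ^ 2) ≤ μ * l2 x + |μ| * √ε := by
  have h1 := l2_le_sqrt hε x
  have h2 := sqrt_le_l2 hε x
  have h3 := Real.sqrt_nonneg ε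
  rcases le_total 0 μ with h | h
  · rw [abs_of_nonneg h]; constructor <;> nlinarith
  · rw [abs_of_nonpos h]; constructor <;> nlinarith

lemma continuous_rowc (v : σ → ℝ) : Continuous fun G : σ × κ → ℝ => rowc G v := by
  unfold rowc; fun_prop

lemma abs_inner_le_l2 (h v : σ → ℝ) (hv : ∑ i, v i ^ 2 = 1) : |∑ i, h i * v i| ≤ l2 h := by
  refine abs_le_sqrt ?_
  have := Finset.sum_mul_sq_le_sq_mul_sq Finset.univ h v
  rw [hv, mul_one] at this
  exact this

lemma integral_gm_sum {α β : Type*} [Fintype α] [Fintype β] (f : (α → ℝ) → ℝ) (g : (β → ℝ) → ℝ) :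
    ∫ z, f (fun x => z (.inl x)) * g (fun x => z (.inr x)) ∂gm (α ⊕ β) =
      (∫ x, f x ∂gm α) * ∫ y, g y ∂gm β := by
  rw [← integral_prod_mul]
  have := (measurePreserving_sumPiEquivProdPi (fun _ : α ⊕ β => gaussianReal 0 1)).integral_comp
    (MeasurableEquiv.measurableEmbedding _) (fun p => f p.1 * g p.2)
  exact this

lemma integrable_exp_l2 (μ : ℝ) : Integrable (fun g : κ → ℝ => rexp (μ * l2 g)) (gm κ) := by
  refine integrable_gm_of_bound (A := 1) (C := |μ| * Fintype.card κ)
    (by have := continuous_l2 (κ := κ); fun_prop) fun g => ?_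
  rw [abs_of_pos (exp_pos _), one_mul, exp_le_exp, mul_assoc]
  calc μ * l2 g ≤ |μ| * l2 g := by gcongr; exacts [l2_nonneg g, le_abs_self μ]
    _ ≤ _ := by gcongr; exact l2_le_card_mul_norm g

lemma integrable_prod_gm {α β : Type*} [Fintype α] [Fintype β] {f : (α → ℝ) → ℝ}
    {g : (β → ℝ) → ℝ} (hf : Integrable f (gm α)) (hg : Integrable g (gm β)) :
    Integrable (fun z => f (fun x => z (.inl x)) * g (fun x => z (.inr x))) (gm (α ⊕ β)) := by
  have := (measurePreserving_sumPiEquivProdPi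
    (fun _ : α ⊕ β => gaussianReal 0 1)).integrable_comp_of_integrable (hf.mul_prod hg)
  exact this

/-- Comparison for finitely many unit vectors. In `comparison_smooth` take `a = δ`, `p = μ / δ` and
`ε = δ²`, so that `Sf ^ a` is a soft maximum of the `exp (μ * qf)`, and let `δ → 0`. -/
lemma comparison_real [Nonempty U] [DecidableEq κ] [DecidableEq σ]
    (v : U → σ → ℝ) (hv : ∀ u, ∑ i, v u i ^ 2 = 1) (μ : ℝ) :
    rexp (μ ^ 2 / 2) * ∫ G, Finset.univ.sup' Finset.univ_nonempty
        (fun u => rexp (μ * l2 (rowc (κ := κ) G (v u)))) ∂gm (σ × κ) ≤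
      (∫ g, rexp (μ * l2 g) ∂gm κ) * ∫ h, rexp (|μ| * l2 h) ∂gm σ := by
  set Mx : (σ × κ → ℝ) → ℝ := fun G => Finset.univ.sup' Finset.univ_nonempty
        (fun u => rexp (μ * l2 (rowc (κ := κ) G (v u)))) with hMx
  set R : ℝ := (∫ g, rexp (μ * l2 g) ∂gm κ) * ∫ h, rexp (|μ| * l2 h) ∂gm σ with hR
  have main : ∀ δ : ℝ, 0 < δ → δ ≤ 1 →
      rexp (μ ^ 2 / 2) * (∫ G, Mx G ∂gm (σ × κ)) * rexp (-(|μ| * δ)) ≤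
        (Fintype.card U : ℝ) ^ δ * rexp (|μ| * δ) * R := by
    intro δ h0 h1
    have hε : 0 < δ ^ 2 := by positivity
    have hsq : √(δ ^ 2) = δ := Real.sqrt_sq h0.le
    have hpd : μ / δ * δ = μ := div_mul_cancel₀ _ h0.ne'
    have key := comparison_smooth (κ := κ) (p := μ / δ) hε h0.le h1 v hv
    -- coordinates of the two Gaussian fields
    have eQ1 : ∀ (z : ((σ × κ) ⊕ Unit) ⊕ (κ ⊕ σ) → ℝ) u k,
        (∑ x, z x • dirQ (κ := κ) v x) (.inl (u, k)) =
          rowc (fun y => z (.inl (.inl y))) (v u) k := by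
      intro z u k
      simp only [Finset.sum_apply, Fintype.sum_sum_type, Pi.smul_apply, dirQ, smul_eq_mul,
        Sum.elim_inl, Pi.zero_apply, mul_zero, Finset.sum_const_zero, add_zero, rowc]
      rw [← Finset.univ_product_univ, Finset.sum_product]
      refine Finset.sum_congr rfl fun i _ => ?_
      simp [mul_comm]
    have eQ2 : ∀ (z : ((σ × κ) ⊕ Unit) ⊕ (κ ⊕ σ) → ℝ) u,
        (∑ x, z x • dirQ (κ := κ) v x) (.inr u) = z (.inl (.inr ())) := by
      intro z u
      simp [Finset.sum_apply, Fintype.sum_sum_type, dirQ]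
    have eP1 : ∀ (z : ((σ × κ) ⊕ Unit) ⊕ (κ ⊕ σ) → ℝ) u k,
        (∑ x, z x • dirP (κ := κ) v x) (.inl (u, k)) = z (.inr (.inl k)) := by
      intro z u k
      simp [Finset.sum_apply, Fintype.sum_sum_type, dirP]
    have eP2 : ∀ (z : ((σ × κ) ⊕ Unit) ⊕ (κ ⊕ σ) → ℝ) u,
        (∑ x, z x • dirP (κ := κ) v x) (.inr u) = ∑ i, z (.inr (.inr i)) * v u i := by
      intro z u
      simp [Finset.sum_apply, Fintype.sum_sum_type, dirP]
    have lower : ∀ z : ((σ × κ) ⊕ Unit) ⊕ (κ ⊕ σ) → ℝ,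
        rexp (-(|μ| * δ)) * ((Mx (fun y => z (.inl (.inl y))) * rexp (μ * z (.inl (.inr ())))) * 1) ≤
          Sf (δ ^ 2) (μ / δ) (∑ x, z x • dirQ (κ := κ) v x) ^ δ := by
      intro z
      obtain ⟨u, -, hu⟩ := Finset.exists_mem_eq_sup' Finset.univ_nonempty
        (fun u => rexp (μ * l2 (rowc (κ := κ) (fun y => z (.inl (.inl y))) (v u))))
      have hu' : Mx (fun y => z (.inl (.inl y))) = _ := hu
      rw [hu']
      set w := ∑ x, z x • dirQ (κ := κ) v x with hw
      have h2 : rexp (μ / δ * qf (δ ^ 2) w u) ≤ Sf (δ ^ 2) (μ / δ) w :=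
        Finset.single_le_sum (f := fun u => rexp (μ / δ * qf (δ ^ 2) w u))
          (fun _ _ => (exp_pos _).le) (Finset.mem_univ u)
      have h3 := rpow_le_rpow (exp_pos _).le h2 h0.le
      refine le_trans ?_ h3
      rw [← exp_mul, mul_one, ← exp_add, ← exp_add, exp_le_exp, mul_right_comm, hpd, qf, hw, eQ2, qN]
      simp only [eQ1]
      have := (mul_sqrt_bounds hε μ (rowc (fun y => z (.inl (.inl y))) (v u))).1
      rw [hsq] at this
      linarith
    have upper : ∀ z : ((σ × κ) ⊕ Unit) ⊕ (κ ⊕ σ) → ℝ,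
        Sf (δ ^ 2) (μ / δ) (∑ x, z x • dirP (κ := κ) v x) ^ δ ≤
        (Fintype.card U : ℝ) ^ δ * rexp (|μ| * δ) * (1 *
          (rexp (μ * l2 (fun k => z (.inr (.inl k)))) * rexp (|μ| * l2 fun i => z (.inr (.inr i))))) := by
      intro z
      set w := ∑ x, z x • dirP (κ := κ) v x with hw
      set b : ℝ := (μ * l2 (fun k => z (.inr (.inl k))) + |μ| * δ + |μ| * l2 fun i => z (.inr (.inr i))) / δ with hb
      have h2 : Sf (δ ^ 2) (μ / δ) w ≤ Fintype.card U * rexp b := by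
        calc Sf (δ ^ 2) (μ / δ) w ≤ ∑ _u : U, rexp b := by
              refine Finset.sum_le_sum fun u _ => exp_le_exp.2 ?_
              rw [hb, le_div_iff₀ h0, mul_right_comm, hpd, qf, hw, eP2, qN]
              simp only [eP1]
              have h3 := (mul_sqrt_bounds hε μ (fun k => z (.inr (.inl k)))).2
              rw [hsq] at h3
              have h4 := abs_inner_le_l2 (fun i => z (.inr (.inr i))) (v u) (hv u)
              have h5 : μ * ∑ i, z (.inr (.inr i)) * v u i ≤ |μ| * l2 fun i => z (.inr (.inr i)) := by
                refine (le_abs_self _).trans ?_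
                rw [abs_mul]
                gcongr
              linarith
          _ = _ := by simp
      have h3 := rpow_le_rpow (Sf_pos _ _ w).le h2 h0.le
      refine h3.trans (le_of_eq ?_)
      rw [mul_rpow (by positivity) (exp_pos _).le, ← exp_mul, hb, div_mul_cancel₀ _ h0.ne', exp_add,
        exp_add]
      ring
    have hMc : Continuous Mx := by
      have h1 := fun u => (continuous_l2 (κ := κ)).comp (continuous_rowc (κ := κ) (v u))
      exact Continuous.finset_sup'_apply Finset.univ_nonempty
        fun u _ => ((h1 u).const_mul μ).rexp
    have hMpos : ∀ G, 0 ≤ Mx G := fun G => by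
      obtain ⟨u, -, hu⟩ := Finset.exists_mem_eq_sup' Finset.univ_nonempty
        (fun u => rexp (μ * l2 (rowc (κ := κ) G (v u))))
      have hu' : Mx G = _ := hu
      rw [hu']; positivity
    have I1 : ∫ z, rexp (-(|μ| * δ)) * ((Mx (fun y => z (.inl (.inl y))) *
        rexp (μ * z (.inl (.inr ())))) * 1) ∂gm (((σ × κ) ⊕ Unit) ⊕ (κ ⊕ σ)) =
        rexp (-(|μ| * δ)) * ((∫ G, Mx G ∂gm (σ × κ)) * rexp (μ ^ 2 / 2)) := by
      rw [integral_const_mul]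
      have h1 := integral_gm_sum (β := κ ⊕ σ) (fun y : (σ × κ) ⊕ Unit → ℝ =>
        Mx (fun x => y (.inl x)) * rexp (μ * y (.inr ()))) (fun _ => 1)
      have h2 := integral_gm_sum (α := σ × κ) (β := Unit) Mx (fun y => rexp (μ * y ()))
      have h3 : ∫ y : Unit → ℝ, rexp (μ * y ()) ∂gm Unit = rexp (μ ^ 2 / 2) := by
        have h4 := integral_fintype_prod_eq_prod (ι := Unit) (μ := fun _ : Unit => gaussianReal 0 1)
          (f := fun _ x => rexp (μ * x))
        simp only [Finset.univ_unique, Finset.prod_singleton] at h4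
        have h5 := congrFun (mgf_fun_id_gaussianReal (μ := 0) (v := 1)) μ
        simp only [mgf] at h5
        refine (Eq.trans ?_ h4).trans (h5.trans ?_)
        · rfl
        · simp
      rw [h1, h2, h3]
      simp
    have I2 : ∫ z, (Fintype.card U : ℝ) ^ δ * rexp (|μ| * δ) * (1 *
          (rexp (μ * l2 (fun k => z (.inr (.inl k)))) * rexp (|μ| * l2 fun i => z (.inr (.inr i)))))
          ∂gm (((σ × κ) ⊕ Unit) ⊕ (κ ⊕ σ)) =
        (Fintype.card U : ℝ) ^ δ * rexp (|μ| * δ) * R := by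
      rw [integral_const_mul]
      have h1 := integral_gm_sum (α := (σ × κ) ⊕ Unit) (fun _ => 1) (fun y : κ ⊕ σ → ℝ =>
        rexp (μ * l2 (fun k => y (.inl k))) * rexp (|μ| * l2 fun i => y (.inr i)))
      have h2 := integral_gm_sum (fun g : κ → ℝ => rexp (μ * l2 g))
        (fun h : σ → ℝ => rexp (|μ| * l2 h))
      rw [h1, h2]
      simp [hR]
    have int2 : Integrable (fun z => (Fintype.card U : ℝ) ^ δ * rexp (|μ| * δ) * (1 *
          (rexp (μ * l2 (fun k => z (.inr (.inl k)))) * rexp (|μ| * l2 fun i => z (.inr (.inr i))))))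
          (gm (((σ × κ) ⊕ Unit) ⊕ (κ ⊕ σ))) := by
      refine Integrable.const_mul ?_ _
      exact integrable_prod_gm (α := (σ × κ) ⊕ Unit) (f := fun _ => 1) (integrable_const _)
        (integrable_prod_gm (integrable_exp_l2 (κ := κ) μ) (integrable_exp_l2 (κ := σ) |μ|))
    have int1 : Integrable (fun z => Sf (δ ^ 2) (μ / δ) (∑ x, z x • dirQ (κ := κ) v x) ^ δ)
        (gm (((σ × κ) ⊕ Unit) ⊕ (κ ⊕ σ))) := by
      refine integrable_gm_of_bound (A := 1 + Fintype.card U * rexp (|μ / δ| * √(δ ^ 2)))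
        (C := |μ / δ| * (Fintype.card κ + 1) * Fintype.card (((σ × κ) ⊕ Unit) ⊕ (κ ⊕ σ)))
        ((continuous_Srpow _ _ _).comp (by fun_prop)) fun z => ?_
      rw [abs_of_pos (rpow_pos_of_pos (Sf_pos _ _ _) _)]
      refine (Sa_growth hε h0.le h1 _).trans ?_
      refine mul_le_mul_of_nonneg_left (exp_le_exp.2 ?_) (by positivity)
      rw [mul_assoc _ (Fintype.card (((σ × κ) ⊕ Unit) ⊕ (κ ⊕ σ)) : ℝ)]
      refine mul_le_mul_of_nonneg_left ?_ (by positivity)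
      calc _ ≤ ∑ x, ‖z x • dirQ (κ := κ) v x‖ := norm_sum_le _ _
        _ ≤ ∑ _x : ((σ × κ) ⊕ Unit) ⊕ (κ ⊕ σ), ‖z‖ := by
            refine Finset.sum_le_sum fun x _ => ?_
            rw [norm_smul]
            have h2 := norm_dirQ v hv x
            have h3 := norm_le_pi_norm z x
            nlinarith [norm_nonneg z, norm_nonneg (z x)]
        _ = _ := by rw [Finset.sum_const, nsmul_eq_mul, Finset.card_univ]
    have J1 := integral_mono_of_nonneg (Filter.Eventually.of_forall fun z => by
      have := hMpos (fun y => z (.inl (.inl y))); dsimp; positivity) int1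
      (Filter.Eventually.of_forall lower)
    have J2 := integral_mono_of_nonneg (Filter.Eventually.of_forall fun z =>
      (rpow_pos_of_pos (Sf_pos _ _ _) _).le) int2 (Filter.Eventually.of_forall upper)
    rw [I1] at J1
    rw [I2] at J2
    linarith [J1, J2, key]
  have hU : (0 : ℝ) < Fintype.card U := by exact_mod_cast Fintype.card_pos
  have t1 : Filter.Tendsto (fun δ : ℝ => rexp (μ ^ 2 / 2) * (∫ G, Mx G ∂gm (σ × κ)) *
      rexp (-(|μ| * δ))) (nhdsWithin 0 (Set.Ioi 0))
      (nhds (rexp (μ ^ 2 / 2) * (∫ G, Mx G ∂gm (σ × κ)) * rexp (-(|μ| * 0)))) := by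
    refine Filter.Tendsto.mono_left (Continuous.tendsto ?_ 0) nhdsWithin_le_nhds
    fun_prop
  have t2 : Filter.Tendsto (fun δ : ℝ => (Fintype.card U : ℝ) ^ δ * rexp (|μ| * δ) * R)
      (nhdsWithin 0 (Set.Ioi 0)) (nhds ((Fintype.card U : ℝ) ^ (0 : ℝ) * rexp (|μ| * 0) * R)) := by
    refine Filter.Tendsto.mono_left (Continuous.tendsto ?_ 0) nhdsWithin_le_nhds
    have : Continuous fun δ : ℝ => (Fintype.card U : ℝ) ^ δ :=
      Real.continuous_const_rpow hU.ne'
    fun_prop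
  have := le_of_tendsto_of_tendsto t1 t2 (by
    filter_upwards [Ioc_mem_nhdsGT (zero_lt_one' ℝ)] with δ hδ
    exact main δ hδ.1 hδ.2)
  simpa using this

end Comparison3

/-! ### Moment integrals of chi distributions -/

/-- The moment integrals `∫₀^∞ r^k exp(-r²/2 - λ r) dr`. -/
noncomputable def chiA (k : ℕ) (l : ℝ) : ℝ := ∫ r in Set.Ioi (0:ℝ), r ^ k * rexp (-r ^ 2 / 2 - l * r)

lemma chi_bound (l r : ℝ) (L : ℝ) (h : |l| ≤ L) :
    rexp (-r ^ 2 / 2 - l * r) ≤ rexp (L ^ 2) * rexp (-(1 / 4) * r ^ 2) := by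
  rw [← exp_add, exp_le_exp]
  have := abs_le.1 h
  nlinarith [sq_nonneg (r / 2 + l), sq_le_sq' this.1 this.2]

lemma integrable_chi_dom (k : ℕ) (L : ℝ) :
    Integrable fun r : ℝ => |r| ^ k * (rexp (L ^ 2) * rexp (-(1 / 4) * r ^ 2)) := by
  have h := (integrable_rpow_mul_exp_neg_mul_sq (b := 1 / 4) (by norm_num) (s := k)
    (by have : (0:ℝ) ≤ k := by positivity
        linarith)).norm.const_mul (rexp (L ^ 2))
  refine h.congr (Filter.Eventually.of_forall fun r => ?_)
  simp only [rpow_natCast, norm_mul, norm_pow, norm_eq_abs, abs_exp]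
  ring

lemma integrable_chi (k : ℕ) (l : ℝ) :
    Integrable fun r : ℝ => r ^ k * rexp (-r ^ 2 / 2 - l * r) := by
  refine (integrable_chi_dom k |l|).mono' (by fun_prop) (Filter.Eventually.of_forall fun r => ?_)
  rw [norm_mul, norm_pow, norm_eq_abs, norm_eq_abs, abs_exp]
  gcongr
  exact chi_bound l r _ le_rfl

lemma hasDerivAt_chiA (k : ℕ) (l : ℝ) : HasDerivAt (chiA k) (-chiA (k + 1) l) l := by
  have h := hasDerivAt_integral_of_dominated_loc_of_deriv_le (μ := volume.restrict (Set.Ioi (0:ℝ)))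
    (F := fun l r => r ^ k * rexp (-r ^ 2 / 2 - l * r))
    (F' := fun l r => -(r ^ (k + 1) * rexp (-r ^ 2 / 2 - l * r))) (x₀ := l)
    (s := Metric.ball l 1)
    (bound := fun r => |r| ^ (k + 1) * (rexp ((|l| + 1) ^ 2) * rexp (-(1 / 4) * r ^ 2)))
    (Metric.ball_mem_nhds l one_pos)
    (Filter.Eventually.of_forall fun l => by fun_prop)
    (integrable_chi k l).integrableOn (by fun_prop)
    (Filter.Eventually.of_forall fun r x hx => ?_)
    (integrable_chi_dom _ _).integrableOn
    (Filter.Eventually.of_forall fun r x hx => ?_)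
  · have := h.2
    rw [integral_neg] at this
    exact this
  · rw [norm_neg, norm_mul, norm_pow, norm_eq_abs, norm_eq_abs, abs_exp]
    gcongr
    refine chi_bound x r _ ?_
    have h1 : |x - l| < 1 := by simpa [Real.dist_eq] using hx
    have := abs_sub_abs_le_abs_sub x l
    linarith
  · have h1 : HasDerivAt (fun x : ℝ => -r ^ 2 / 2 - x * r) (-r) x := by
      simpa using ((hasDerivAt_id x).mul_const r).const_sub (-r ^ 2 / 2)
    exact (h1.exp.const_mul (r ^ k)).congr_deriv (by ring)

lemma chiA_pos (k : ℕ) (l : ℝ) : 0 < chiA k l := by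
  unfold chiA
  rw [setIntegral_pos_iff_support_of_nonneg_ae]
  · have : (Function.support fun r : ℝ => r ^ k * rexp (-r ^ 2 / 2 - l * r)) ∩ Set.Ioi 0
        = Set.Ioi 0 := by
      ext r
      simp only [Set.mem_inter_iff, Function.mem_support, Set.mem_Ioi, and_iff_right_iff_imp]
      intro hr; positivity
    rw [this]; simp
  · filter_upwards [ae_restrict_mem measurableSet_Ioi] with r hr
    have : 0 < r := hr
    simp only [Pi.zero_apply]; positivity
  · exact (integrable_chi k l).integrableOn

lemma tendsto_chi (k : ℕ) (l : ℝ) :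
    Filter.Tendsto (fun r : ℝ => r ^ k * rexp (-r ^ 2 / 2 - l * r)) Filter.atTop (nhds 0) := by
  have h := (Real.tendsto_pow_mul_exp_neg_atTop_nhds_zero k).const_mul (rexp ((|l| + 1) ^ 2))
  rw [mul_zero] at h
  refine tendsto_of_tendsto_of_tendsto_of_le_of_le' tendsto_const_nhds h ?_ ?_
  · filter_upwards [Filter.eventually_ge_atTop 0] with r hr
    positivity
  · filter_upwards [Filter.eventually_ge_atTop 0] with r hr
    rw [mul_left_comm, ← exp_add]
    gcongr
    nlinarith [sq_nonneg (r - (|l| + 1)), neg_abs_le l, abs_nonneg l]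

/-- Integration by parts. -/
lemma chiA_rec (k : ℕ) (l : ℝ) :
    chiA (k + 2) l = (k + 1) * chiA k l - l * chiA (k + 1) l := by
  have hd : ∀ r ∈ Set.Ici (0:ℝ), HasDerivAt (fun r : ℝ => r ^ (k + 1) * rexp (-r ^ 2 / 2 - l * r))
      ((k + 1) * (r ^ k * rexp (-r ^ 2 / 2 - l * r)) - l * (r ^ (k + 1) * rexp (-r ^ 2 / 2 - l * r))
        - r ^ (k + 2) * rexp (-r ^ 2 / 2 - l * r)) r := by
    intro r _
    have h1 : HasDerivAt (fun x : ℝ => -x ^ 2 / 2 - l * x) (-r - l) r := by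
      have := (((hasDerivAt_id r).fun_pow 2).fun_neg.div_const 2).sub ((hasDerivAt_id r).const_mul l)
      exact this.congr_deriv (by simp; ring)
    have h2 := (hasDerivAt_pow (k + 1) r).fun_mul h1.exp
    exact h2.congr_deriv (by push_cast; ring)
  have i0 := (integrable_chi k l).integrableOn (s := Set.Ioi 0)
  have i1 := (integrable_chi (k + 1) l).integrableOn (s := Set.Ioi 0)
  have i2 := (integrable_chi (k + 2) l).integrableOn (s := Set.Ioi 0)
  have j : IntegrableOn (fun r : ℝ => (k + 1) * (r ^ k * rexp (-r ^ 2 / 2 - l * r)) -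
      l * (r ^ (k + 1) * rexp (-r ^ 2 / 2 - l * r))) (Set.Ioi 0) :=
    (i0.const_mul _).sub (i1.const_mul _)
  have h := integral_Ioi_of_hasDerivAt_of_tendsto' hd (j.sub i2) (tendsto_chi (k + 1) l)
  rw [integral_sub j i2, integral_sub (i0.const_mul _) (i1.const_mul _),
    integral_const_mul, integral_const_mul] at h
  simp only [chiA]
  simp at h
  linarith

/-- Cauchy–Schwarz for moments. -/
lemma chiA_logconvex (k : ℕ) (l : ℝ) : chiA (k + 1) l ^ 2 ≤ chiA k l * chiA (k + 2) l := by
  have i0 := (integrable_chi k l).integrableOn (s := Set.Ioi 0)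
  have i1 := (integrable_chi (k + 1) l).integrableOn (s := Set.Ioi 0)
  have i2 := (integrable_chi (k + 2) l).integrableOn (s := Set.Ioi 0)
  have key : ∀ t : ℝ, 0 ≤ chiA (k + 2) l - 2 * t * chiA (k + 1) l + t ^ 2 * chiA k l := by
    intro t
    have : ∫ r in Set.Ioi (0:ℝ), (r ^ (k + 2) * rexp (-r ^ 2 / 2 - l * r) -
        2 * t * (r ^ (k + 1) * rexp (-r ^ 2 / 2 - l * r)) + t ^ 2 * (r ^ k * rexp (-r ^ 2 / 2 - l * r)))
        = chiA (k + 2) l - 2 * t * chiA (k + 1) l + t ^ 2 * chiA k l := by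
      have j : IntegrableOn (fun r : ℝ => r ^ (k + 2) * rexp (-r ^ 2 / 2 - l * r) -
          2 * t * (r ^ (k + 1) * rexp (-r ^ 2 / 2 - l * r))) (Set.Ioi 0) :=
        i2.sub (i1.const_mul _)
      rw [integral_add j (i0.const_mul _), integral_sub i2 (i1.const_mul _),
        integral_const_mul, integral_const_mul]
      rfl
    rw [← this]
    refine setIntegral_nonneg measurableSet_Ioi fun r hr => ?_
    have hr : 0 < r := hr
    have : 0 ≤ (r - t) ^ 2 * (r ^ k * rexp (-r ^ 2 / 2 - l * r)) := by positivity
    refine this.trans_eq (by ring)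
  have h0 := chiA_pos k l
  have h := key (chiA (k + 1) l / chiA k l)
  have : 0 ≤ (chiA (k + 2) l - 2 * (chiA (k + 1) l / chiA k l) * chiA (k + 1) l +
    (chiA (k + 1) l / chiA k l) ^ 2 * chiA k l) * chiA k l := by positivity
  have e : (chiA (k + 2) l - 2 * (chiA (k + 1) l / chiA k l) * chiA (k + 1) l +
    (chiA (k + 1) l / chiA k l) ^ 2 * chiA k l) * chiA k l = chiA k l * chiA (k + 2) l - chiA (k + 1) l ^ 2 := by
    field_simp; ring
  linarith

/-- With `ρ = A (k+1) / A k`: `ρ² + λρ ≤ k + 1`. -/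
lemma chiA_ratio_le (k : ℕ) (l : ℝ) :
    (chiA (k + 1) l / chiA k l) ^ 2 + l * (chiA (k + 1) l / chiA k l) ≤ k + 1 := by
  have h0 := chiA_pos k l
  have h1 := chiA_logconvex k l
  rw [chiA_rec] at h1
  rw [div_pow, ← mul_div_assoc, div_add_div _ _ (by positivity) (by positivity),
    div_le_iff₀ (by positivity)]
  nlinarith

/-- With `ρ = A (k+2) / A (k+1)`: `ρ² + λρ ≥ k + 1`. -/
lemma le_chiA_ratio (k : ℕ) (l : ℝ) :
    (k : ℝ) + 1 ≤ (chiA (k + 2) l / chiA (k + 1) l) ^ 2 + l * (chiA (k + 2) l / chiA (k + 1) l) := by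
  have h0 := chiA_pos (k + 1) l
  have h3 := chiA_pos (k + 2) l
  have h1 := chiA_logconvex k l
  have h2 := chiA_rec k l
  rw [div_pow, ← mul_div_assoc, div_add_div _ _ (by positivity) (by positivity),
    le_div_iff₀ (by positivity)]
  have : ((k:ℝ) + 1) * chiA (k + 1) l ^ 2 ≤ (chiA (k+2) l + l * chiA (k + 1) l) * chiA (k+2) l := by
    have e : chiA (k+2) l + l * chiA (k + 1) l = (k + 1) * chiA k l := by linarith
    rw [e, mul_assoc]; gcongr
  nlinarith

/-! ### Laplace transforms of Gaussian norms -/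

/-- Polar coordinates. -/
lemma integral_exp_l2_aux (κ : Type*) [Fintype κ] [Nonempty κ] :
    ∃ K : ℝ, ∀ μ : ℝ, ∫ g, rexp (μ * l2 g) ∂gm κ = K * chiA (Fintype.card κ - 1) (-μ) := by
  refine ⟨gc κ * (Fintype.card κ * (volume : Measure (EuclideanSpace ℝ κ)).real (Metric.ball 0 1)),
    fun μ => ?_⟩
  rw [integral_gm]
  have h1 : ∀ x : κ → ℝ, gc κ * rexp (-(∑ i, x i ^ 2) / 2) * rexp (μ * l2 x) =
      (fun y : EuclideanSpace ℝ κ => (fun t : ℝ => gc κ * rexp (-t ^ 2 / 2 - (-μ) * t)) ‖y‖)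
        (WithLp.toLp 2 x) := by
    intro x
    have : ‖(WithLp.toLp 2 x : EuclideanSpace ℝ κ)‖ = l2 x := by
      simp [EuclideanSpace.norm_eq, l2]
    simp only [this, l2_sq, mul_assoc, ← exp_add]
    congr 3; ring
  simp_rw [h1]
  rw [(PiLp.volume_preserving_toLp κ).integral_comp
    (MeasurableEquiv.toLp 2 (κ → ℝ)).measurableEmbedding
    (fun y : EuclideanSpace ℝ κ => (fun t : ℝ => gc κ * rexp (-t ^ 2 / 2 - (-μ) * t)) ‖y‖),
    integral_fun_norm_addHaar volume (fun t : ℝ => gc κ * rexp (-t ^ 2 / 2 - (-μ) * t))]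
  simp only [finrank_euclideanSpace, nsmul_eq_mul, smul_eq_mul, chiA]
  have : ∀ r : ℝ, r ^ (Fintype.card κ - 1) * (gc κ * rexp (-r ^ 2 / 2 - -μ * r)) =
      gc κ * (r ^ (Fintype.card κ - 1) * rexp (-r ^ 2 / 2 - -μ * r)) := fun r => by ring
  simp_rw [this]
  rw [integral_const_mul]
  ring

/-- The Laplace transform of the norm of a standard Gaussian vector, in polar coordinates. -/
lemma integral_exp_l2 (κ : Type*) [Fintype κ] [Nonempty κ] (μ : ℝ) :
    ∫ g, rexp (μ * l2 g) ∂gm κ = chiA (Fintype.card κ - 1) (-μ) / chiA (Fintype.card κ - 1) 0 := by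
  obtain ⟨K, hK⟩ := integral_exp_l2_aux κ
  have h0 := hK 0
  simp at h0
  have := chiA_pos (Fintype.card κ - 1) 0
  rw [hK μ, eq_div_iff this.ne', mul_right_comm, ← h0, one_mul]

/-- The comparison bound for `E exp(-λ σ_min)`, where `n + 1` and `s + 1` are the dimensions. -/
noncomputable def chiL (n s : ℕ) (l : ℝ) : ℝ :=
  rexp (-l ^ 2 / 2) * (chiA n l / chiA n 0) * (chiA s (-l) / chiA s 0)

lemma chiL_pos (n s : ℕ) (l : ℝ) : 0 < chiL n s l := by
  have := chiA_pos n l; have := chiA_pos n 0; have := chiA_pos s (-l); have := chiA_pos s 0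
  unfold chiL; positivity

lemma chiL_zero (n s : ℕ) : chiL n s 0 = 1 := by
  have := chiA_pos n 0; have := chiA_pos s 0
  unfold chiL; simp; field_simp

lemma hasDerivAt_chiL (n s : ℕ) (l : ℝ) : HasDerivAt (chiL n s)
    ((-l - chiA (n + 1) l / chiA n l + chiA (s + 1) (-l) / chiA s (-l)) * chiL n s l) l := by
  have h1 : HasDerivAt (fun l : ℝ => rexp (-l ^ 2 / 2)) (rexp (-l ^ 2 / 2) * (-l)) l := by
    have := (((hasDerivAt_id l).fun_pow 2).fun_neg.div_const 2).exp
    exact this.congr_deriv (by simp; ring)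
  have h2 := (hasDerivAt_chiA n l).div_const (chiA n 0)
  have h3 : HasDerivAt (fun l => chiA s (-l) / chiA s 0) (chiA (s + 1) (-l) / chiA s 0) l := by
    have := ((hasDerivAt_chiA s (-l)).comp l (hasDerivAt_neg l)).div_const (chiA s 0)
    exact this.congr_deriv (by ring)
  refine ((h1.fun_mul h2).fun_mul h3).congr_deriv ?_
  have := chiA_pos n l; have := chiA_pos n 0; have := chiA_pos s (-l); have := chiA_pos s 0
  unfold chiL
  field_simp
  ring

/-- `E(λ) = (√(λ²+4a) + √(λ²+4b))/2`; times its conjugate (difference instead of sum) it equals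
`a - b`. -/
noncomputable def chiE (a b l : ℝ) : ℝ := (√(l ^ 2 + 4 * a) + √(l ^ 2 + 4 * b)) / 2

/-- The left-hand side is the logarithmic derivative of `chiL (n + 1) s` (see `hasDerivAt_chiL`). The
bound follows by solving the quadratic inequalities for the two ratios of moments. -/
lemma chi_logDeriv_le (n s : ℕ) (l : ℝ) (hns : s + 1 < n + 1) :
    (-l - chiA (n + 2) l / chiA (n + 1) l + chiA (s + 1) (-l) / chiA s (-l)) ≤
      - (((n:ℝ) - s) / chiE (n + 1) (s + 1) l) := by
  have hns : s < n := by omega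
  have hns' : (s:ℝ) < n := by exact_mod_cast hns
  have hs0 : (0:ℝ) ≤ s := by positivity
  have h1 := le_chiA_ratio n l
  have h2 := chiA_ratio_le s (-l)
  have p1 : 0 < chiA (n + 2) l / chiA (n + 1) l := div_pos (chiA_pos _ _) (chiA_pos _ _)
  have p2 : 0 < chiA (s + 1) (-l) / chiA s (-l) := div_pos (chiA_pos _ _) (chiA_pos _ _)
  set x := chiA (n + 2) l / chiA (n + 1) l
  set y := chiA (s + 1) (-l) / chiA s (-l)
  have e1 := Real.sq_sqrt (show 0 ≤ l ^ 2 + 4 * ((n:ℝ) + 1) by positivity)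
  have e2 := Real.sq_sqrt (show 0 ≤ l ^ 2 + 4 * ((s:ℝ) + 1) by positivity)
  have q1 := Real.sqrt_pos.2 (show 0 < l ^ 2 + 4 * ((n:ℝ) + 1) by positivity)
  have q2 := Real.sqrt_pos.2 (show 0 < l ^ 2 + 4 * ((s:ℝ) + 1) by positivity)
  have b1 : √(l ^ 2 + 4 * ((n:ℝ) + 1)) ≤ 2 * x + l := by
    refine Real.sqrt_le_iff.2 ⟨?_, by nlinarith⟩
    by_contra hc
    push Not at hc
    nlinarith
  have b2 : 2 * y - l ≤ √(l ^ 2 + 4 * ((s:ℝ) + 1)) := Real.le_sqrt_of_sq_le (by nlinarith)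
  unfold chiE
  have : ((n:ℝ) - s) / ((√(l ^ 2 + 4 * ((n:ℝ) + 1)) + √(l ^ 2 + 4 * ((s:ℝ) + 1))) / 2) =
      (√(l ^ 2 + 4 * ((n:ℝ) + 1)) - √(l ^ 2 + 4 * ((s:ℝ) + 1))) / 2 := by
    rw [div_eq_iff (by positivity)]
    nlinarith
  rw [this]
  linarith

lemma hasDerivAt_chiE {a b : ℝ} (ha : 0 < a) (hb : 0 < b) (l : ℝ) :
    HasDerivAt (chiE a b) ((l / √(l ^ 2 + 4 * a) + l / √(l ^ 2 + 4 * b)) / 2) l := by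
  have h : ∀ a : ℝ, 0 < a → HasDerivAt (fun l : ℝ => √(l ^ 2 + 4 * a)) (l / √(l ^ 2 + 4 * a)) l := by
    intro a ha
    have := (((hasDerivAt_id l).fun_pow 2).add_const (4 * a)).sqrt (by simp; positivity)
    refine this.congr_deriv ?_
    have := Real.sqrt_pos.2 (show 0 < l ^ 2 + 4 * a by positivity)
    simp; field_simp
  exact ((h a ha).fun_add (h b hb)).div_const 2

lemma chiE_pos {a b : ℝ} (ha : 0 < a) (hb : 0 < b) (l : ℝ) : 0 < chiE a b l := by
  have := Real.sqrt_pos.2 (show 0 < l ^ 2 + 4 * a by positivity)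
  have := Real.sqrt_pos.2 (show 0 < l ^ 2 + 4 * b by positivity)
  unfold chiE; positivity

lemma chiE_deriv_le {a b : ℝ} (ha : 0 < a) (hb : 0 < b) (l : ℝ) :
    (l / √(l ^ 2 + 4 * a) + l / √(l ^ 2 + 4 * b)) / 2 ≤ 1 := by
  have h : ∀ a : ℝ, 0 < a → l / √(l ^ 2 + 4 * a) ≤ 1 := by
    intro a ha
    rw [div_le_one (Real.sqrt_pos.2 (by positivity))]
    exact Real.le_sqrt_of_sq_le (by linarith)
  linarith [h a ha, h b hb]

/-- `∫₀^∞ λ L(λ) dλ` is controlled by a supersolution `T = λE/(r-1) + E²/((r-1)(r-2))` of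
`(T L)' ≤ -λ L`, where `L = chiL (n + 1) s`, `E = chiE (n + 1) (s + 1)` and `r = n - s`. -/
lemma integral_chiL_le (n s : ℕ) (hns : s + 3 ≤ n) :
    ∫⁻ l in Set.Ioi (0:ℝ), ENNReal.ofReal (l * chiL (n + 1) s l) ≤
      ENNReal.ofReal ((√((n:ℝ) + 1) + √((s:ℝ) + 1)) ^ 2 / (((n:ℝ) - s - 1) * ((n:ℝ) - s - 2))) := by
  have hr : (3:ℝ) ≤ (n:ℝ) - s := by
    have : ((s + 3 : ℕ):ℝ) ≤ n := by exact_mod_cast hns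
    push_cast at this; linarith
  set r : ℝ := (n:ℝ) - s with hrdef
  have hn1 : (0:ℝ) < (n:ℝ) + 1 := by positivity
  have hs1 : (0:ℝ) < (s:ℝ) + 1 := by positivity
  set E := chiE ((n:ℝ) + 1) ((s:ℝ) + 1) with hE
  set T : ℝ → ℝ := fun l => l * E l / (r - 1) + E l ^ 2 / ((r - 1) * (r - 2)) with hT
  have r1 : 0 < r - 1 := by linarith
  have r2 : 0 < r - 2 := by linarith
  have hcont : Continuous fun l => l * chiL (n + 1) s l :=
    continuous_id.mul (continuous_iff_continuousAt.2 fun l => (hasDerivAt_chiL (n + 1) s l).continuousAt)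
  set Φ : ℝ → ℝ := fun x => T x * chiL (n + 1) s x + ∫ l in (0:ℝ)..x, l * chiL (n + 1) s l with hΦ
  have hd : ∀ x, HasDerivAt Φ (((E x + x * ((x / √(x ^ 2 + 4 * ((n:ℝ) + 1)) + x / √(x ^ 2 + 4 * ((s:ℝ) + 1))) / 2)) / (r - 1)
      + 2 * E x * ((x / √(x ^ 2 + 4 * ((n:ℝ) + 1)) + x / √(x ^ 2 + 4 * ((s:ℝ) + 1))) / 2) / ((r - 1) * (r - 2)))
       * chiL (n + 1) s x + T x * ((-x - chiA (n + 1 + 1) x / chiA (n + 1) x + chiA (s + 1) (-x) / chiA s (-x)) * chiL (n + 1) s x)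
       + x * chiL (n + 1) s x) x := by
    intro x
    have e := hasDerivAt_chiE hn1 hs1 x
    have t := (((hasDerivAt_id x).fun_mul e).div_const (r - 1)).fun_add ((e.fun_pow 2).div_const ((r - 1) * (r - 2)))
    have i := intervalIntegral.integral_hasDerivAt_right (hcont.intervalIntegrable 0 x)
      (hcont.stronglyMeasurableAtFilter _ _) hcont.continuousAt
    refine ((t.fun_mul (hasDerivAt_chiL (n + 1) s x)).fun_add i).congr_deriv ?_
    simp [hT, hE]
  have hanti : AntitoneOn Φ (Set.Ici 0) := by
    refine antitoneOn_of_deriv_nonpos (convex_Ici 0)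
      (fun x _ => (hd x).continuousAt.continuousWithinAt)
      (fun x _ => (hd x).differentiableAt.differentiableWithinAt) fun x hx => ?_
    rw [interior_Ici] at hx
    have hx : 0 < x := hx
    rw [(hd x).deriv]
    have hL := chiL_pos (n + 1) s x
    have hEx := chiE_pos hn1 hs1 x
    have hD := chi_logDeriv_le n s x (by omega)
    have hE' := chiE_deriv_le hn1 hs1 x
    set e' := (x / √(x ^ 2 + 4 * ((n:ℝ) + 1)) + x / √(x ^ 2 + 4 * ((s:ℝ) + 1))) / 2
    have hTx : 0 < T x := by simp only [hT, hE]; positivity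
    have k1 : (E x + x * e') / (r - 1) + 2 * E x * e' / ((r - 1) * (r - 2)) ≤
        (E x + x * 1) / (r - 1) + 2 * E x * 1 / ((r - 1) * (r - 2)) := by gcongr
    have k2 : T x * (-x - chiA (n + 1 + 1) x / chiA (n + 1) x + chiA (s + 1) (-x) / chiA s (-x)) ≤
        T x * (-(r / E x)) := by gcongr
    have k3 : (E x + x * 1) / (r - 1) + 2 * E x * 1 / ((r - 1) * (r - 2)) + T x * (-(r / E x)) + x = 0 := by
      have hEx : 0 < E x := hEx
      simp only [hT]; field_simp; ring
    have : ((E x + x * e') / (r - 1) + 2 * E x * e' / ((r - 1) * (r - 2)) +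
      T x * (-x - chiA (n + 1 + 1) x / chiA (n + 1) x + chiA (s + 1) (-x) / chiA s (-x)) + x) * chiL (n + 1) s x ≤ 0 :=
      mul_nonpos_of_nonpos_of_nonneg (by linarith) hL.le
    linarith
  have hΦ0 : Φ 0 = (√((n:ℝ) + 1) + √((s:ℝ) + 1)) ^ 2 / ((r - 1) * (r - 2)) := by
    simp only [hΦ, hT, hE, chiE, chiL_zero, intervalIntegral.integral_same]
    have h4 : ∀ a : ℝ, √(0 ^ 2 + 4 * a) = 2 * √a := by
      intro a
      rw [show (0:ℝ) ^ 2 + 4 * a = 2 ^ 2 * a by ring, Real.sqrt_mul (by norm_num), Real.sqrt_sq (by norm_num)]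
    rw [h4, h4]; ring
  have hb : ∀ x, 0 ≤ x → ∫ l in (0:ℝ)..x, l * chiL (n + 1) s l ≤ Φ 0 := by
    intro x hx
    have h1 := hanti (Set.mem_Ici.2 le_rfl) (Set.mem_Ici.2 hx) hx
    have : 0 ≤ T x * chiL (n + 1) s x := by
      have := chiL_pos (n + 1) s x
      have := chiE_pos hn1 hs1 x
      simp only [hT, hE]; positivity
    simp only [hΦ] at h1 ⊢
    linarith
  have hIntg : IntegrableOn (fun l => l * chiL (n + 1) s l) (Set.Ioi 0) := by
    refine integrableOn_Ioi_of_intervalIntegral_norm_bounded (Φ 0) 0 (b := fun x : ℝ => x)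
      (l := Filter.atTop) (fun x => (hcont.integrableOn_Icc).mono_set Set.Ioc_subset_Icc_self) Filter.tendsto_id ?_
    filter_upwards [Filter.eventually_ge_atTop 0] with x hx
    refine le_trans (le_of_eq ?_) (hb x hx)
    refine intervalIntegral.integral_congr fun l hl => ?_
    rw [Set.uIcc_of_le hx] at hl
    exact Real.norm_of_nonneg (mul_nonneg hl.1 (chiL_pos _ _ _).le)
  rw [← ofReal_integral_eq_lintegral_ofReal hIntg]
  · rw [← hΦ0]
    refine ENNReal.ofReal_le_ofReal ?_
    refine le_of_tendsto (intervalIntegral_tendsto_integral_Ioi 0 hIntg Filter.tendsto_id) ?_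
    filter_upwards [Filter.eventually_ge_atTop 0] with x hx using hb x hx
  · filter_upwards [ae_restrict_mem measurableSet_Ioi] with l hl
    exact mul_nonneg (le_of_lt hl) (chiL_pos _ _ _).le

/-- `E exp(λ‖g‖) ≤ exp(λ√n + λ²/2)` for a standard Gaussian vector of dimension `n = k + 1`. -/
lemma chiA_neg_le (k : ℕ) {l : ℝ} (hl : 0 ≤ l) :
    chiA k (-l) / chiA k 0 ≤ rexp (√((k:ℝ) + 1) * l + l ^ 2 / 2) := by
  have hd : ∀ x, HasDerivAt (fun x => chiA k (-x) * rexp (-(√((k:ℝ) + 1) * x + x ^ 2 / 2)))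
      ((chiA (k + 1) (-x) - (√((k:ℝ) + 1) + x) * chiA k (-x)) *
        rexp (-(√((k:ℝ) + 1) * x + x ^ 2 / 2))) x := by
    intro x
    have h1 := (hasDerivAt_chiA k (-x)).comp x (hasDerivAt_neg x)
    have h2 := (((hasDerivAt_id x).const_mul (√((k:ℝ) + 1))).fun_add
      (((hasDerivAt_id x).fun_pow 2).div_const 2)).fun_neg.exp
    refine (h1.fun_mul h2).congr_deriv ?_
    simp; ring
  have hanti : AntitoneOn (fun x => chiA k (-x) * rexp (-(√((k:ℝ) + 1) * x + x ^ 2 / 2))) (Set.Ici 0) := by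
    refine antitoneOn_of_deriv_nonpos (convex_Ici 0)
      (fun x _ => (hd x).continuousAt.continuousWithinAt)
      (fun x _ => (hd x).differentiableAt.differentiableWithinAt) fun x hx => ?_
    rw [interior_Ici] at hx
    have hx : 0 < x := hx
    rw [(hd x).deriv]
    refine mul_nonpos_of_nonpos_of_nonneg ?_ (exp_pos _).le
    have h2 := chiA_ratio_le k (-x)
    have hA := chiA_pos k (-x)
    have e := Real.sq_sqrt (show 0 ≤ (k:ℝ) + 1 by positivity)
    have q := Real.sqrt_pos.2 (show 0 < (k:ℝ) + 1 by positivity)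
    have p : 0 < chiA (k + 1) (-x) / chiA k (-x) := div_pos (chiA_pos _ _) hA
    have : chiA (k + 1) (-x) / chiA k (-x) ≤ √((k:ℝ) + 1) + x := by
      by_contra hc
      push Not at hc
      nlinarith
    rw [div_le_iff₀ hA] at this
    linarith
  have h := hanti (Set.mem_Ici.2 le_rfl) (Set.mem_Ici.2 hl) hl
  simp only [neg_zero, mul_zero] at h
  rw [div_le_iff₀ (chiA_pos _ _)]
  simp at h
  rw [← neg_add, exp_neg, mul_inv_le_iff₀ (exp_pos _), add_comm] at h
  linarith

/-! ### Second moments of extreme singular values -/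

section Sphere
variable {κ σ : Type*} [Fintype κ] [Fintype σ]

/-- The Euclidean unit sphere of `σ → ℝ`. -/
def usph (σ : Type*) [Fintype σ] : Set (σ → ℝ) := {u | ∑ i, u i ^ 2 = 1}

lemma isCompact_usph : IsCompact (usph σ) := by
  refine Metric.isCompact_of_isClosed_isBounded
    (isClosed_eq (by fun_prop) continuous_const) ?_
  refine (Metric.isBounded_closedBall (x := (0 : σ → ℝ)) (r := 1)).subset fun u hu => ?_
  rw [mem_closedBall_zero_iff, pi_norm_le_iff_of_nonneg zero_le_one]
  intro i
  have h1 : u i ^ 2 ≤ ∑ j, u j ^ 2 :=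
    Finset.single_le_sum (f := fun j => u j ^ 2) (fun j _ => sq_nonneg _) (Finset.mem_univ i)
  rw [show ∑ j, u j ^ 2 = 1 from hu] at h1
  rw [norm_eq_abs]
  exact abs_le_one_iff_mul_self_le_one.2 (by nlinarith)

lemma usph_nonempty [Nonempty σ] : (usph σ).Nonempty := by
  classical
  obtain ⟨i⟩ := ‹Nonempty σ›
  refine ⟨Pi.single i 1, ?_⟩
  simp [usph, Pi.single_apply]

lemma continuous_l2_rowc : Continuous fun p : (σ × κ → ℝ) × (σ → ℝ) => l2 (rowc p.1 p.2) := by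
  unfold l2 rowc; fun_prop

lemma continuous_l2_rowc_right (G : σ × κ → ℝ) : Continuous fun u : σ → ℝ => l2 (rowc G u) := by
  unfold l2 rowc; fun_prop

/-- The smallest singular value, as the minimum of `|Gᵀu|` over unit vectors `u`. -/
noncomputable def smin (G : σ × κ → ℝ) : ℝ := sInf ((fun u => l2 (rowc G u)) '' usph σ)

/-- The largest singular value, as the maximum of `|Gᵀu|` over unit vectors `u`. -/
noncomputable def smax (G : σ × κ → ℝ) : ℝ := sSup ((fun u => l2 (rowc G u)) '' usph σ)

lemma continuous_smin : Continuous (smin : (σ × κ → ℝ) → ℝ) :=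
  isCompact_usph.continuous_sInf (f := fun G u => l2 (rowc G u)) continuous_l2_rowc

lemma continuous_smax : Continuous (smax : (σ × κ → ℝ) → ℝ) :=
  isCompact_usph.continuous_sSup (f := fun G u => l2 (rowc G u)) continuous_l2_rowc

lemma isCompact_img (G : σ × κ → ℝ) : IsCompact ((fun u => l2 (rowc G u)) '' usph σ) :=
  isCompact_usph.image (continuous_l2_rowc_right G)

lemma smin_le (G : σ × κ → ℝ) {u : σ → ℝ} (hu : u ∈ usph σ) : smin G ≤ l2 (rowc G u) :=
  csInf_le (isCompact_img G).bddBelow ⟨u, hu, rfl⟩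

lemma le_smax (G : σ × κ → ℝ) {u : σ → ℝ} (hu : u ∈ usph σ) : l2 (rowc G u) ≤ smax G :=
  le_csSup (isCompact_img G).bddAbove ⟨u, hu, rfl⟩

lemma exists_smin [Nonempty σ] (G : σ × κ → ℝ) : ∃ u ∈ usph σ, l2 (rowc G u) = smin G := by
  obtain ⟨u, hu, h⟩ := (isCompact_img G).sInf_mem (usph_nonempty.image _)
  exact ⟨u, hu, h⟩

lemma exists_smax [Nonempty σ] (G : σ × κ → ℝ) : ∃ u ∈ usph σ, l2 (rowc G u) = smax G := by
  obtain ⟨u, hu, h⟩ := (isCompact_img G).sSup_mem (usph_nonempty.image _)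
  exact ⟨u, hu, h⟩

lemma smin_nonneg [Nonempty σ] (G : σ × κ → ℝ) : 0 ≤ smin G := by
  obtain ⟨u, _, h⟩ := exists_smin G
  rw [← h]; exact l2_nonneg _

lemma smax_nonneg [Nonempty σ] (G : σ × κ → ℝ) : 0 ≤ smax G := by
  obtain ⟨u, _, h⟩ := exists_smax G
  rw [← h]; exact l2_nonneg _

lemma integrable_exp_l2_rowc (μ : ℝ) {w : σ → ℝ} (hw : w ∈ usph σ) :
    Integrable (fun G => rexp (μ * l2 (rowc (κ := κ) G w))) (gm (σ × κ)) := by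
  have hc : Continuous fun G : σ × κ → ℝ => rexp (μ * l2 (rowc G w)) := by
    have := continuous_l2.comp (continuous_rowc (κ := κ) w)
    simp only [Function.comp_def] at this
    fun_prop
  refine integrable_gm_of_bound (A := 1) (C := |μ| * (Fintype.card κ * Fintype.card σ)) hc fun G => ?_
  rw [abs_exp, one_mul, exp_le_exp]
  have h1 : ‖rowc G w‖ ≤ Fintype.card σ * ‖G‖ := by
    refine (pi_norm_le_iff_of_nonneg (by positivity)).2 fun k => ?_
    unfold rowc
    refine (norm_sum_le _ _).trans ?_
    calc ∑ j, ‖w j * G (j, k)‖ ≤ ∑ _j : σ, ‖G‖ := by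
          refine Finset.sum_le_sum fun j _ => ?_
          rw [norm_mul]
          have h2 : ‖w j‖ ≤ 1 := by
            have h1 : w j ^ 2 ≤ ∑ l, w l ^ 2 :=
              Finset.single_le_sum (f := fun l => w l ^ 2) (fun l _ => sq_nonneg _) (Finset.mem_univ j)
            rw [show ∑ l, w l ^ 2 = 1 from hw] at h1
            rw [norm_eq_abs]
            exact abs_le_one_iff_mul_self_le_one.2 (by nlinarith)
          calc _ ≤ 1 * ‖G‖ := by gcongr; exact norm_le_pi_norm G _
            _ = _ := one_mul _
      _ = _ := by simp
  calc μ * l2 (rowc G w) ≤ |μ| * l2 (rowc G w) := by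
        gcongr; exacts [l2_nonneg _, le_abs_self μ]
    _ ≤ |μ| * (Fintype.card κ * (Fintype.card σ * ‖G‖)) := by
        gcongr; exact (l2_le_card_mul_norm _).trans (by gcongr)
    _ = _ := by ring

/-- Gordon-type comparison for exponentials, over the whole unit sphere. -/
lemma comparison_sphere [Nonempty σ] (μ : ℝ) :
    ∫⁻ G, ⨆ u : usph σ, ENNReal.ofReal (rexp (μ * l2 (rowc (κ := κ) G u))) ∂gm (σ × κ) ≤
      ENNReal.ofReal (rexp (-μ ^ 2 / 2) * (∫ g, rexp (μ * l2 g) ∂gm κ) *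
        ∫ h, rexp (|μ| * l2 h) ∂gm σ) := by
  classical
  have : Nonempty (usph σ) := usph_nonempty.to_subtype
  set v := TopologicalSpace.denseSeq (usph σ) with hv
  have hc : ∀ w : σ → ℝ, Continuous fun G : σ × κ → ℝ => rexp (μ * l2 (rowc G w)) := by
    intro w
    have := continuous_l2.comp (continuous_rowc (κ := κ) w)
    simp only [Function.comp_def] at this
    fun_prop
  set F : ℕ → (σ × κ → ℝ) → ℝ := fun N G => Finset.univ.sup' Finset.univ_nonempty
    (fun i : Fin (N + 1) => rexp (μ * l2 (rowc (κ := κ) G (v i)))) with hF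
  have hFc : ∀ N, Continuous (F N) := fun N =>
    Continuous.finset_sup'_apply _ fun i _ => hc _
  have hF0 : ∀ N G, 0 ≤ F N G := fun N G =>
    (exp_pos _).le.trans (Finset.le_sup' (fun i : Fin (N + 1) => rexp (μ * l2 (rowc (κ := κ) G (v i))))
      (Finset.mem_univ 0))
  have hFi : ∀ N, Integrable (F N) (gm (σ × κ)) := by
    intro N
    have hi : ∀ i : Fin (N + 1), Integrable (fun G => rexp (μ * l2 (rowc (κ := κ) G (v i)))) (gm (σ × κ)) :=
      fun i => integrable_exp_l2_rowc μ (v i).2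
    refine (integrable_finsetSum Finset.univ fun i _ => hi i).mono' (hFc N).aestronglyMeasurable
      (Filter.Eventually.of_forall fun G => ?_)
    rw [Real.norm_of_nonneg (hF0 N G)]
    refine Finset.sup'_le _ _ fun i hi => ?_
    exact Finset.single_le_sum (f := fun i : Fin (N + 1) => rexp (μ * l2 (rowc (κ := κ) G (v i))))
      (fun _ _ => (exp_pos _).le) hi
  have hle : ∀ G : σ × κ → ℝ, ⨆ u : usph σ, ENNReal.ofReal (rexp (μ * l2 (rowc (κ := κ) G u))) ≤
      ⨆ N, ENNReal.ofReal (F N G) := by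
    intro G
    refine iSup_le fun u => ?_
    refine (TopologicalSpace.denseRange_denseSeq (usph σ)).induction_on
      (p := fun u : usph σ => ENNReal.ofReal (rexp (μ * l2 (rowc (κ := κ) G u))) ≤
      ⨆ N, ENNReal.ofReal (F N G)) u ?_ ?_
    · refine isClosed_le ?_ continuous_const
      refine ENNReal.continuous_ofReal.comp ?_
      have : Continuous fun u : usph σ => l2 (rowc G (u : σ → ℝ)) :=
        (continuous_l2_rowc_right G).comp continuous_subtype_val
      fun_prop
    · intro N
      refine le_trans (ENNReal.ofReal_le_ofReal ?_) (le_iSup (fun N => ENNReal.ofReal (F N G)) N)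
      have := Finset.le_sup' (fun i : Fin (N + 1) => rexp (μ * l2 (rowc (κ := κ) G (v i))))
        (Finset.mem_univ (Fin.last N))
      simpa [hv] using this
  refine (lintegral_mono hle).trans ?_
  rw [lintegral_iSup (f := fun N G => ENNReal.ofReal (F N G)) (fun N => (hFc N).measurable.ennreal_ofReal)]
  · refine iSup_le fun N => ?_
    rw [← ofReal_integral_eq_lintegral_ofReal (hFi N) (Filter.Eventually.of_forall (hF0 N))]
    refine ENNReal.ofReal_le_ofReal ?_
    have := comparison_real (κ := κ) (U := Fin (N + 1)) (fun i => (v i : σ → ℝ)) (fun i => (v i).2) μ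
    rw [mul_assoc, neg_div, Real.exp_neg, ← div_eq_inv_mul, le_div_iff₀' (exp_pos _)]
    exact this
  · intro N N' h G
    refine ENNReal.ofReal_le_ofReal (Finset.sup'_le _ _ fun i _ => ?_)
    exact Finset.le_sup' (fun i : Fin (N' + 1) => rexp (μ * l2 (rowc (κ := κ) G (v i))))
        (Finset.mem_univ (Fin.castLE (by omega) i))

/-- Integrate the comparison at `μ = -λ` against `λ dλ`, using `1/t² = ∫₀^∞ λ e^{-λt} dλ`. -/
lemma lintegral_smin_inv_sq {n s : ℕ} (hκ : Fintype.card κ = n + 2) (hσ : Fintype.card σ = s + 1)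
    (hns : s + 3 ≤ n) {ε : ℝ} (hε : 0 < ε) :
    ∫⁻ G, ENNReal.ofReal (1 / (smin G ^ 2 + ε)) ∂gm (σ × κ) ≤
      ENNReal.ofReal ((√((n:ℝ) + 1) + √((s:ℝ) + 1)) ^ 2 / (((n:ℝ) - s - 1) * ((n:ℝ) - s - 2))) := by
  have : Nonempty σ := Fintype.card_pos_iff.1 (by omega)
  have : Nonempty κ := Fintype.card_pos_iff.1 (by omega)
  refine le_trans ?_ (integral_chiL_le n s hns)
  have hmeas := (continuous_smin (κ := κ) (σ := σ)).measurable
  have h1 : ∀ G : σ × κ → ℝ, ENNReal.ofReal (1 / (smin G ^ 2 + ε)) ≤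
      ∫⁻ l in Set.Ioi (0:ℝ), ENNReal.ofReal (l * rexp (-l * smin G)) := by
    intro G
    set t := √(smin G ^ 2 + ε) with ht
    have ht0 : 0 < t := Real.sqrt_pos.2 (by positivity)
    have ht2 : t ^ 2 = smin G ^ 2 + ε := Real.sq_sqrt (by positivity)
    have hts : smin G ≤ t := Real.le_sqrt_of_sq_le (by linarith)
    have hg := Real.integral_rpow_mul_exp_neg_mul_Ioi (a := 2) (r := t) (by norm_num) ht0
    have hi : IntegrableOn (fun l : ℝ => l * rexp (-l * t)) (Set.Ioi 0) := by
      by_contra hc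
      have h0 := integral_undef hc
      have e : ∫ l in Set.Ioi (0:ℝ), l * rexp (-l * t) = ∫ l in Set.Ioi (0:ℝ), l ^ ((2:ℝ) - 1) * rexp (-(t * l)) := by
        congr 1; ext l
        rw [show (2:ℝ) - 1 = 1 by norm_num, rpow_one, neg_mul, mul_comm l t]
      rw [e, hg] at h0
      have : 0 < (1 / t) ^ (2:ℝ) * Real.Gamma 2 := by positivity
      linarith
    have he : 1 / (smin G ^ 2 + ε) = ∫ l in Set.Ioi (0:ℝ), l * rexp (-l * t) := by
      have e : ∫ l in Set.Ioi (0:ℝ), l * rexp (-l * t) = ∫ l in Set.Ioi (0:ℝ), l ^ ((2:ℝ) - 1) * rexp (-(t * l)) := by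
        congr 1; ext l
        rw [show (2:ℝ) - 1 = 1 by norm_num, rpow_one, neg_mul, mul_comm l t]
      rw [e, hg, ← ht2, Real.Gamma_two, mul_one]
      norm_cast
      rw [one_div, one_div, inv_pow]
    rw [he, ofReal_integral_eq_lintegral_ofReal hi]
    · refine lintegral_mono_ae ?_
      filter_upwards [ae_restrict_mem measurableSet_Ioi] with l hl
      have hl : 0 < l := hl
      refine ENNReal.ofReal_le_ofReal ?_
      gcongr l * rexp ?_
      nlinarith
    · filter_upwards [ae_restrict_mem measurableSet_Ioi] with l hl
      have hl : 0 < l := hl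
      simp only [Pi.zero_apply]; positivity
  refine (lintegral_mono h1).trans ?_
  rw [lintegral_lintegral_swap]
  · refine lintegral_mono_ae ?_
    filter_upwards [ae_restrict_mem measurableSet_Ioi] with l hl
    have hl : 0 < l := hl
    have h2 : ∀ G : σ × κ → ℝ, ENNReal.ofReal (l * rexp (-l * smin G)) ≤
        ENNReal.ofReal l * ⨆ u : usph σ, ENNReal.ofReal (rexp (-l * l2 (rowc (κ := κ) G u))) := by
      intro G
      rw [ENNReal.ofReal_mul hl.le]
      gcongr
      obtain ⟨u, hu, h⟩ := exists_smin G
      rw [← h]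
      exact le_iSup (fun u : usph σ => ENNReal.ofReal (rexp (-l * l2 (rowc (κ := κ) G u)))) ⟨u, hu⟩
    refine (lintegral_mono h2).trans ?_
    rw [lintegral_const_mul' _ _ ENNReal.ofReal_ne_top, ENNReal.ofReal_mul hl.le]
    gcongr
    refine (comparison_sphere (-l)).trans ?_
    rw [integral_exp_l2, integral_exp_l2, hκ, hσ, abs_neg, abs_of_pos hl, neg_neg, neg_sq]
    exact le_rfl
  · refine Measurable.aemeasurable ?_
    refine ENNReal.measurable_ofReal.comp ?_
    exact measurable_snd.mul (Real.measurable_exp.comp (measurable_snd.neg.mul (hmeas.comp measurable_fst)))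

/-- The comparison at `μ = 2/c`, together with `x² ≤ c² e^{2x/c - 2}`. -/
lemma lintegral_smax_sq {n s : ℕ} (hκ : Fintype.card κ = n + 1) (hσ : Fintype.card σ = s + 1)
    {c : ℝ} (hc : c = √((n:ℝ) + 1) + √((s:ℝ) + 1)) :
    ∫⁻ G, ENNReal.ofReal (smax G ^ 2) ∂gm (σ × κ) ≤ ENNReal.ofReal ((c + 1) ^ 2) := by
  have : Nonempty σ := Fintype.card_pos_iff.1 (by omega)
  have : Nonempty κ := Fintype.card_pos_iff.1 (by omega)
  have hc2 : 2 ≤ c := by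
    have h1 : 1 ≤ √((n:ℝ) + 1) := Real.one_le_sqrt.2 (by linarith [show (0:ℝ) ≤ n by positivity])
    have h2 : 1 ≤ √((s:ℝ) + 1) := Real.one_le_sqrt.2 (by linarith [show (0:ℝ) ≤ s by positivity])
    linarith
  set l := 2 / c with hl
  have hl0 : 0 < l := by positivity
  have h2 : ∀ G : σ × κ → ℝ, ENNReal.ofReal (smax G ^ 2) ≤
      ENNReal.ofReal (c ^ 2 * rexp (-2)) * ⨆ u : usph σ, ENNReal.ofReal (rexp (l * l2 (rowc (κ := κ) G u))) := by
    intro G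
    obtain ⟨u, hu, h⟩ := exists_smax G
    refine le_trans ?_ (mul_le_mul_right (le_iSup (fun u : usph σ => ENNReal.ofReal (rexp (l * l2 (rowc (κ := κ) G u)))) ⟨u, hu⟩) _)
    rw [← ENNReal.ofReal_mul (by positivity), h]
    refine ENNReal.ofReal_le_ofReal ?_
    have h0 := smax_nonneg G
    have h3 : smax G / c ≤ rexp (smax G / c - 1) := by
      have := Real.add_one_le_exp (smax G / c - 1); linarith
    have h4 : (smax G / c) ^ 2 ≤ rexp (smax G / c - 1) ^ 2 := by gcongr
    rw [← Real.exp_nat_mul, div_pow, div_le_iff₀ (by positivity)] at h4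
    refine h4.trans (le_of_eq ?_)
    rw [mul_assoc, ← exp_add, mul_comm]
    congr 2
    simp only [hl]; push_cast; ring
  refine (lintegral_mono h2).trans ?_
  rw [lintegral_const_mul' _ _ ENNReal.ofReal_ne_top]
  refine (mul_le_mul_right (comparison_sphere l) _).trans ?_
  rw [← ENNReal.ofReal_mul (by positivity)]
  refine ENNReal.ofReal_le_ofReal ?_
  rw [integral_exp_l2, integral_exp_l2, hκ, hσ, abs_of_pos hl0]
  have a1 := chiA_neg_le n hl0.le
  have a2 := chiA_neg_le s hl0.le
  have p1 : 0 ≤ chiA n (-l) / chiA n 0 := (div_pos (chiA_pos _ _) (chiA_pos _ _)).le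
  have p2 : 0 ≤ chiA s (-l) / chiA s 0 := (div_pos (chiA_pos _ _) (chiA_pos _ _)).le
  simp only [Nat.add_sub_cancel]
  calc _ ≤ c ^ 2 * rexp (-2) * (rexp (-l ^ 2 / 2) * rexp (√((n:ℝ) + 1) * l + l ^ 2 / 2) *
        rexp (√((s:ℝ) + 1) * l + l ^ 2 / 2)) := by gcongr
    _ = c ^ 2 * rexp (1 / c ^ 2) ^ 2 := by
      rw [mul_assoc, ← exp_add, ← exp_add, ← exp_add, ← exp_nat_mul]
      congr 2
      have : √((n:ℝ) + 1) * l + √((s:ℝ) + 1) * l = 2 := by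
        rw [← add_mul, ← hc, hl]; field_simp
      have e2 : l ^ 2 / 2 = 2 * (1 / c ^ 2) := by rw [hl]; field_simp
      push_cast
      rw [neg_div]
      linarith
    _ ≤ c ^ 2 * (1 + 1 / c) ^ 2 := by
      gcongr
      have hx : 1 / c ^ 2 < 1 := by rw [div_lt_one (by positivity)]; nlinarith
      have h5 := Real.add_one_le_exp (-(1 / c ^ 2))
      rw [Real.exp_neg] at h5
      have h6 : rexp (1 / c ^ 2) ≤ (-(1 / c ^ 2) + 1)⁻¹ := by
        rw [le_inv_comm₀ (exp_pos _) (by linarith)]; exact h5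
      refine h6.trans ?_
      rw [inv_le_iff_one_le_mul₀ (by linarith)]
      have : (1 + 1 / c) * (-(1 / c ^ 2) + 1) - 1 = (c ^ 2 - c - 1) / c ^ 3 := by field_simp; ring
      have : 0 ≤ (c ^ 2 - c - 1) / c ^ 3 := div_nonneg (by nlinarith) (by positivity)
      linarith
    _ = (c + 1) ^ 2 := by field_simp
end Sphere

/-! ### Averaging over the orthogonal group -/

section Orth
variable {κ σ : Type*} [Fintype κ] [Fintype σ] [DecidableEq σ]

lemma orth_entry_sq (Q : Matrix σ σ ℝ) (hQ : Q ∈ Matrix.orthogonalGroup σ ℝ) (i j : σ) : |Q i j| ≤ 1 := by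
  have h : (Q * Qᵀ) i i = 1 := by
    rw [(Matrix.mem_orthogonalGroup_iff σ ℝ).1 hQ, Matrix.one_apply_eq]
  rw [Matrix.mul_apply] at h
  have h1 : Q i j * Q i j ≤ ∑ k, Q i k * Q i k :=
    Finset.single_le_sum (f := fun k => Q i k * Q i k) (fun k _ => mul_self_nonneg _) (Finset.mem_univ j)
  simp only [Matrix.transpose_apply] at h
  rw [h] at h1
  exact abs_le_one_iff_mul_self_le_one.2 h1

lemma isCompact_orth :
    IsCompact {Q : σ → σ → ℝ | Matrix.of Q ∈ Matrix.orthogonalGroup σ ℝ} := by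
  refine Metric.isCompact_of_isClosed_isBounded ?_ ?_
  · simp only [Matrix.mem_orthogonalGroup_iff]
    refine isClosed_eq ?_ continuous_const
    refine continuous_matrix fun i j => ?_
    simp only [Matrix.mul_apply, Matrix.transpose_apply, Matrix.of_apply]
    fun_prop
  · refine (Metric.isBounded_closedBall (x := (0 : σ → σ → ℝ)) (r := 1)).subset ?_
    intro Q hQ
    rw [mem_closedBall_zero_iff, pi_norm_le_iff_of_nonneg zero_le_one]
    intro i
    rw [pi_norm_le_iff_of_nonneg zero_le_one]
    intro j
    exact orth_entry_sq _ hQ i j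

/-- Haar probability measure on the orthogonal group, as a measure on `σ → σ → ℝ`. -/
lemma exists_orth_measure (σ : Type*) [Fintype σ] [DecidableEq σ] :
    ∃ ν : Measure (σ → σ → ℝ), IsProbabilityMeasure ν ∧
    (∀ᵐ Q ∂ν, Matrix.of Q ∈ Matrix.orthogonalGroup σ ℝ) ∧
    ∀ R ∈ Matrix.orthogonalGroup σ ℝ, MeasurePreserving
      (fun Q : σ → σ → ℝ => fun i j => ∑ k, R i k * Q k j) ν ν := by
  let : MeasurableSpace (Matrix.orthogonalGroup σ ℝ) := borel _
  have : BorelSpace (Matrix.orthogonalGroup σ ℝ) := ⟨rfl⟩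
  have hco : IsCompact (Matrix.orthogonalGroup σ ℝ : Set (Matrix σ σ ℝ)) := by
    have h1 : Continuous fun Q : σ → σ → ℝ => (Matrix.of Q : Matrix σ σ ℝ) :=
      continuous_matrix fun i j => by simp only [Matrix.of_apply]; fun_prop
    have h := (isCompact_orth (σ := σ)).image h1
    convert h using 1
    ext Q
    exact ⟨fun h => ⟨fun i j => Q i j, h, rfl⟩, fun ⟨Q', h, e⟩ => e ▸ h⟩
  have : CompactSpace (Matrix.orthogonalGroup σ ℝ) := isCompact_iff_compactSpace.1 hco
  set ν0 := Measure.haarMeasure (⊤ : TopologicalSpace.PositiveCompacts (Matrix.orthogonalGroup σ ℝ))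
  have : IsProbabilityMeasure ν0 := ⟨by
    have := Measure.haarMeasure_self (K₀ := (⊤ : TopologicalSpace.PositiveCompacts (Matrix.orthogonalGroup σ ℝ)))
    simpa using this⟩
  set ι : Matrix.orthogonalGroup σ ℝ → (σ → σ → ℝ) := fun Q => fun i j => Q.1 i j
  have hι : Measurable ι := by
    refine Continuous.measurable ?_
    refine continuous_pi fun i => continuous_pi fun j => ?_
    exact continuous_subtype_val.matrix_elem i j
  have hcl := (isCompact_orth (σ := σ)).isClosed.measurableSet
  refine ⟨ν0.map ι, Measure.isProbabilityMeasure_map hι.aemeasurable, ?_, fun R hR => ⟨?_, ?_⟩⟩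
  · rw [ae_map_iff hι.aemeasurable hcl]
    exact Filter.Eventually.of_forall fun Q => Q.2
  · fun_prop
  · rw [Measure.map_map (by fun_prop) hι]
    have h := map_mul_left_eq_self ν0 (⟨R, hR⟩ : Matrix.orthogonalGroup σ ℝ)
    conv_rhs => rw [← h]
    rw [Measure.map_map hι (measurable_const_mul _)]
    rfl

/-- The left action `X ↦ QᵀX` on matrices given as functions on pairs. -/
def oact (Q : σ → σ → ℝ) (X : σ × κ → ℝ) : σ × κ → ℝ := fun p => ∑ j, Q j p.1 * X (j, p.2)

lemma continuous_oact : Continuous fun p : (σ × κ → ℝ) × (σ → σ → ℝ) => oact p.2 p.1 := by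
  unfold oact; fun_prop

lemma orth_mul_transpose {Q : σ → σ → ℝ} (hQ : Matrix.of Q ∈ Matrix.orthogonalGroup σ ℝ) (i j : σ) :
    ∑ k, Q i k * Q j k = if i = j then 1 else 0 := by
  have h := congrFun (congrFun ((Matrix.mem_orthogonalGroup_iff σ ℝ).1 hQ) i) j
  simpa [Matrix.mul_apply, Matrix.one_apply] using h

lemma orth_transpose_mul {Q : σ → σ → ℝ} (hQ : Matrix.of Q ∈ Matrix.orthogonalGroup σ ℝ) (i j : σ) :
    ∑ k, Q k i * Q k j = if i = j then 1 else 0 := by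
  have h := congrFun (congrFun ((Matrix.mem_orthogonalGroup_iff' σ ℝ).1 hQ) i) j
  simpa [Matrix.mul_apply, Matrix.one_apply] using h

/-- Orthonormal columns preserve the sum of squares. -/
lemma sum_sq_orth {Q : σ → σ → ℝ} (h : ∀ i j, ∑ k, Q k i * Q k j = if i = j then 1 else 0)
    (u : σ → ℝ) : ∑ k, (∑ j, Q k j * u j) ^ 2 = ∑ i, u i ^ 2 := by
  have : ∀ k, (∑ j, Q k j * u j) ^ 2 = ∑ i, ∑ j, u i * u j * (Q k i * Q k j) := by
    intro k
    rw [sq, Finset.sum_mul_sum]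
    exact Finset.sum_congr rfl fun i _ => Finset.sum_congr rfl fun j _ => by ring
  simp_rw [this]
  rw [Finset.sum_comm]
  refine Finset.sum_congr rfl fun i _ => ?_
  rw [Finset.sum_comm]
  simp_rw [← Finset.mul_sum, h]
  simp [sq]

lemma sum_sq_oact {Q : σ → σ → ℝ} (hQ : Matrix.of Q ∈ Matrix.orthogonalGroup σ ℝ) (X : σ × κ → ℝ) :
    ∑ p, oact Q X p ^ 2 = ∑ p, X p ^ 2 := by
  rw [Fintype.sum_prod_type_right, Fintype.sum_prod_type_right]
  refine Finset.sum_congr rfl fun k _ => ?_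
  exact sum_sq_orth (Q := fun i j => Q j i) (fun i j => orth_mul_transpose hQ i j) fun i => X (i, k)

lemma rowc_oact (Q : σ → σ → ℝ) (X : σ × κ → ℝ) (u : σ → ℝ) :
    rowc (oact Q X) u = rowc X (fun j => ∑ i, Q j i * u i) := by
  ext k
  simp only [rowc, oact, Finset.mul_sum, Finset.sum_mul]
  rw [Finset.sum_comm]
  exact Finset.sum_congr rfl fun i _ => Finset.sum_congr rfl fun j _ => by ring

lemma orth_mem_usph {Q : σ → σ → ℝ} (hQ : Matrix.of Q ∈ Matrix.orthogonalGroup σ ℝ) {u : σ → ℝ}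
    (hu : u ∈ usph σ) : (fun j => ∑ i, Q j i * u i) ∈ usph σ := by
  have := sum_sq_orth (fun i j => orth_transpose_mul hQ i j) u
  exact this.trans hu

lemma orth_transpose_mem_usph {Q : σ → σ → ℝ} (hQ : Matrix.of Q ∈ Matrix.orthogonalGroup σ ℝ)
    {u : σ → ℝ} (hu : u ∈ usph σ) : (fun j => ∑ i, Q i j * u i) ∈ usph σ := by
  have := sum_sq_orth (Q := fun i j => Q j i) (fun i j => orth_mul_transpose hQ i j) u
  exact this.trans hu

lemma orth_cancel {Q : σ → σ → ℝ} (hQ : Matrix.of Q ∈ Matrix.orthogonalGroup σ ℝ) (u : σ → ℝ) :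
    (fun j => ∑ i, Q j i * ∑ l, Q l i * u l) = u := by
  ext j
  simp only [Finset.mul_sum]
  rw [Finset.sum_comm]
  simp_rw [← mul_assoc, ← Finset.sum_mul, orth_mul_transpose hQ]
  simp

lemma smin_oact [Nonempty σ] {Q : σ → σ → ℝ} (hQ : Matrix.of Q ∈ Matrix.orthogonalGroup σ ℝ) (X : σ × κ → ℝ) :
    smin (oact Q X) = smin X := by
  refine le_antisymm ?_ ?_
  · obtain ⟨u, hu, h⟩ := exists_smin X
    have := smin_le (oact Q X) (orth_transpose_mem_usph hQ hu)
    rwa [rowc_oact, orth_cancel hQ, h] at this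
  · obtain ⟨u, hu, h⟩ := exists_smin (oact Q X)
    rw [← h, rowc_oact]
    exact smin_le X (orth_mem_usph hQ hu)

/-- The standard Gaussian measure is invariant under left multiplication by orthogonal matrices. -/
lemma integral_oact {Q : σ → σ → ℝ} (hQ : Matrix.of Q ∈ Matrix.orthogonalGroup σ ℝ)
    (K : (σ × κ → ℝ) → ℝ) : ∫ X, K (oact Q X) ∂gm (σ × κ) = ∫ X, K X ∂gm (σ × κ) := by
  set L : EuclideanSpace ℝ (σ × κ) →ₗᵢ[ℝ] EuclideanSpace ℝ (σ × κ) :=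
    { toFun := fun x => WithLp.toLp 2 (oact Q x.ofLp)
      map_add' := by
        intro x y
        ext p
        simp [oact, mul_add, Finset.sum_add_distrib]
      map_smul' := by
        intro c x
        ext p
        simp [oact, Finset.mul_sum, mul_left_comm]
      norm_map' := by
        intro x
        simp [EuclideanSpace.norm_eq, sum_sq_oact hQ] } with hL
  set e := L.toLinearIsometryEquiv rfl with he
  have hv : MeasurePreserving (fun X : σ × κ → ℝ => oact Q X) volume volume :=
    ((PiLp.volume_preserving_ofLp (σ × κ)).comp e.measurePreserving).comp (PiLp.volume_preserving_toLp (σ × κ))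
  have hemb : MeasurableEmbedding (fun X : σ × κ → ℝ => oact Q X) :=
    ((MeasurableEquiv.toLp 2 (σ × κ → ℝ)).symm.measurableEmbedding.comp
      e.toHomeomorph.measurableEmbedding).comp (MeasurableEquiv.toLp 2 (σ × κ → ℝ)).measurableEmbedding
  rw [integral_gm, integral_gm, ← hv.integral_comp hemb (fun X => gc (σ × κ) * rexp (-(∑ i, X i ^ 2) / 2) * K X)]
  simp_rw [sum_sq_oact hQ]

lemma norm_oact_le {Q : σ → σ → ℝ} (hQ : Matrix.of Q ∈ Matrix.orthogonalGroup σ ℝ) (X : σ × κ → ℝ) :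
    ‖oact Q X‖ ≤ Fintype.card σ * ‖X‖ := by
  refine (pi_norm_le_iff_of_nonneg (by positivity)).2 fun p => ?_
  unfold oact
  refine (norm_sum_le _ _).trans ?_
  calc ∑ j, ‖Q j p.1 * X (j, p.2)‖ ≤ ∑ _j : σ, ‖X‖ := by
        refine Finset.sum_le_sum fun j _ => ?_
        rw [norm_mul]
        calc _ ≤ 1 * ‖X‖ := by
              gcongr
              · exact orth_entry_sq _ hQ j p.1
              · exact norm_le_pi_norm X _
          _ = _ := one_mul _
    _ = _ := by simp

/-- Nonnegativity of a Gaussian integral follows from nonnegativity of the orthogonal averages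
of the integrand. -/
lemma integral_nonneg_of_orth_avg {ν : Measure (σ → σ → ℝ)} [IsProbabilityMeasure ν]
    (hν : ∀ᵐ Q ∂ν, Matrix.of Q ∈ Matrix.orthogonalGroup σ ℝ) {K : (σ × κ → ℝ) → ℝ}
    (hK : Continuous K) {A C : ℝ} (hA : 0 ≤ A) (hC : 0 ≤ C) (hb : ∀ X, |K X| ≤ A * rexp (C * ‖X‖))
    (h : ∀ X, 0 ≤ ∫ Q, K (oact Q X) ∂ν) : 0 ≤ ∫ X, K X ∂gm (σ × κ) := by
  have h1 : ∫ X, K X ∂gm (σ × κ) = ∫ Q, ∫ X, K (oact Q X) ∂gm (σ × κ) ∂ν := by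
    have : ∀ᵐ Q ∂ν, ∫ X, K (oact Q X) ∂gm (σ × κ) = ∫ X, K X ∂gm (σ × κ) := by
      filter_upwards [hν] with Q hQ using integral_oact hQ K
    rw [integral_congr_ae this]
    simp
  rw [h1, integral_integral_swap]
  · exact integral_nonneg h
  · have hi := (integrable_exp_norm_gm (ι := σ × κ) (C * Fintype.card σ)).const_mul A
    have hi2 := hi.comp_snd ν
    refine hi2.mono' ?_ ?_
    · refine Continuous.aestronglyMeasurable ?_
      exact hK.comp (continuous_oact.comp continuous_swap)
    · have := (Measure.quasiMeasurePreserving_fst (μ := ν) (ν := gm (σ × κ))).ae hν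
      filter_upwards [this] with p hp
      refine (hb _).trans ?_
      have := norm_oact_le hp p.2
      rw [mul_assoc]
      gcongr
end Orth

/-! ### Monotonicity under a deterministic shift -/

section Shift
variable {κ σ : Type*} [Fintype κ] [Fintype σ] [DecidableEq σ]

/-- The Cameron–Martin formula for the standard Gaussian measure. -/
lemma integral_gm_shift {ι : Type*} [Fintype ι] (F : (ι → ℝ) → ℝ) (T : ℝ) (B : ι → ℝ) :
    ∫ X, F (X + T • B) ∂gm ι =
      rexp (-(T ^ 2 * ∑ p, B p ^ 2) / 2) * ∫ X, F X * rexp (T * ∑ p, X p * B p) ∂gm ι := by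
  rw [integral_gm, integral_gm, ← integral_const_mul,
    ← integral_sub_right_eq_self (fun X => gc ι * rexp (-(∑ i, X i ^ 2) / 2) * F (X + T • B)) (T • B)]
  congr 1; ext X
  rw [sub_add_cancel]
  have : rexp (-(∑ i, (X - T • B) i ^ 2) / 2) =
      rexp (-(T ^ 2 * ∑ p, B p ^ 2) / 2) * rexp (-(∑ i, X i ^ 2) / 2) * rexp (T * ∑ p, X p * B p) := by
    rw [← exp_add, ← exp_add]
    congr 1
    have : ∑ i, (X - T • B) i ^ 2 = ∑ i, X i ^ 2 - 2 * (T * ∑ p, X p * B p) + T ^ 2 * ∑ p, B p ^ 2 := by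
      simp only [Pi.sub_apply, Pi.smul_apply, smul_eq_mul, Finset.mul_sum,
        ← Finset.sum_sub_distrib, ← Finset.sum_add_distrib]
      exact Finset.sum_congr rfl fun i _ => by ring
    rw [this]; ring
  rw [this]; ring

/-- The Householder reflection `1 - 2uuᵀ` is orthogonal. -/
lemma refl_mem_orth {u : σ → ℝ} (hu : u ∈ usph σ) :
    (Matrix.of fun i k => (if i = k then 1 else 0) - 2 * (u i * u k) : Matrix σ σ ℝ) ∈
      Matrix.orthogonalGroup σ ℝ := by
  rw [Matrix.mem_orthogonalGroup_iff]
  ext i j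
  simp only [Matrix.mul_apply, Matrix.transpose_apply, Matrix.of_apply, Matrix.one_apply]
  have h : ∀ k, ((if i = k then (1:ℝ) else 0) - 2 * (u i * u k)) * ((if j = k then (1:ℝ) else 0) - 2 * (u j * u k)) =
      (if i = k then (if j = k then (1:ℝ) else 0) else 0) - 2 * u i * (if j = k then u k else 0)
        - 2 * u j * (if i = k then u k else 0) + 4 * u i * u j * u k ^ 2 := by
    intro k; split_ifs <;> ring
  simp_rw [h]
  rw [Finset.sum_add_distrib, Finset.sum_sub_distrib, Finset.sum_sub_distrib, ← Finset.mul_sum,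
    ← Finset.mul_sum, ← Finset.mul_sum, show ∑ k, u k ^ 2 = 1 from hu]
  simp only [Finset.sum_ite_eq, Finset.mem_univ, if_true]
  simp only [eq_comm (a := j)]
  ring

lemma integrable_orth {ν : Measure (σ → σ → ℝ)} [IsProbabilityMeasure ν]
    (hν : ∀ᵐ Q ∂ν, Matrix.of Q ∈ Matrix.orthogonalGroup σ ℝ) {g : (σ → σ → ℝ) → ℝ}
    (hg : Continuous g) : Integrable g ν := by
  obtain ⟨C, hC⟩ := (isCompact_orth (σ := σ)).exists_bound_of_continuousOn hg.continuousOn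
  refine Integrable.of_bound hg.aestronglyMeasurable C ?_
  filter_upwards [hν] with Q hQ using hC Q hQ

/-- The reflection `Q ↦ (1 - 2uuᵀ)Q` flips the sign of `q` and lowers the exponent by `2Tq`. -/
lemma orth_avg_nonneg {ν : Measure (σ → σ → ℝ)} [IsProbabilityMeasure ν]
    (hν : ∀ᵐ Q ∂ν, Matrix.of Q ∈ Matrix.orthogonalGroup σ ℝ)
    (hinv : ∀ R ∈ Matrix.orthogonalGroup σ ℝ, MeasurePreserving
      (fun Q : σ → σ → ℝ => fun i j => ∑ k, R i k * Q k j) ν ν)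
    (X B : σ × κ → ℝ) {u : σ → ℝ} (hu : u ∈ usph σ) {T : ℝ} (hT : 0 ≤ T) :
    0 ≤ ∫ Q : σ → σ → ℝ, (∑ k, rowc X u k * rowc B (fun j => ∑ i, Q i j * u i) k) *
      rexp (T * ∑ p, oact Q X p * B p) ∂ν := by
  set q : (σ → σ → ℝ) → ℝ := fun Q => ∑ k, rowc X u k * rowc B (fun j => ∑ i, Q i j * u i) k with hq
  set p : (σ → σ → ℝ) → ℝ := fun Q => ∑ p, oact Q X p * B p with hp
  have hqc : Continuous q := by simp only [hq, rowc]; fun_prop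
  have hpc : Continuous p := by simp only [hp, oact]; fun_prop
  set S : (σ → σ → ℝ) → (σ → σ → ℝ) := fun Q => fun i j => ∑ k, ((if i = k then 1 else 0) - 2 * (u i * u k)) * Q k j with hS
  have hSe : ∀ Q i j, S Q i j = Q i j - 2 * u i * ∑ l, Q l j * u l := by
    intro Q i j
    simp only [hS, sub_mul, Finset.sum_sub_distrib, ite_mul, one_mul, zero_mul, Finset.sum_ite_eq, Finset.mem_univ, if_true]
    congr 1
    rw [Finset.mul_sum]
    exact Finset.sum_congr rfl fun l _ => by ring
  have hw : ∀ Q j, ∑ i, S Q i j * u i = -∑ i, Q i j * u i := by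
    intro Q j
    simp only [hSe, sub_mul, Finset.sum_sub_distrib]
    have : ∑ i, 2 * u i * (∑ l, Q l j * u l) * u i = 2 * ∑ l, Q l j * u l := by
      have h1 : ∀ i, 2 * u i * (∑ l, Q l j * u l) * u i = (2 * ∑ l, Q l j * u l) * u i ^ 2 := fun i => by ring
      simp_rw [h1]
      rw [← Finset.mul_sum, show ∑ k, u k ^ 2 = 1 from hu, mul_one]
    rw [this]; ring
  have hqS : ∀ Q, q (S Q) = -q Q := by
    intro Q
    simp only [hq, rowc, hw, neg_mul, Finset.sum_neg_distrib, mul_neg]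
  have hpS : ∀ Q, p (S Q) = p Q - 2 * q Q := by
    intro Q
    have e : ∀ x : σ × κ, oact (S Q) X x = oact Q X x - 2 * (∑ l, Q l x.1 * u l) * rowc X u x.2 := by
      intro x
      simp only [oact, hSe, sub_mul, Finset.sum_sub_distrib, rowc, Finset.mul_sum (a := 2 * (∑ l, Q l x.1 * u l))]
      congr 1
      exact Finset.sum_congr rfl fun j _ => by ring
    simp only [hp, e, sub_mul, Finset.sum_sub_distrib]
    congr 1
    rw [Fintype.sum_prod_type_right]
    have hB : ∀ (v : σ → ℝ) k, rowc B v k = ∑ i, v i * B (i, k) := fun _ _ => rfl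
    simp only [hq, hB]
    rw [Finset.mul_sum]
    refine Finset.sum_congr rfl fun k _ => ?_
    rw [Finset.mul_sum, Finset.mul_sum]
    refine Finset.sum_congr rfl fun j _ => ?_
    ring
  have hmp := hinv _ (refl_mem_orth hu)
  have hcont : Continuous fun Q => q Q * rexp (T * p Q) := by fun_prop
  have h1 : ∫ Q, q Q * rexp (T * p Q) ∂ν = ∫ Q, -q Q * rexp (T * (p Q - 2 * q Q)) ∂ν := by
    conv_lhs => rw [← hmp.map_eq]
    rw [integral_map hmp.measurable.aemeasurable hcont.aestronglyMeasurable]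
    refine integral_congr_ae (Filter.Eventually.of_forall fun Q => ?_)
    change q (S Q) * rexp (T * p (S Q)) = _
    rw [hqS, hpS]
  have h2 : 2 * ∫ Q, q Q * rexp (T * p Q) ∂ν =
      ∫ Q, (q Q * rexp (T * p Q) + -q Q * rexp (T * (p Q - 2 * q Q))) ∂ν := by
    rw [integral_add (integrable_orth hν (by fun_prop)) (integrable_orth hν (by fun_prop)), ← h1]
    ring
  have h3 : 0 ≤ ∫ Q, (q Q * rexp (T * p Q) + -q Q * rexp (T * (p Q - 2 * q Q))) ∂ν := by
    refine integral_nonneg fun Q => ?_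
    simp only [Pi.zero_apply]
    rcases le_total 0 (q Q) with h | h
    · have : rexp (T * (p Q - 2 * q Q)) ≤ rexp (T * p Q) := by
        gcongr; linarith
      nlinarith
    · have : rexp (T * p Q) ≤ rexp (T * (p Q - 2 * q Q)) := by
        gcongr; linarith
      nlinarith
  linarith

/-- One small step of the monotonicity in the shift. The law of the shifted matrix has density
proportional to `exp (T⟨X, B⟩)`; averaging over orthogonal changes of `X` shows that, up to an error of
order `δ²`, removing `δ • B` cannot decrease the expectation. Over `1/δ` steps these errors sum to
`O(δ)`. -/
lemma shift_step [Nonempty σ] (B : σ × κ → ℝ) {ε δ T : ℝ} (hε : 0 < ε) (hδ : 0 ≤ δ) (hT : 0 ≤ T) :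
    ∫ X, 1 / (smin (X + T • B) ^ 2 + ε) ∂gm (σ × κ) ≤
      ∫ X, 1 / (smin (X + (T - δ) • B) ^ 2 + ε) ∂gm (σ × κ) + smax B ^ 2 / ε ^ 2 * δ ^ 2 := by
  obtain ⟨ν, hprob, hν, hinv⟩ := exists_orth_measure σ
  set M := smax B ^ 2 with hM
  have hM0 : 0 ≤ M := sq_nonneg _
  set F : (σ × κ → ℝ) → ℝ := fun X => 1 / (smin (X - δ • B) ^ 2 + ε) - 1 / (smin X ^ 2 + ε) + M / ε ^ 2 * δ ^ 2 with hF
  have hsc := continuous_smin (κ := κ) (σ := σ)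
  have hφc : Continuous fun X : σ × κ → ℝ => 1 / (smin X ^ 2 + ε) :=
    continuous_const.div (by fun_prop) fun X => by positivity
  have hφ1 : ∀ X : σ × κ → ℝ, 0 ≤ 1 / (smin X ^ 2 + ε) ∧ 1 / (smin X ^ 2 + ε) ≤ 1 / ε := by
    intro X
    refine ⟨by positivity, ?_⟩
    gcongr
    nlinarith [sq_nonneg (smin X)]
  have hφi : ∀ Y : σ × κ → ℝ, Integrable (fun X => 1 / (smin (X + Y) ^ 2 + ε)) (gm (σ × κ)) := by
    intro Y
    refine Integrable.of_bound (hφc.comp (by fun_prop : Continuous fun X => X + Y)).aestronglyMeasurable (1 / ε)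
      (Filter.Eventually.of_forall fun X => ?_)
    rw [Real.norm_of_nonneg (hφ1 _).1]
    exact (hφ1 _).2
  have hFc : Continuous F := by
    have : Continuous fun X : σ × κ → ℝ => 1 / (smin (X - δ • B) ^ 2 + ε) :=
      hφc.comp (by fun_prop : Continuous fun X => X - δ • B)
    simp only [hF]; fun_prop
  have hFb : ∀ X, |F X| ≤ 1 / ε + M / ε ^ 2 * δ ^ 2 := by
    intro X
    have h1 := hφ1 X
    have h2 := hφ1 (X - δ • B)
    have h3 : 0 ≤ M / ε ^ 2 * δ ^ 2 := by positivity
    simp only [hF]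
    rw [abs_le]; constructor <;> linarith
  have hK : 0 ≤ ∫ X, F X * rexp (T * ∑ p, X p * B p) ∂gm (σ × κ) := by
    refine integral_nonneg_of_orth_avg hν (A := 1 / ε + M / ε ^ 2 * δ ^ 2) (C := T * ∑ p, |B p|)
      (by fun_prop) (by positivity) (by positivity) (fun X => ?_) fun X => ?_
    · rw [abs_mul, abs_exp]
      refine mul_le_mul (hFb X) (exp_le_exp.2 ?_) (exp_pos _).le (by positivity)
      · rw [mul_assoc]
        refine mul_le_mul_of_nonneg_left ?_ hT
        rw [Finset.sum_mul]
        refine Finset.sum_le_sum fun p _ => ?_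
        have h1 := le_abs_self (X p * B p)
        rw [abs_mul, mul_comm |X p|] at h1
        exact h1.trans (mul_le_mul_of_nonneg_left (norm_le_pi_norm X p) (abs_nonneg _))
    · obtain ⟨u, hu, hmin⟩ := exists_smin X
      set a := smin X ^ 2 + ε with ha
      have ha0 : 0 < a := by positivity
      have hJ := orth_avg_nonneg hν hinv X B hu hT
      refine (mul_nonneg (show 0 ≤ 2 * δ / a ^ 2 by positivity) hJ).trans ?_
      rw [← integral_const_mul]
      refine integral_mono_ae (integrable_orth hν ?_) (integrable_orth hν ?_) ?_
      · simp only [rowc, oact]; fun_prop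
      · have : Continuous fun Q : σ → σ → ℝ => oact Q X := by unfold oact; fun_prop
        have := hFc.comp this
        simp only [Function.comp_def] at this
        simp only [oact] at this ⊢
        fun_prop
      · filter_upwards [hν] with Q hQ
        set w : σ → ℝ := fun j => ∑ i, Q i j * u i with hw
        have hwu : w ∈ usph σ := orth_transpose_mem_usph hQ hu
        set q := ∑ k, rowc X u k * rowc B w k with hq
        rw [← mul_assoc]
        refine mul_le_mul_of_nonneg_right ?_ (exp_pos _).le
        set b := smin (oact Q X - δ • B) ^ 2 with hb
        have hb0 : 0 ≤ b := sq_nonneg _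
        have hbq : b ≤ smin X ^ 2 - 2 * δ * q + δ ^ 2 * M := by
          have h1 : b ≤ l2 (rowc (oact Q X - δ • B) w) ^ 2 := by
            simp only [hb]
            gcongr
            · exact smin_nonneg _
            · exact smin_le _ hwu
          have h2 : rowc (oact Q X - δ • B) w = fun k => rowc X u k - δ * rowc B w k := by
            have h3 : rowc (oact Q X) w = rowc X u := by
              rw [rowc_oact, hw, orth_cancel hQ]
            rw [← h3]
            ext k
            simp only [rowc, Pi.sub_apply, Pi.smul_apply, smul_eq_mul, Finset.mul_sum,
              ← Finset.sum_sub_distrib]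
            exact Finset.sum_congr rfl fun i _ => by ring
          rw [h2, l2_sq] at h1
          have h4 : ∑ k, (rowc X u k - δ * rowc B w k) ^ 2 =
              ∑ k, rowc X u k ^ 2 - 2 * δ * q + δ ^ 2 * ∑ k, rowc B w k ^ 2 := by
            simp only [hq, Finset.mul_sum, ← Finset.sum_sub_distrib, ← Finset.sum_add_distrib]
            exact Finset.sum_congr rfl fun i _ => by ring
          rw [h4, ← l2_sq, ← l2_sq, hmin] at h1
          have h5 : l2 (rowc B w) ^ 2 ≤ M := by
            simp only [hM]
            gcongr
            · exact l2_nonneg _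
            · exact le_smax B hwu
          have : δ ^ 2 * l2 (rowc B w) ^ 2 ≤ δ ^ 2 * M := by gcongr
          linarith
        simp only [hF, smin_oact hQ]
        rw [← hb, ← ha]
        -- convexity of `1 / (x + ε)`: the graph lies above the tangent at `smin X ^ 2`
        have hconv : 1 / a - (b + ε - a) / a ^ 2 ≤ 1 / (b + ε) := by
          have hbe : 0 < b + ε := by positivity
          have : 1 / (b + ε) - (1 / a - (b + ε - a) / a ^ 2) = (b + ε - a) ^ 2 / (a ^ 2 * (b + ε)) := by
            field_simp; ring
          have : 0 ≤ (b + ε - a) ^ 2 / (a ^ 2 * (b + ε)) := by positivity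
          linarith
        have h6 : (b + ε - a) / a ^ 2 ≤ (δ ^ 2 * M - 2 * δ * q) / a ^ 2 := by
          refine div_le_div_of_nonneg_right ?_ (by positivity)
          linarith
        have h7 : δ ^ 2 * M / a ^ 2 ≤ δ ^ 2 * M / ε ^ 2 := by
          have : ε ≤ a := by linarith [sq_nonneg (smin X)]
          gcongr
        have h8 : (δ ^ 2 * M - 2 * δ * q) / a ^ 2 = δ ^ 2 * M / a ^ 2 - 2 * δ / a ^ 2 * q := by ring
        have h9 : M / ε ^ 2 * δ ^ 2 = δ ^ 2 * M / ε ^ 2 := by ring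
        rw [h9]
        linarith
  have hcm := integral_gm_shift F T B
  have h0 : 0 ≤ ∫ X, F (X + T • B) ∂gm (σ × κ) := by
    rw [hcm]; positivity
  have e : ∀ X : σ × κ → ℝ, F (X + T • B) = 1 / (smin (X + (T - δ) • B) ^ 2 + ε) - 1 / (smin (X + T • B) ^ 2 + ε) + M / ε ^ 2 * δ ^ 2 := by
    intro X
    simp only [hF, sub_smul, add_sub_assoc]
  simp_rw [e] at h0
  have hi : Integrable (fun X => 1 / (smin (X + (T - δ) • B) ^ 2 + ε) -
      1 / (smin (X + T • B) ^ 2 + ε)) (gm (σ × κ)) := (hφi _).sub (hφi _)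
  rw [integral_add hi (integrable_const _), integral_sub (hφi _) (hφi _)] at h0
  simp at h0 ⊢
  linarith

/-- Adding a deterministic matrix `B` to a Gaussian matrix does not increase the expectation of
the regularized inverse square of the smallest singular value. -/
lemma shift_domination [Nonempty σ] (B : σ × κ → ℝ) {ε : ℝ} (hε : 0 < ε) :
    ∫ X, 1 / (smin (X + B) ^ 2 + ε) ∂gm (σ × κ) ≤ ∫ X, 1 / (smin X ^ 2 + ε) ∂gm (σ × κ) := by
  set f : ℝ → ℝ := fun t => ∫ X, 1 / (smin (X + t • B) ^ 2 + ε) ∂gm (σ × κ) with hf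
  set C := smax B ^ 2 / ε ^ 2 with hC
  have hstep : ∀ N : ℕ, ∀ k : ℕ, f (k * (1 / ((N:ℝ) + 1))) ≤ f 0 + k * (C * (1 / ((N:ℝ) + 1)) ^ 2) := by
    intro N k
    induction k with
    | zero => simp
    | succ k ih =>
      have h := shift_step B hε (δ := 1 / ((N:ℝ) + 1)) (T := ((k + 1 : ℕ):ℝ) * (1 / ((N:ℝ) + 1)))
        (by positivity) (by positivity)
      have e : ((k + 1 : ℕ):ℝ) * (1 / ((N:ℝ) + 1)) - 1 / ((N:ℝ) + 1) = k * (1 / ((N:ℝ) + 1)) := by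
        push_cast; ring
      rw [e] at h
      have h' : f (((k + 1 : ℕ):ℝ) * (1 / ((N:ℝ) + 1))) ≤ f (k * (1 / ((N:ℝ) + 1))) + C * (1 / ((N:ℝ) + 1)) ^ 2 := h
      push_cast at h' ⊢
      linarith
  have hlim : ∀ N : ℕ, f 1 ≤ f 0 + C * (1 / ((N:ℝ) + 1)) := by
    intro N
    have h := hstep N (N + 1)
    have h1 : ((N + 1 : ℕ):ℝ) * (1 / ((N:ℝ) + 1)) = 1 := by push_cast; field_simp
    rw [h1] at h
    refine h.trans (le_of_eq ?_)
    push_cast; field_simp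
  have ht : Filter.Tendsto (fun N : ℕ => f 0 + C * (1 / ((N:ℝ) + 1))) Filter.atTop (nhds (f 0 + C * 0)) :=
    (tendsto_one_div_add_atTop_nhds_zero_nat.const_mul C).const_add _
  have := ge_of_tendsto' ht hlim
  simpa [hf] using this
end Shift

/-! ### Moment bounds for the shifted matrix -/

section Assembly
variable {κ σ : Type*} [Fintype κ] [Fintype σ]

lemma l2_add_le (x y : κ → ℝ) : l2 (fun k => x k + y k) ≤ l2 x + l2 y := by
  have h : ∀ z : κ → ℝ, l2 z = ‖(WithLp.toLp 2 z : EuclideanSpace ℝ κ)‖ := by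
    intro z
    simp [EuclideanSpace.norm_eq, l2]
  rw [h, h, h]
  exact norm_add_le (WithLp.toLp 2 x : EuclideanSpace ℝ κ) (WithLp.toLp 2 y)

lemma smax_add_le [Nonempty σ] (G B : σ × κ → ℝ) {y : ℝ}
    (hB : ∀ u ∈ usph σ, l2 (rowc B u) ≤ y) : smax (G + B) ≤ smax G + y := by
  obtain ⟨u, hu, h⟩ := exists_smax (G + B)
  rw [← h]
  have e : rowc (G + B) u = fun k => rowc G u k + rowc B u k := by
    ext k
    simp only [rowc, Pi.add_apply, mul_add, Finset.sum_add_distrib]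
  rw [e]
  exact (l2_add_le _ _).trans (add_le_add (le_smax G hu) (hB u hu))

/-- Second moment of the largest singular value of a shifted Gaussian matrix. The cross term is
absorbed by `2 smax ≤ smax ^ 2 / (c + 1) + (c + 1)`. -/
lemma lintegral_smax_add_sq [Nonempty σ] (B : σ × κ → ℝ) {c y : ℝ} (hc : 0 ≤ c) (hy : 0 ≤ y)
    (hB : ∀ u ∈ usph σ, l2 (rowc B u) ≤ y)
    (h : ∫⁻ G, ENNReal.ofReal (smax G ^ 2) ∂gm (σ × κ) ≤ ENNReal.ofReal ((c + 1) ^ 2)) :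
    ∫⁻ G, ENNReal.ofReal (smax (G + B) ^ 2) ∂gm (σ × κ) ≤ ENNReal.ofReal ((c + 1 + y) ^ 2) := by
  have hpt : ∀ G : σ × κ → ℝ, ENNReal.ofReal (smax (G + B) ^ 2) ≤
      ENNReal.ofReal (1 + y / (c + 1)) * ENNReal.ofReal (smax G ^ 2) +
        ENNReal.ofReal (y * (c + 1) + y ^ 2) := by
    intro G
    rw [← ENNReal.ofReal_mul (by positivity), ← ENNReal.ofReal_add (by positivity) (by positivity)]
    refine ENNReal.ofReal_le_ofReal ?_
    have h1 := smax_add_le G B hB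
    have h2 : smax (G + B) ^ 2 ≤ (smax G + y) ^ 2 := by
      have := smax_nonneg (G + B)
      gcongr
    refine h2.trans ?_
    have h3 : (1 + y / (c + 1)) * smax G ^ 2 + (y * (c + 1) + y ^ 2) - (smax G + y) ^ 2 =
        y / (c + 1) * (smax G - (c + 1)) ^ 2 := by
      field_simp
      ring
    have : 0 ≤ y / (c + 1) * (smax G - (c + 1)) ^ 2 := by positivity
    linarith
  refine (lintegral_mono hpt).trans ?_
  have hm : Measurable fun G : σ × κ → ℝ => ENNReal.ofReal (smax G ^ 2) :=
    (continuous_smax.measurable.pow_const 2).ennreal_ofReal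
  rw [lintegral_add_right _ measurable_const, lintegral_const_mul _ hm, lintegral_const,
    measure_univ, mul_one]
  refine (add_le_add_left (mul_le_mul_right h _) _).trans ?_
  rw [← ENNReal.ofReal_mul (by positivity), ← ENNReal.ofReal_add (by positivity) (by positivity)]
  refine ENNReal.ofReal_le_ofReal (le_of_eq ?_)
  field_simp

variable [DecidableEq σ]

/-- Removal of the regularization `ε` by Fatou's lemma. -/
lemma lintegral_smin_add_inv_sq [Nonempty σ] (B : σ × κ → ℝ) {K : ℝ}
    (h : ∀ ε : ℝ, 0 < ε → ∫⁻ G, ENNReal.ofReal (1 / (smin G ^ 2 + ε)) ∂gm (σ × κ) ≤ ENNReal.ofReal K) :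
    ∫⁻ G, (ENNReal.ofReal (smin (G + B) ^ 2))⁻¹ ∂gm (σ × κ) ≤ ENNReal.ofReal K := by
  have hIntg : ∀ (ε : ℝ), 0 < ε → ∀ B : σ × κ → ℝ,
      Integrable (fun G => 1 / (smin (G + B) ^ 2 + ε)) (gm (σ × κ)) := by
    intro ε hε B
    have hc : Continuous fun G : σ × κ → ℝ => smin (G + B) :=
      continuous_smin.comp (by fun_prop)
    refine Integrable.of_bound (Continuous.aestronglyMeasurable
      (continuous_const.div (by fun_prop) fun X => by positivity)) (1 / ε)
      (Filter.Eventually.of_forall fun X => ?_)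
    rw [Real.norm_of_nonneg (by positivity)]
    gcongr
    linarith [sq_nonneg (smin (X + B))]
  have hB : ∀ ε : ℝ, 0 < ε →
      ∫⁻ G, ENNReal.ofReal (1 / (smin (G + B) ^ 2 + ε)) ∂gm (σ × κ) ≤ ENNReal.ofReal K := by
    intro ε hε
    refine le_trans ?_ (h ε hε)
    have h0 := hIntg ε hε 0
    simp only [add_zero] at h0
    rw [← ofReal_integral_eq_lintegral_ofReal (hIntg ε hε B)
        (Filter.Eventually.of_forall fun G => by simp only [Pi.zero_apply]; positivity),
      ← ofReal_integral_eq_lintegral_ofReal h0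
        (Filter.Eventually.of_forall fun G => by simp only [Pi.zero_apply]; positivity)]
    exact ENNReal.ofReal_le_ofReal (shift_domination B hε)
  have hlim : ∀ G : σ × κ → ℝ, Filter.Tendsto
      (fun k : ℕ => ENNReal.ofReal (1 / (smin (G + B) ^ 2 + 1 / ((k:ℝ) + 1)))) Filter.atTop
      (nhds ((ENNReal.ofReal (smin (G + B) ^ 2))⁻¹)) := by
    intro G
    have h1 : ∀ k : ℕ, ENNReal.ofReal (1 / (smin (G + B) ^ 2 + 1 / ((k:ℝ) + 1))) =
        (ENNReal.ofReal (smin (G + B) ^ 2 + 1 / ((k:ℝ) + 1)))⁻¹ := by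
      intro k
      rw [one_div, ENNReal.ofReal_inv_of_pos (by positivity)]
    simp_rw [h1]
    refine tendsto_inv_iff.2 ((ENNReal.continuous_ofReal.tendsto _).comp ?_)
    simpa using (tendsto_one_div_add_atTop_nhds_zero_nat (𝕜 := ℝ)).const_add (smin (G + B) ^ 2)
  have hc : Measurable fun G : σ × κ → ℝ => smin (G + B) :=
    (continuous_smin.comp (by fun_prop)).measurable
  calc ∫⁻ G, (ENNReal.ofReal (smin (G + B) ^ 2))⁻¹ ∂gm (σ × κ)
      = ∫⁻ G, Filter.liminf (fun k : ℕ =>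
          ENNReal.ofReal (1 / (smin (G + B) ^ 2 + 1 / ((k:ℝ) + 1)))) Filter.atTop ∂gm (σ × κ) :=
        lintegral_congr fun G => (hlim G).liminf_eq.symm
    _ ≤ Filter.liminf (fun k : ℕ => ∫⁻ G,
          ENNReal.ofReal (1 / (smin (G + B) ^ 2 + 1 / ((k:ℝ) + 1))) ∂gm (σ × κ)) Filter.atTop :=
        lintegral_liminf_le fun k => by fun_prop
    _ ≤ ENNReal.ofReal K :=
        Filter.liminf_le_of_le (by isBoundedDefault) fun b hb => by
          obtain ⟨k, hk⟩ := hb.exists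
          exact hk.trans (hB _ (by positivity))

/-- The Cauchy–Schwarz step, in the form `ab ≤ (θ a² + b² / θ) / 2`. -/
lemma smax_div_smin_bound [Nonempty σ] (B : σ × κ → ℝ) {A D : ℝ} (hA : 0 < A) (hD : 0 < D)
    (h1 : ∫⁻ G, ENNReal.ofReal (smax (G + B) ^ 2) ∂gm (σ × κ) ≤ ENNReal.ofReal (A ^ 2))
    (h2 : ∫⁻ G, (ENNReal.ofReal (smin (G + B) ^ 2))⁻¹ ∂gm (σ × κ) ≤ ENNReal.ofReal (D ^ 2)) :
    (∀ᵐ G ∂gm (σ × κ), 0 < smin (G + B)) ∧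
    ∫⁻ G, ENNReal.ofReal (smax (G + B) / smin (G + B)) ∂gm (σ × κ) ≤ ENNReal.ofReal (A * D) := by
  have hcm : Measurable fun G : σ × κ → ℝ => smin (G + B) :=
    (continuous_smin.comp (by fun_prop)).measurable
  have hcM : Measurable fun G : σ × κ → ℝ => smax (G + B) :=
    (continuous_smax.comp (by fun_prop)).measurable
  have hpos : ∀ᵐ G ∂gm (σ × κ), 0 < smin (G + B) := by
    have := ae_lt_top (by fun_prop) (ne_of_lt (h2.trans_lt ENNReal.ofReal_lt_top))
    filter_upwards [this] with G hG
    rw [ENNReal.inv_lt_top, ENNReal.ofReal_pos] at hG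
    exact (smin_nonneg _).lt_of_ne' fun h => by simp [h] at hG
  refine ⟨hpos, ?_⟩
  have hpt : ∀ᵐ G ∂gm (σ × κ), ENNReal.ofReal (smax (G + B) / smin (G + B)) ≤
      ENNReal.ofReal (D / (2 * A)) * ENNReal.ofReal (smax (G + B) ^ 2) +
        ENNReal.ofReal (A / (2 * D)) * (ENNReal.ofReal (smin (G + B) ^ 2))⁻¹ := by
    filter_upwards [hpos] with G hG
    rw [← ENNReal.ofReal_inv_of_pos (by positivity), ← ENNReal.ofReal_mul (by positivity),
      ← ENNReal.ofReal_mul (by positivity), ← ENNReal.ofReal_add (by positivity) (by positivity)]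
    refine ENNReal.ofReal_le_ofReal ?_
    generalize smax (G + B) = a at *
    generalize smin (G + B) = b at *
    have : D / (2 * A) * a ^ 2 + A / (2 * D) * (b ^ 2)⁻¹ - a / b =
        (D * a * b - A) ^ 2 / (2 * A * D * b ^ 2) := by
      field_simp
      ring
    have : 0 ≤ (D * a * b - A) ^ 2 / (2 * A * D * b ^ 2) := by positivity
    linarith
  refine (lintegral_mono_ae hpt).trans ?_
  rw [lintegral_add_left (by fun_prop), lintegral_const_mul _ (by fun_prop),
    lintegral_const_mul _ (by fun_prop)]
  refine (add_le_add (mul_le_mul_right h1 _) (mul_le_mul_right h2 _)).trans ?_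
  rw [← ENNReal.ofReal_mul (by positivity), ← ENNReal.ofReal_mul (by positivity),
    ← ENNReal.ofReal_add (by positivity) (by positivity)]
  refine ENNReal.ofReal_le_ofReal (le_of_eq ?_)
  field_simp
  norm_num

/-- The bound produced by the moment estimates is at most the claimed one; here `N - S = m * c`
with `c = √N + √S`, `m = √N - √S`. -/
lemma final_algebra {N S y : ℝ} (hS : 1 ≤ S) (hy : 1 ≤ y) (hNS : 3 < N - S)
    (hm : y < √N - √S) :
    (√N + √S + 1 + y) * ((√N + √S) / (N - S - 3)) ≤ (√N + √S + y) / (√N - √S - y) := by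
  have hb : 1 ≤ √S := by rwa [Real.one_le_sqrt]
  have hN2 : √N ^ 2 = N := Real.sq_sqrt (by linarith)
  have hS2 : √S ^ 2 = S := Real.sq_sqrt (by linarith)
  generalize √N = a at *
  generalize √S = b at *
  subst hN2 hS2
  rw [← mul_div_assoc, div_le_div_iff₀ (by linarith) (by linarith)]
  obtain ⟨c, hc⟩ : ∃ c, c = a + b := ⟨_, rfl⟩
  obtain rfl : a = c - b := by linarith
  have h1 : c - b - b - y ≤ c - 3 := by linarith
  have h2 : 3 < c := by linarith
  have h3 : c * (c - b - b - y) ≤ c * (c - 3) := by gcongr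
  have h4 : c * (c - 3) ≤ (c + y) * (c * y - 3) := by
    have : c - 3 ≤ c * y - 3 := by nlinarith
    exact mul_le_mul (by linarith) this (by linarith) (by linarith)
  nlinarith

/-- The condition number bound for a Gaussian matrix with a deterministic shift `B` of operator norm
at most `y`, with rows indexed by `σ` and columns by `κ`. -/
theorem gaussian_shift_cond [Nonempty σ] (B : σ × κ → ℝ) {y : ℝ} (hy : 1 ≤ y)
    (hB : ∀ u ∈ usph σ, l2 (rowc B u) ≤ y)
    (hcard : Fintype.card σ + 4 ≤ Fintype.card κ)
    (hm : y < √(Fintype.card κ : ℝ) - √(Fintype.card σ : ℝ)) :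
    (∀ᵐ G ∂gm (σ × κ), 0 < smin (G + B)) ∧
    ∫⁻ G, ENNReal.ofReal (smax (G + B) / smin (G + B)) ∂gm (σ × κ) ≤
      ENNReal.ofReal ((√(Fintype.card κ : ℝ) + √(Fintype.card σ : ℝ) + y) /
        (√(Fintype.card κ : ℝ) - √(Fintype.card σ : ℝ) - y)) := by
  have hσ0 : 0 < Fintype.card σ := Fintype.card_pos
  obtain ⟨n, hn⟩ : ∃ n, Fintype.card κ = n + 2 := ⟨Fintype.card κ - 2, by omega⟩
  obtain ⟨s, hs⟩ : ∃ s, Fintype.card σ = s + 1 := ⟨Fintype.card σ - 1, by omega⟩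
  have hns : s + 3 ≤ n := by omega
  have hnsR : (s:ℝ) + 3 ≤ n := by exact_mod_cast hns
  set N : ℝ := (Fintype.card κ : ℝ) with hN
  set S : ℝ := (Fintype.card σ : ℝ) with hS
  have hNn : N = n + 2 := by rw [hN, hn]; push_cast; ring
  have hSs : S = s + 1 := by rw [hS, hs]; push_cast; ring
  have hs0 : (0:ℝ) ≤ s := Nat.cast_nonneg s
  have hN0 : 0 < √N := Real.sqrt_pos.2 (by linarith)
  have hSr : 0 ≤ √S := Real.sqrt_nonneg _
  have h1 := lintegral_smax_add_sq B (c := √N + √S) (y := y) (by positivity) (by linarith) hB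
    (lintegral_smax_sq (n := n + 1) (s := s) hn hs (by
      rw [hNn, hSs]; push_cast; ring_nf))
  have h2 := lintegral_smin_add_inv_sq B (K := ((√N + √S) / (N - S - 3)) ^ 2) fun ε hε => by
    refine (lintegral_smin_inv_sq hn hs hns hε).trans (ENNReal.ofReal_le_ofReal ?_)
    rw [div_pow]
    have e1 : √((n:ℝ) + 1) ≤ √N := Real.sqrt_le_sqrt (by linarith)
    have e2 : √((s:ℝ) + 1) = √S := by rw [hSs]
    rw [e2]
    have e3 : (N - S - 3) ^ 2 ≤ ((n:ℝ) - s - 1) * ((n:ℝ) - s - 2) := by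
      rw [hNn, hSs]; nlinarith
    have e4 : 0 < N - S - 3 := by linarith
    gcongr
  have hD : 0 < N - S - 3 := by linarith
  obtain ⟨h3, h4⟩ := smax_div_smin_bound B (by positivity) (by positivity) h1 h2
  exact ⟨h3, h4.trans (ENNReal.ofReal_le_ofReal
    (final_algebra (by linarith) hy (by linarith) hm))⟩

end Assembly

/-! ### Singular values and the condition number -/

section Final

/-- Each singular value is attained as `‖Xᵀu‖` at a unit eigenvector `u` of `XXᵀ`. -/
lemma exists_sVals_eq {κ σ : Type*} [Fintype κ] [Fintype σ] [DecidableEq σ] (X : Matrix σ κ ℝ)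
    (i : σ) : ∃ u ∈ usph σ, l2 (rowc (fun p => X p.1 p.2) u) = sVals X i := by
  set hX := Matrix.isHermitian_mul_conjTranspose_self X with hXd
  set u : σ → ℝ := (hX.eigenvectorBasis i).ofLp with hu
  have hnorm : ∑ j, u j ^ 2 = 1 := by
    have h := hX.eigenvectorBasis.orthonormal.1 i
    rw [EuclideanSpace.norm_eq, Real.sqrt_eq_one] at h
    simp only [Real.norm_eq_abs, sq_abs] at h
    exact h
  refine ⟨u, hnorm, ?_⟩
  have he := hX.mulVec_eigenvectorBasis i
  rw [← hu] at he
  have hr : rowc (fun p => X p.1 p.2) u = Xᵀ *ᵥ u := by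
    ext k
    simp only [rowc, Matrix.mulVec, dotProduct, Matrix.transpose_apply]
    exact Finset.sum_congr rfl fun j _ => mul_comm _ _
  have hd : ∑ k, (Xᵀ *ᵥ u) k ^ 2 = hX.eigenvalues i := by
    have h1 : ∑ k, (Xᵀ *ᵥ u) k ^ 2 = (Xᵀ *ᵥ u) ⬝ᵥ (Xᵀ *ᵥ u) := by
      simp only [dotProduct, sq]
    have h2 : (Xᵀ *ᵥ u) ⬝ᵥ (Xᵀ *ᵥ u) = u ⬝ᵥ ((X * Xᴴ) *ᵥ u) := by
      rw [← Matrix.mulVec_mulVec, Matrix.dotProduct_mulVec, Matrix.conjTranspose_eq_transpose_of_trivial,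
        ← Matrix.mulVec_transpose, Matrix.transpose_transpose, dotProduct_comm]
    rw [h1, h2, he, dotProduct_smul]
    have h3 : u ⬝ᵥ u = 1 := by
      rw [← hnorm]; simp only [dotProduct, sq]
    rw [h3, smul_eq_mul, mul_one]
  rw [hr, l2, hd]
  rfl

lemma condNum_le {κ σ : Type*} [Fintype κ] [Fintype σ] [DecidableEq σ] [Nonempty σ]
    (X : Matrix σ κ ℝ) (hpos : 0 < smin fun p : σ × κ => X p.1 p.2) :
    condNum X ≤ smax (fun p : σ × κ => X p.1 p.2) / smin (fun p : σ × κ => X p.1 p.2) := by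
  have hM : sMax X ≤ smax fun p : σ × κ => X p.1 p.2 := by
    refine csSup_le (Set.range_nonempty _) ?_
    rintro _ ⟨i, rfl⟩
    obtain ⟨u, hu, h⟩ := exists_sVals_eq X i
    rw [← h]; exact le_smax _ hu
  have hm : (smin fun p : σ × κ => X p.1 p.2) ≤ sMin X := by
    refine le_csInf (Set.range_nonempty _) ?_
    rintro _ ⟨i, rfl⟩
    obtain ⟨u, hu, h⟩ := exists_sVals_eq X i
    rw [← h]; exact smin_le _ hu
  exact div_le_div₀ (smax_nonneg _) hM hpos hm

lemma condNum_nonneg {κ σ : Type*} [Fintype κ] [Fintype σ] [DecidableEq σ]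
    (X : Matrix σ κ ℝ) : 0 ≤ condNum X := by
  refine div_nonneg (Real.sSup_nonneg ?_) (Real.sInf_nonneg ?_) <;>
  · rintro _ ⟨i, rfl⟩
    exact Real.sqrt_nonneg _

/-- The rows of `(I | … | I)` are orthogonal of squared length `M`. -/
lemma l2_rowc_Isd {s d M : ℕ} (hsd : s ≤ d) {u : Fin s → ℝ} (hu : u ∈ usph (Fin s)) :
    l2 (rowc (fun p : Fin s × (Fin M × Fin d) => Isd s d p.1 p.2.2) u) = √(M:ℝ) := by
  rw [l2]
  congr 1
  rw [Fintype.sum_prod_type]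
  have h1 : ∀ m : Fin M, ∑ j : Fin d,
      rowc (fun p : Fin s × (Fin M × Fin d) => Isd s d p.1 p.2.2) u (m, j) ^ 2 = 1 := by
    intro m
    rw [← show ∑ k, u k ^ 2 = 1 from hu]
    have h2 : ∀ i : Fin s, rowc (fun p : Fin s × (Fin M × Fin d) => Isd s d p.1 p.2.2) u
        (m, Fin.castLE hsd i) = u i := by
      intro i
      simp [rowc, Isd, Fin.val_inj]
    have h3 : ∀ j : Fin d, j ∉ Set.range (Fin.castLE hsd) →
        rowc (fun p : Fin s × (Fin M × Fin d) => Isd s d p.1 p.2.2) u (m, j) = 0 := by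
      intro j hj
      simp only [rowc]
      refine Finset.sum_eq_zero fun i _ => ?_
      have : (i:ℕ) ≠ j := fun h => hj ⟨i, Fin.ext (by simpa using h)⟩
      simp [Isd, this]
    symm
    refine Fintype.sum_of_injective (Fin.castLE hsd) (Fin.castLE_injective hsd) _ _ ?_ ?_
    · intro j hj; rw [h3 j hj]; norm_num
    · intro i; rw [h2]
  simp [h1]

end Final

/-- For independent random `s × d` matrices `C₁, …, C_M`, each with i.i.d.
standard Gaussian entries, and `(√d − 1)² > s`, the expected condition number of
`(C₁+I_{s×d} | … | C_M+I_{s×d})` is at most `(√(Md) + √s + √M)/(√(Md) − √s − √M)`. -/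
theorem expected_cond_blockRow_gaussian_plus_Isd {s d : ℕ} (hs : 0 < s) (hd : 0 < d)
    (h : (Real.sqrt d - 1) ^ 2 > (s : ℝ)) {M : ℕ} (hM : 0 < M)
    {Ω : Type*} [MeasureSpace Ω] [IsProbabilityMeasure (ℙ : Measure Ω)]
    (C : Ω → Fin M → Fin s → Fin d → ℝ) (hCmeas : Measurable C)
    (hClaw : Measure.map (fun ω (q : Fin M × Fin s × Fin d) => C ω q.1 q.2.1 q.2.2) ℙ =
      Measure.pi fun _ : Fin M × Fin s × Fin d => gaussianReal 0 1) :
    ∫ ω, condNum (blockRow M fun m => Matrix.of (C ω m) + Isd s d) ∂ℙ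
      ≤ (Real.sqrt ((M : ℝ) * d) + Real.sqrt s + Real.sqrt M) /
        (Real.sqrt ((M : ℝ) * d) - Real.sqrt s - Real.sqrt M) := by
  have hne : Nonempty (Fin s) := ⟨⟨0, hs⟩⟩
  have hs1 : (1:ℝ) ≤ s := by exact_mod_cast hs
  have hd1 : (1:ℝ) ≤ d := by exact_mod_cast hd
  have hM1 : (1:ℝ) ≤ M := by exact_mod_cast hM
  have hsM : 1 ≤ √(M:ℝ) := by rwa [Real.one_le_sqrt]
  have hss : 1 ≤ √(s:ℝ) := by rwa [Real.one_le_sqrt]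
  have hsd1 : 1 ≤ √(d:ℝ) := by rwa [Real.one_le_sqrt]
  have hsq : √(s:ℝ) < √(d:ℝ) - 1 := by
    rw [Real.sqrt_lt' (by
      by_contra hcon
      have : √(d:ℝ) - 1 = 0 := by linarith
      rw [this] at h; norm_num at h; linarith)]
    exact h
  have hsd : s + 4 ≤ d := by
    have h1 : (s:ℝ) + 3 < d := by
      have e1 := Real.sq_sqrt (show (0:ℝ) ≤ s by linarith)
      have e2 := Real.sq_sqrt (show (0:ℝ) ≤ d by linarith)
      nlinarith
    have : s + 3 < d := by exact_mod_cast h1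
    omega
  have hMd : √((M:ℝ) * d) = √(M:ℝ) * √(d:ℝ) := Real.sqrt_mul (by linarith) _
  have hmain : √(M:ℝ) < √((M:ℝ) * d) - √(s:ℝ) := by
    rw [hMd]; nlinarith
  set B : Fin s × (Fin M × Fin d) → ℝ := fun p => Isd s d p.1 p.2.2 with hB
  have hcκ : (Fintype.card (Fin M × Fin d) : ℝ) = M * d := by simp
  have hcσ : (Fintype.card (Fin s) : ℝ) = s := by simp
  obtain ⟨hpos, hbound⟩ := gaussian_shift_cond B hsM
    (fun u hu => (l2_rowc_Isd (by omega) hu).le)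
    (by simp only [Fintype.card_fin, Fintype.card_prod]; nlinarith) (by rw [hcκ, hcσ]; exact hmain)
  rw [hcκ, hcσ] at hbound
  -- the entries of `C`, reindexed by (row, (block, column))
  set G : Ω → (Fin s × (Fin M × Fin d) → ℝ) := fun ω p => C ω p.2.1 p.1 p.2.2 with hG
  have hGm : Measurable G := by
    refine measurable_pi_lambda _ fun p => ?_
    exact measurable_pi_iff.1 (measurable_pi_iff.1 (measurable_pi_iff.1 hCmeas p.2.1) p.1) p.2.2
  have hGlaw : Measure.map G ℙ = gm (Fin s × (Fin M × Fin d)) := by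
    let e : (Fin M × Fin s × Fin d) ≃ (Fin s × (Fin M × Fin d)) :=
      ⟨fun q => (q.2.1, (q.1, q.2.2)), fun p => (p.2.1, (p.1, p.2.2)), fun _ => rfl, fun _ => rfl⟩
    have hmp := measurePreserving_piCongrLeft
      (fun _ : Fin s × (Fin M × Fin d) => gaussianReal 0 1) e
    have h1 := hmp.map_eq
    rw [← hClaw, Measure.map_map hmp.measurable (by
      refine measurable_pi_lambda _ fun q => ?_
      exact measurable_pi_iff.1 (measurable_pi_iff.1 (measurable_pi_iff.1 hCmeas q.1) q.2.1) q.2.2)] at h1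
    exact h1
  have hmp : MeasurePreserving G ℙ (gm (Fin s × (Fin M × Fin d))) := ⟨hGm, hGlaw⟩
  have hrm : Measurable fun X : Fin s × (Fin M × Fin d) → ℝ => smax (X + B) / smin (X + B) :=
    (continuous_smax.comp (by fun_prop : Continuous fun X => X + B)).measurable.div
      (continuous_smin.comp (by fun_prop : Continuous fun X => X + B)).measurable
  have hr0 : ∀ X : Fin s × (Fin M × Fin d) → ℝ, 0 ≤ smax (X + B) / smin (X + B) :=
    fun X => div_nonneg (smax_nonneg _) (smin_nonneg _)
  have hri : Integrable (fun X => smax (X + B) / smin (X + B)) (gm (Fin s × (Fin M × Fin d))) := by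
    refine ⟨hrm.aestronglyMeasurable, ?_⟩
    rw [hasFiniteIntegral_iff_ofReal (Filter.Eventually.of_forall hr0)]
    exact hbound.trans_lt ENNReal.ofReal_lt_top
  have hrint : ∫ X, smax (X + B) / smin (X + B) ∂gm (Fin s × (Fin M × Fin d)) ≤
      (√((M : ℝ) * d) + √s + √M) / (√((M : ℝ) * d) - √s - √M) := by
    rw [integral_eq_lintegral_of_nonneg_ae (Filter.Eventually.of_forall hr0)
      hrm.aestronglyMeasurable]
    refine ENNReal.toReal_le_of_le_ofReal (div_nonneg (by positivity) (by linarith)) hbound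
  have hposG : ∀ᵐ ω, 0 < smin (G ω + B) := hmp.quasiMeasurePreserving.ae hpos
  calc ∫ ω, condNum (blockRow M fun m => Matrix.of (C ω m) + Isd s d) ∂ℙ
      ≤ ∫ ω, smax (G ω + B) / smin (G ω + B) ∂ℙ := by
        refine integral_mono_of_nonneg (Filter.Eventually.of_forall fun ω => condNum_nonneg _)
          (hmp.integrable_comp_of_integrable hri) ?_
        filter_upwards [hposG] with ω hω
        exact condNum_le (blockRow M fun m => Matrix.of (C ω m) + Isd s d) hω
    _ = ∫ X, smax (X + B) / smin (X + B) ∂gm (Fin s × (Fin M × Fin d)) := by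
        rw [← hGlaw, integral_map hGm.aemeasurable hrm.aestronglyMeasurable]
    _ ≤ _ := hrint
end

section
/- Let Y be a random variable following the chi-squared distribution with d degrees of freedom and let δ > 0. Then P(Y − d ≥ δ) ≤ exp(−min{δ/4, δ²/(16d)}). -/
/-!
The bound is Chernoff's, carried out by a change of rate rather than by moment generating
functions: on `[c, ∞)` the Gamma density of rate `r` is at most
`(r / s) ^ a * exp (-(r - s) * c)` times the Gamma density of a smaller rate `s`, and the latter
integrates to one (`gammaMeasure_Ici_le`). With `u = δ / d`, `c = d + δ`, `a = d / 2`, `r = 1 / 2`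
and the optimal `s = 1 / (2 * (1 + u))` this gives the tail bound `((1 + u) * exp (-u)) ^ (d / 2)`,
and the claim reduces to `1 + u ≤ exp (u - 2 * min (u / 4) (u ^ 2 / 16))`, which follows from
`1 + v + v ^ 2 / 2 ≤ exp v` for `v ≥ 0` (`one_add_le_exp_sub_min`).
-/

open Matrix MeasureTheory ProbabilityTheory Real

/-- Chernoff bound for the Gamma distribution; the parameter `s` is the rate of the tilted law. -/
lemma gammaMeasure_Ici_le {a r s c : ℝ} (ha : 0 < a) (hs : 0 < s) (hsr : s ≤ r) (hc : 0 ≤ c) :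
    gammaMeasure a r (Set.Ici c) ≤ ENNReal.ofReal ((r / s) ^ a * exp (-(r - s) * c)) := by
  have hr : 0 < r := hs.trans_le hsr
  have hpos : 0 ≤ (r / s) ^ a * exp (-(r - s) * c) := by positivity
  rw [gammaMeasure, withDensity_apply _ measurableSet_Ici]
  calc ∫⁻ x in Set.Ici c, gammaPDF a r x
      ≤ ∫⁻ x in Set.Ici c,
          ENNReal.ofReal ((r / s) ^ a * exp (-(r - s) * c)) * gammaPDF a s x := by
        refine setLIntegral_mono' measurableSet_Ici fun x hx => ?_
        have hcx : c ≤ x := hx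
        have hx0 : 0 ≤ x := hc.trans hcx
        rw [gammaPDF_of_nonneg hx0, gammaPDF_of_nonneg hx0, ← ENNReal.ofReal_mul hpos]
        apply ENNReal.ofReal_le_ofReal
        have hG : 0 < Gamma a := Gamma_pos_of_pos ha
        have hxa : 0 ≤ x ^ (a - 1) := rpow_nonneg hx0 _
        have hsa : 0 < s ^ a := rpow_pos_of_pos hs a
        have hexp : exp (-(r * x)) ≤ exp (-(r - s) * c) * exp (-(s * x)) := by
          rw [← exp_add]
          apply exp_le_exp.mpr
          nlinarith [mul_nonneg (sub_nonneg.mpr hsr) (sub_nonneg.mpr hcx)]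
        calc r ^ a / Gamma a * x ^ (a - 1) * exp (-(r * x))
            ≤ r ^ a / Gamma a * x ^ (a - 1) * (exp (-(r - s) * c) * exp (-(s * x))) := by
              gcongr
          _ = _ := by
              rw [div_rpow hr.le hs.le]
              field_simp
    _ ≤ ∫⁻ x, ENNReal.ofReal ((r / s) ^ a * exp (-(r - s) * c)) * gammaPDF a s x :=
        setLIntegral_le_lintegral _ _
    _ = ENNReal.ofReal ((r / s) ^ a * exp (-(r - s) * c)) := by
        rw [lintegral_const_mul' _ _ ENNReal.ofReal_ne_top, lintegral_gammaPDF_eq_one ha hs,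
          mul_one]

lemma one_add_le_exp_sub_min {u : ℝ} (hu : 0 ≤ u) :
    1 + u ≤ exp (u - 2 * min (u / 4) (u ^ 2 / 16)) := by
  rcases le_total u 4 with h | h
  · rw [min_eq_right (by nlinarith)]
    have hv := quadratic_le_exp_of_nonneg (x := u - 2 * (u ^ 2 / 16)) (by nlinarith)
    -- With `v = u * (1 - u / 8)`, the factor `(1 - u / 8) ^ 2` is at least `1 / 4`.
    have hq : 1 / 4 ≤ (1 - u / 8) ^ 2 := by nlinarith
    nlinarith [mul_le_mul_of_nonneg_left hq (sq_nonneg u)]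
  · rw [min_eq_left (by nlinarith)]
    have hv := quadratic_le_exp_of_nonneg (x := u - 2 * (u / 4)) (by linarith)
    nlinarith


/-- If `Y` follows the chi-squared distribution with `d` degrees of
freedom and `δ > 0`, then `P(Y − d ≥ δ) ≤ exp(−min{δ/4, δ²/(16d)})`. -/
theorem chiSq_upper_tail_bound {d : ℕ} (hd : 0 < d)
    {Ω : Type*} [MeasureSpace Ω] [IsProbabilityMeasure (ℙ : Measure Ω)]
    (Y : Ω → ℝ) (hYmeas : Measurable Y)
    (hYlaw : Measure.map Y ℙ = chiSqMeasure d) {δ : ℝ} (hδ : 0 < δ) :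
    (ℙ {ω | δ ≤ Y ω - d}).toReal
      ≤ Real.exp (-(min (δ / 4) (δ ^ 2 / (16 * d)))) := by
  have hd0 : (0 : ℝ) < d := Nat.cast_pos.mpr hd
  have hset : {ω | δ ≤ Y ω - d} = Y ⁻¹' Set.Ici ((d : ℝ) + δ) := by
    ext ω
    simp only [Set.mem_ofPred_eq, Set.mem_preimage, Set.mem_Ici]
    constructor <;> intro h <;> linarith
  rw [hset, ← Measure.map_apply hYmeas measurableSet_Ici, hYlaw, chiSqMeasure]
  obtain ⟨u, hu, rfl⟩ : ∃ u : ℝ, 0 < u ∧ d * u = δ :=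
    ⟨δ / d, div_pos hδ hd0, by field_simp⟩
  have hs : 0 < 1 / (2 * (1 + u)) := by positivity
  have hsr : 1 / (2 * (1 + u)) ≤ 1 / 2 := by
    apply one_div_le_one_div_of_le <;> linarith
  refine ENNReal.toReal_le_of_le_ofReal (exp_pos _).le
    ((gammaMeasure_Ici_le (half_pos hd0) hs hsr (by positivity)).trans
      (ENNReal.ofReal_le_ofReal ?_))
  have hratio : (1 / 2 : ℝ) / (1 / (2 * (1 + u))) = 1 + u := by field_simp
  have hexponent : -(1 / 2 - 1 / (2 * (1 + u))) * ((d : ℝ) + d * u) = -(d * u / 2) := by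
    field_simp
    ring
  have hmin : min (d * u / 4) ((d * u) ^ 2 / (16 * d)) = d * min (u / 4) (u ^ 2 / 16) := by
    rw [mul_min_of_nonneg _ _ hd0.le]
    congr 1 <;> field_simp
  rw [hratio, hexponent, hmin]
  calc (1 + u) ^ ((d : ℝ) / 2) * exp (-(d * u / 2))
      ≤ exp (u - 2 * min (u / 4) (u ^ 2 / 16)) ^ ((d : ℝ) / 2) * exp (-(d * u / 2)) := by
        gcongr
        exact one_add_le_exp_sub_min hu.le
    _ = exp (-(d * min (u / 4) (u ^ 2 / 16))) := by
        rw [← exp_mul, ← exp_add]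
        congr 1
        ring
end

section
/- Let m ≤ n ≤ s be positive integers, let P be a real m×n matrix of full rank m and Q a real n×s matrix of full rank n. Then cond(P·Q) ≥ cond(P)/cond(Q). -/
/-!
The squared singular values of `X` are the eigenvalues of `X * Xᵀ`, so expanding `x` in an
orthonormal eigenbasis gives `σ_min(X)² ‖x‖² ≤ ‖Xᵀ x‖² ≤ σ_max(X)² ‖x‖²`, with both bounds attained
at unit eigenvectors. Since `(P * Q)ᵀ x = Qᵀ (Pᵀ x)`, evaluating at the extremal vectors of `P`
yields `σ_max(P * Q) ≥ σ_min(Q) σ_max(P)` and `σ_min(P * Q) ≤ σ_max(Q) σ_min(P)`. The quotient of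
these two inequalities is the claim; full rank makes all the smallest singular values involved
positive, including `σ_min(P * Q) ≥ σ_min(P) σ_min(Q)`.
-/

open Matrix MeasureTheory ProbabilityTheory Real

lemma transpose_mulVec_dotProduct_self {m n : Type*} [Fintype m] [Fintype n]
    (X : Matrix m n ℝ) (x : m → ℝ) :
    (Xᵀ *ᵥ x) ⬝ᵥ (Xᵀ *ᵥ x) = x ⬝ᵥ ((X * Xᴴ) *ᵥ x) := by
  rw [Matrix.conjTranspose_eq_transpose_of_trivial, ← Matrix.mulVec_mulVec,
    Matrix.dotProduct_mulVec x, Matrix.mulVec_transpose]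

lemma transpose_mul_mulVec {m n s : Type*} [Fintype m] [Fintype n]
    (P : Matrix m n ℝ) (Q : Matrix n s ℝ) (x : m → ℝ) :
    (P * Q)ᵀ *ᵥ x = Qᵀ *ᵥ (Pᵀ *ᵥ x) := by
  rw [Matrix.transpose_mul, Matrix.mulVec_mulVec]

section Rayleigh

variable {m n : Type*} [Fintype m] [DecidableEq m] [Fintype n]

lemma sVals_nonneg (X : Matrix m n ℝ) (i : m) : 0 ≤ sVals X i := Real.sqrt_nonneg _

lemma sVals_sq (X : Matrix m n ℝ) (i : m) :
    sVals X i ^ 2 = (Matrix.isHermitian_mul_conjTranspose_self X).eigenvalues i :=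
  Real.sq_sqrt ((Matrix.posSemidef_self_mul_conjTranspose X).eigenvalues_nonneg i)

lemma sMin_le (X : Matrix m n ℝ) (i : m) : sMin X ≤ sVals X i :=
  csInf_le (Set.finite_range _).bddBelow ⟨i, rfl⟩

lemma le_sMax (X : Matrix m n ℝ) (i : m) : sVals X i ≤ sMax X :=
  le_csSup (Set.finite_range _).bddAbove ⟨i, rfl⟩

lemma exists_sMin [Nonempty m] (X : Matrix m n ℝ) : ∃ i, sVals X i = sMin X :=
  (Set.range_nonempty _).csInf_mem (Set.finite_range _)

lemma exists_sMax [Nonempty m] (X : Matrix m n ℝ) : ∃ i, sVals X i = sMax X :=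
  (Set.range_nonempty _).csSup_mem (Set.finite_range _)

/-- Expansion of `‖x‖²` and `‖Xᵀ x‖²` in the coordinates `c` of `x` with respect to an orthonormal
eigenbasis of `X * Xᵀ`. -/
lemma exists_coords (X : Matrix m n ℝ) (x : m → ℝ) :
    ∃ c : m → ℝ, x ⬝ᵥ x = ∑ i, c i ^ 2 ∧
      (Xᵀ *ᵥ x) ⬝ᵥ (Xᵀ *ᵥ x) = ∑ i, sVals X i ^ 2 * c i ^ 2 := by
  have hA := Matrix.isHermitian_mul_conjTranspose_self X
  have key : ∀ y : m → ℝ, x ⬝ᵥ y =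
      ∑ i, ((hA.eigenvectorBasis i).ofLp ⬝ᵥ x) * ((hA.eigenvectorBasis i).ofLp ⬝ᵥ y) := by
    intro y
    have h := hA.eigenvectorBasis.sum_inner_mul_inner (WithLp.toLp 2 x) (WithLp.toLp 2 y)
    simp only [EuclideanSpace.inner_eq_star_dotProduct, star_trivial] at h
    rw [dotProduct_comm x y, ← h]
    refine Finset.sum_congr rfl fun i _ => ?_
    rw [dotProduct_comm y]
  refine ⟨fun i => (hA.eigenvectorBasis i).ofLp ⬝ᵥ x, ?_, ?_⟩
  · simp only [key x, sq]
  · rw [transpose_mulVec_dotProduct_self, key]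
    refine Finset.sum_congr rfl fun i _ => ?_
    have ht : (X * Xᴴ)ᵀ = X * Xᴴ := by
      rw [← Matrix.conjTranspose_eq_transpose_of_trivial]; exact hA
    rw [Matrix.dotProduct_mulVec, ← Matrix.mulVec_transpose, ht, hA.mulVec_eigenvectorBasis,
      smul_dotProduct, sVals_sq, smul_eq_mul]
    ring

/-- Each singular value is attained as `‖Xᵀ x‖` at a unit vector. -/
lemma exists_unit_sVals (X : Matrix m n ℝ) (i : m) :
    ∃ x : m → ℝ, x ⬝ᵥ x = 1 ∧ (Xᵀ *ᵥ x) ⬝ᵥ (Xᵀ *ᵥ x) = sVals X i ^ 2 := by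
  have hA := Matrix.isHermitian_mul_conjTranspose_self X
  have h1 : (hA.eigenvectorBasis i).ofLp ⬝ᵥ (hA.eigenvectorBasis i).ofLp = 1 := by
    have h := real_inner_self_eq_norm_sq (hA.eigenvectorBasis i)
    rw [hA.eigenvectorBasis.orthonormal.1 i] at h
    simpa only [EuclideanSpace.inner_eq_star_dotProduct, star_trivial, one_pow] using h
  refine ⟨(hA.eigenvectorBasis i).ofLp, h1, ?_⟩
  rw [transpose_mulVec_dotProduct_self, hA.mulVec_eigenvectorBasis, dotProduct_smul, h1, sVals_sq]
  simp

lemma sMin_nonneg (X : Matrix m n ℝ) : 0 ≤ sMin X :=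
  Real.sInf_nonneg (by rintro _ ⟨i, rfl⟩; exact sVals_nonneg X i)

lemma sMax_nonneg (X : Matrix m n ℝ) : 0 ≤ sMax X :=
  Real.sSup_nonneg (by rintro _ ⟨i, rfl⟩; exact sVals_nonneg X i)

lemma sMin_sq_mul_le (X : Matrix m n ℝ) (x : m → ℝ) :
    sMin X ^ 2 * (x ⬝ᵥ x) ≤ (Xᵀ *ᵥ x) ⬝ᵥ (Xᵀ *ᵥ x) := by
  obtain ⟨c, h1, h2⟩ := exists_coords X x
  rw [h1, h2, Finset.mul_sum]
  refine Finset.sum_le_sum fun i _ => ?_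
  have := sMin_nonneg X
  have := sMin_le X i
  gcongr

lemma le_sMax_sq_mul (X : Matrix m n ℝ) (x : m → ℝ) :
    (Xᵀ *ᵥ x) ⬝ᵥ (Xᵀ *ᵥ x) ≤ sMax X ^ 2 * (x ⬝ᵥ x) := by
  obtain ⟨c, h1, h2⟩ := exists_coords X x
  rw [h1, h2, Finset.mul_sum]
  refine Finset.sum_le_sum fun i _ => ?_
  have := sVals_nonneg X i
  have := le_sMax X i
  gcongr

lemma sMin_pos [Nonempty m] (X : Matrix m n ℝ) (hX : X.rank = Fintype.card m) : 0 < sMin X := by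
  obtain ⟨i, hi⟩ := exists_sMin X
  rw [← hi]
  have hA := Matrix.isHermitian_mul_conjTranspose_self X
  have hr := hA.rank_eq_card_non_zero_eigs
  rw [Matrix.rank_self_mul_conjTranspose, hX] at hr
  have hne : hA.eigenvalues i ≠ 0 := by
    intro h0
    exact (Fintype.card_subtype_lt (p := fun j => hA.eigenvalues j ≠ 0) (x := i)
      (by simpa using h0)).ne hr.symm
  refine (sVals_nonneg X i).lt_of_ne' fun h => hne ?_
  rw [← sVals_sq, h]
  simp

end Rayleigh

section Product

variable {m n s : Type*} [Fintype m] [DecidableEq m] [Nonempty m] [Fintype n] [DecidableEq n]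
  [Fintype s]

lemma sMin_mul_sMax_le (P : Matrix m n ℝ) (Q : Matrix n s ℝ) :
    sMin Q * sMax P ≤ sMax (P * Q) := by
  obtain ⟨i, hi⟩ := exists_sMax P
  obtain ⟨x, hx, hPx⟩ := exists_unit_sVals P i
  have h1 := le_sMax_sq_mul (P * Q) x
  have h2 := sMin_sq_mul_le Q (Pᵀ *ᵥ x)
  rw [transpose_mul_mulVec, hx, mul_one] at h1
  rw [hPx, hi, ← mul_pow] at h2
  exact le_of_sq_le_sq (h2.trans h1) (sMax_nonneg _)

lemma sMin_mul_le (P : Matrix m n ℝ) (Q : Matrix n s ℝ) :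
    sMin (P * Q) ≤ sMax Q * sMin P := by
  obtain ⟨i, hi⟩ := exists_sMin P
  obtain ⟨x, hx, hPx⟩ := exists_unit_sVals P i
  have h1 := sMin_sq_mul_le (P * Q) x
  have h2 := le_sMax_sq_mul Q (Pᵀ *ᵥ x)
  rw [transpose_mul_mulVec, hx, mul_one] at h1
  rw [hPx, hi, ← mul_pow] at h2
  exact le_of_sq_le_sq (h1.trans h2) (mul_nonneg (sMax_nonneg _) (sMin_nonneg _))

lemma sMin_mul_sMin_le (P : Matrix m n ℝ) (Q : Matrix n s ℝ) :
    sMin Q * sMin P ≤ sMin (P * Q) := by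
  obtain ⟨i, hi⟩ := exists_sMin (P * Q)
  obtain ⟨x, hx, hPQx⟩ := exists_unit_sVals (P * Q) i
  have h1 := sMin_sq_mul_le P x
  have h2 := sMin_sq_mul_le Q (Pᵀ *ᵥ x)
  rw [hx, mul_one] at h1
  rw [← transpose_mul_mulVec, hPQx, hi] at h2
  refine le_of_sq_le_sq ?_ (sMin_nonneg _)
  rw [mul_pow]
  exact (mul_le_mul_of_nonneg_left h1 (sq_nonneg _)).trans h2

end Product

/-- For `P` an `m × n` matrix of full rank `m` and `Q` an `n × s` matrix
of full rank `n`, with `m ≤ n ≤ s`, one has `cond(P·Q) ≥ cond(P)/cond(Q)`. -/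
theorem cond_mul_ge_cond_div_cond {m n s : ℕ} (hm : 0 < m) (hmn : m ≤ n) (hns : n ≤ s)
    (P : Matrix (Fin m) (Fin n) ℝ) (hP : P.rank = m)
    (Q : Matrix (Fin n) (Fin s) ℝ) (hQ : Q.rank = n) :
    condNum (P * Q) ≥ condNum P / condNum Q := by
  have : Nonempty (Fin m) := ⟨⟨0, hm⟩⟩
  have : Nonempty (Fin n) := ⟨⟨0, hm.trans_le hmn⟩⟩
  have hP0 : 0 < sMin P := sMin_pos P (by simpa using hP)
  have hQ0 : 0 < sMin Q := sMin_pos Q (by simpa using hQ)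
  have hPQ0 : 0 < sMin (P * Q) := (mul_pos hQ0 hP0).trans_le (sMin_mul_sMin_le P Q)
  have heq : condNum P / condNum Q = (sMin Q * sMax P) / (sMax Q * sMin P) := by
    unfold condNum
    rw [div_div_div_eq, mul_comm (sMax P), mul_comm (sMin P)]
  rw [heq, ge_iff_le]
  exact div_le_div₀ (sMax_nonneg _) (sMin_mul_sMax_le P Q) hPQ0 (sMin_mul_le P Q)
end
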